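/- arXiv:1707.01151 — 8 statements merged into one kernel-verified Lean document; each statement's English description precedes it below -/
import Mathlib

section
/- Let (P, λ) ∈ P_d × (0,1) be such that T_{P,λ} has no singular connections. Then there exists ε > 0 such that the number of itineraries satisfies lim_{n→∞} (1/n) · log #I_n^ε(P,λ) = 0, where I_n^ε(P,λ) is formed with (P,λ) as the base point of the neighbourhood Δ_ε(P,λ). -/
open MeasureTheory Set Filter Metric

noncomputable section

/-- Planar cross product of two complex numbers viewed as vectors of `ℝ²`. -/
def cross (z w : ℂ) : ℝ := z.re * w.im - z.im * w.re

/-- `v` is the tuple of vertices of a convex `d`-gon, cyclically ordered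
(counterclockwise): every vertex lies strictly to the left of every directed edge. -/
def IsConvexPolygon {d : ℕ} [NeZero d] (v : Fin d → ℂ) : Prop :=
  ∀ i j : Fin d, j ≠ i → j ≠ i + 1 → 0 < cross (v (i + 1) - v i) (v j - v i)

/-- The polygon `P`, as a subset of the plane. -/
def polygonSet {d : ℕ} (v : Fin d → ℂ) : Set ℂ := convexHull ℝ (Set.range v)

/-- The open cone `A k`: points `z` outside `P` whose supporting line (oriented from `z`
towards the polygon, with the interior of `P` on its left) meets `P` exactly at the
vertex `v k`. -/
def cone {d : ℕ} (v : Fin d → ℂ) (k : Fin d) : Set ℂ :=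
  {z | ∀ j : Fin d, j ≠ k → 0 < cross (v k - z) (v j - z)}

/-- The singular set `S_P`: the points of `X = ℂ \ P` lying in no cone, i.e. whose
supporting line contains an edge of the polygon. -/
def singSet {d : ℕ} (v : Fin d → ℂ) : Set ℂ :=
  {z | z ∉ polygonSet v ∧ ∀ k : Fin d, z ∉ cone v k}

/-- The outer billiard map of the polygon with vertices `v` with contraction `lam`:
on the cone `A k` it is `z ↦ -lam • z + (1+lam) • v k` (extended arbitrarily outside
the union of the cones, which is its actual domain `X \ S_P`). -/
def billiardMap {d : ℕ} (v : Fin d → ℂ) (lam : ℝ) (z : ℂ) : ℂ :=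
  haveI := Classical.propDecidable (∃ k : Fin d, z ∈ cone v k)
  if h : ∃ k : Fin d, z ∈ cone v k then -(lam : ℂ) * z + (1 + (lam : ℂ)) * v h.choose
  else z

/-- A point is non-singular if its whole forward orbit stays in the union of the open
cones, i.e. never meets the singular set. -/
def NonSingular {d : ℕ} (v : Fin d → ℂ) (lam : ℝ) (z : ℂ) : Prop :=
  ∀ n : ℕ, (billiardMap v lam)^[n] z ∈ ⋃ k : Fin d, cone v k

/-- The ω-limit set of the forward orbit of `z` under `f`. -/
def omegaSet (f : ℂ → ℂ) (z : ℂ) : Set ℂ :=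
  ⋂ m : ℕ, closure ((fun n : ℕ => f^[n] z) '' {n | m ≤ n})

/-- The outer billiard map with contraction is asymptotically periodic: it has finitely
many periodic orbits (equivalently, periodic points) and the ω-limit set of every
non-singular point is a periodic orbit. -/
def AsymptoticallyPeriodic {d : ℕ} (v : Fin d → ℂ) (lam : ℝ) : Prop :=
  {z : ℂ | NonSingular v lam z ∧ ∃ p : ℕ, 1 ≤ p ∧ (billiardMap v lam)^[p] z = z}.Finite ∧
  ∀ z : ℂ, NonSingular v lam z → ∃ w : ℂ, NonSingular v lam w ∧
    (∃ p : ℕ, 1 ≤ p ∧ (billiardMap v lam)^[p] w = w) ∧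
    omegaSet (billiardMap v lam) z = Set.range fun n : ℕ => (billiardMap v lam)^[n] w

/-- The `ε`-neighbourhood `Δ_ε = B_ε(P') × (λ'-ε, λ'+ε)` of `(P', λ')`. -/
def Delta {d : ℕ} (v' : Fin d → ℂ) (l' ε : ℝ) : Set ((Fin d → ℂ) × ℝ) :=
  Metric.ball v' ε ×ˢ Set.Ioo (l' - ε) (l' + ε)

/-- `a_ε = λ' + ε`. -/
def aEps (l' ε : ℝ) : ℝ := l' + ε

/-- `b_ε = sup {‖P‖ : P ∈ B_ε(P')}` (sup-norm of the vertex tuple). -/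
def bEps {d : ℕ} (v' : Fin d → ℂ) (ε : ℝ) : ℝ :=
  sSup ((fun w : Fin d → ℂ => ‖w‖) '' Metric.ball v' ε)

/-- `r_ε = b_ε (1+a_ε)/(1-a_ε)²`. -/
def rEps {d : ℕ} (v' : Fin d → ℂ) (l' ε : ℝ) : ℝ :=
  bEps v' ε * (1 + aEps l' ε) / (1 - aEps l' ε) ^ 2

/-- `K_ε`: the closed disc of radius `r_ε` centred at the origin. -/
def Keps {d : ℕ} (v' : Fin d → ℂ) (l' ε : ℝ) : Set ℂ :=
  Metric.closedBall (0 : ℂ) (rEps v' l' ε)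

/-- `(i 0, …, i (n-1))` is an admissible itinerary of order `n` of `T_{w,lam}`, the
cones being restricted to `K_ε`: the corresponding intersection
`A_{i_0} ∩ T⁻¹(A_{i_1}) ∩ ⋯ ∩ T^{-(n-1)}(A_{i_{n-1}})` is non-empty. -/
def Admissible {d : ℕ} (v' : Fin d → ℂ) (l' ε : ℝ) (w : Fin d → ℂ) (lam : ℝ)
    {n : ℕ} (i : Fin n → Fin d) : Prop :=
  ∃ z : ℂ, ∀ j : Fin n, (billiardMap w lam)^[(j : ℕ)] z ∈ cone w (i j) ∩ Keps v' l' ε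

/-- `I_n^ε`: the itineraries of order `n` admissible for some `(P, λ) ∈ Δ_ε`. -/
def ItinSet {d : ℕ} (v' : Fin d → ℂ) (l' ε : ℝ) (n : ℕ) : Set (Fin n → Fin d) :=
  {i | ∃ q ∈ Delta v' l' ε, Admissible v' l' ε q.1 q.2 i}

/-- `H(P, λ, i) = (1+λ) ∑_{j=0}^{n-1} (-λ)^{n-j-1} v_{i_j}`. -/
def Hpt {d : ℕ} (w : Fin d → ℂ) (lam : ℝ) {n : ℕ} (i : Fin n → Fin d) : ℂ :=
  (1 + (lam : ℂ)) * ∑ j : Fin n, (-(lam : ℂ)) ^ (n - (j : ℕ) - 1) * w (i j)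

/-- The limit set `Λ_ε(P,λ) = ⋂_{m ≥ 1} closure (⋃_{n ≥ m} {H(P,λ,i) : i ∈ I_n^ε})`. -/
def LamSet {d : ℕ} (v' : Fin d → ℂ) (l' ε : ℝ) (w : Fin d → ℂ) (lam : ℝ) : Set ℂ :=
  ⋂ m : ℕ, ⋂ (_ : 1 ≤ m),
    closure {z : ℂ | ∃ n : ℕ, m ≤ n ∧ ∃ i ∈ ItinSet v' l' ε n, Hpt w lam i = z}

/-- `ω(P,λ)`: the union of the ω-limit sets of all non-singular points. -/
def omegaUnion {d : ℕ} (w : Fin d → ℂ) (lam : ℝ) : Set ℂ :=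
  ⋃ z : ℂ, ⋃ (_ : NonSingular w lam z), omegaSet (billiardMap w lam) z

/-- `T_{P,λ}` has a singular connection of some order `n ≥ 2`: there is an orbit segment
`x = x_1, …, x_n = T^{n-1}(x)` with `x_1, …, x_{n-1} ∉ S_P`, `x_n ∈ S_P`, and such that
the segment `[x_1, x_n]` contains a side of the polygon. -/
def HasSingularConnection {d : ℕ} [NeZero d] (v : Fin d → ℂ) (lam : ℝ) : Prop :=
  ∃ n : ℕ, 2 ≤ n ∧ ∃ x : ℂ,
    (∀ m : ℕ, m < n - 1 → (billiardMap v lam)^[m] x ∈ ⋃ k : Fin d, cone v k) ∧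
    (billiardMap v lam)^[n - 1] x ∈ singSet v ∧
    ∃ k : Fin d, segment ℝ (v k) (v (k + 1)) ⊆ segment ℝ x ((billiardMap v lam)^[n - 1] x)

namespace ItinAux

lemma real_aux (A A0 f : ℝ) (h1 : SignType.sign A = SignType.sign A0)
    (h2 : SignType.sign (A + f) ≠ - SignType.sign f)
    (h3 : SignType.sign (A0 + f) ≠ SignType.sign (A + f)) :
    |A + f| < |f| ∧ 0 ≤ (A + f) * f ∧ (|f| ≤ |A| ∨ |f| ≤ |A0|) := by
  rcases lt_trichotomy f 0 with hf | hf | hf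
  · have a1 : A + f ≤ 0 := by
      by_contra hc
      push Not at hc
      exact h2 (by rw [sign_pos hc, sign_neg hf]; rfl)
    have a2 : 0 < A := by
      by_contra hc
      push Not at hc
      have hA0 : A0 ≤ 0 := by
        by_contra h0
        push Not at h0
        rw [sign_pos h0, sign_eq_one_iff] at h1
        linarith
      exact h3 (by rw [sign_neg (by linarith), sign_neg (by linarith)])
    have a3 : 0 < A0 := by
      rw [sign_pos a2] at h1
      exact sign_eq_one_iff.1 h1.symm
    refine ⟨?_, by nlinarith, ?_⟩
    · rw [abs_of_nonpos a1, abs_of_neg hf]; linarith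
    · rw [abs_of_neg hf, abs_of_pos a2, abs_of_pos a3]
      by_contra hc
      push Not at hc
      exact h3 (by rw [sign_neg (by linarith), sign_neg (by linarith)])
  · subst hf
    simp only [add_zero] at h3
    exact absurd h1.symm h3
  · have a1 : 0 ≤ A + f := by
      by_contra hc
      push Not at hc
      exact h2 (by rw [sign_neg hc, sign_pos hf])
    have a2 : A < 0 := by
      by_contra hc
      push Not at hc
      have hA0 : 0 ≤ A0 := by
        by_contra h0
        push Not at h0
        rw [sign_neg h0, sign_eq_neg_one_iff] at h1
        linarith
      exact h3 (by rw [sign_pos (by linarith), sign_pos (by linarith)])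
    have a3 : A0 < 0 := by
      rw [sign_neg a2] at h1
      exact sign_eq_neg_one_iff.1 h1.symm
    refine ⟨?_, by nlinarith, ?_⟩
    · rw [abs_of_nonneg a1, abs_of_pos hf]; linarith
    · rw [abs_of_pos hf, abs_of_neg a2, abs_of_neg a3]
      by_contra hc
      push Not at hc
      exact h3 (by rw [sign_pos (by linarith), sign_pos (by linarith)])

lemma abs_le_of_sign_ne (u w : ℝ) (h : SignType.sign w ≠ SignType.sign u) : |u| ≤ |u - w| := by
  rcases lt_trichotomy u 0 with hu | hu | hu
  · have : 0 ≤ w := by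
      by_contra hc
      push Not at hc
      exact h (by rw [sign_neg hc, sign_neg hu])
    rw [abs_of_neg hu, abs_of_neg (by linarith)]; linarith
  · simp [hu]
  · have : w ≤ 0 := by
      by_contra hc
      push Not at hc
      exact h (by rw [sign_pos hc, sign_pos hu])
    rw [abs_of_pos hu, abs_of_pos (by linarith)]; linarith

lemma abs_sub_lt_aux (u w f : ℝ) (hu : |u| < |f|) (hw : |w| < |f|) (hu' : 0 ≤ u * f)
    (hw' : 0 ≤ w * f) : |u - w| < |f| := by
  rcases lt_trichotomy f 0 with hf | hf | hf
  · have h1 : u ≤ 0 := by by_contra hc; push Not at hc; nlinarith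
    have h2 : w ≤ 0 := by by_contra hc; push Not at hc; nlinarith
    rw [abs_of_neg hf] at *
    rw [abs_of_nonpos h1] at hu
    rw [abs_of_nonpos h2] at hw
    rw [abs_lt]; constructor <;> linarith
  · subst hf
    have := abs_nonneg u
    simp at hu
    linarith
  · have h1 : 0 ≤ u := by by_contra hc; push Not at hc; nlinarith
    have h2 : 0 ≤ w := by by_contra hc; push Not at hc; nlinarith
    rw [abs_of_pos hf] at *
    rw [abs_of_nonneg h1] at hu
    rw [abs_of_nonneg h2] at hw
    rw [abs_lt]; constructor <;> linarith

section abstract_part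

variable {Z G : Type}

/-- Sign vector at time `t`. -/
def Wd (x : Z → ℕ → G → ℝ) (z : Z) (t : ℕ) : G → SignType := fun a => SignType.sign (x z t a)

/-- Coordinate `a` branches at time `t` after the prefix of `z`. -/
def Br (x : Z → ℕ → G → ℝ) (a : G) (t : ℕ) (z : Z) : Prop :=
  ∃ y, (∀ s < t, Wd x y s = Wd x z s) ∧ SignType.sign (x y t a) ≠ SignType.sign (x z t a)

/-- Displacement accumulated between times `t` and `t+m`. -/
def Fd (x : Z → ℕ → G → ℝ) (l : ℝ) (z : Z) (t m : ℕ) (a : G) : ℝ :=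
  x z (t + m) a - (-l) ^ m * x z t a

/-- `t` is the last branching time before `t+m`, at distance at most `N`. -/
def IsPrev (x : Z → ℕ → G → ℝ) (N : ℕ) (a : G) (t m : ℕ) (z : Z) : Prop :=
  1 ≤ m ∧ m ≤ N ∧ Br x a t z ∧ ∀ t', t < t' → t' < t + m → ¬ Br x a t' z

/-- Branching time without a branching time in the preceding window. -/
def Fresh (x : Z → ℕ → G → ℝ) (N : ℕ) (a : G) (s : ℕ) (z : Z) : Prop :=
  Br x a s z ∧ ∀ t < s, s ≤ t + N → ¬ Br x a t z

/-- Exceptional event with data `t`, `m`. -/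
def ExcAt (x : Z → ℕ → G → ℝ) (l : ℝ) (N : ℕ) (a : G) (t m : ℕ) (z : Z) : Prop :=
  Br x a (t + m) z ∧ IsPrev x N a t m z ∧
    SignType.sign (x z (t + m) a) ≠ - SignType.sign (Fd x l z t m a)

def Exc (x : Z → ℕ → G → ℝ) (l : ℝ) (N : ℕ) (a : G) (s : ℕ) (z : Z) : Prop :=
  ∃ t m, s = t + m ∧ ExcAt x l N a t m z

open Classical in
def code (x : Z → ℕ → G → ℝ) (l : ℝ) (N : ℕ) (z : Z) (a : G) (s : ℕ) : Option SignType :=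
  if Fresh x N a s z ∨ Exc x l N a s z then some (SignType.sign (x z s a)) else none

variable {x : Z → ℕ → G → ℝ} {l : ℝ} {n : ℕ}

lemma Br_congr {a : G} {t : ℕ} {z z' : Z} (h : ∀ s < t, Wd x z s = Wd x z' s)
    (hb : Br x a t z) : Br x a t z' := by
  obtain ⟨y, hy, hne⟩ := hb
  by_cases hc : SignType.sign (x z t a) = SignType.sign (x z' t a)
  · exact ⟨y, fun s hs => (hy s hs).trans (h s hs), by rwa [← hc]⟩
  · exact ⟨z, h, hc⟩

/-- The recurrence: the affine part of the step depends only on the current letter. -/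
def Rec (x : Z → ℕ → G → ℝ) (l : ℝ) (n : ℕ) : Prop :=
  ∀ z z' t t', t < n → t' < n → Wd x z t = Wd x z' t' →
    ∀ a, x z (t + 1) a + l * x z t a = x z' (t' + 1) a + l * x z' t' a

lemma Fd_congr (hrec : Rec x l n) {z z' : Z} {t t' : ℕ} (a : G) (m : ℕ) (h1 : t + m ≤ n)
    (h2 : t' + m ≤ n) (h : ∀ i < m, Wd x z (t + i) = Wd x z' (t' + i)) :
    Fd x l z t m a = Fd x l z' t' m a := by
  induction m with
  | zero => simp [Fd]
  | succ m ih =>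
    have e := ih (by omega) (by omega) (fun i hi => h i (by omega))
    have r := hrec z z' (t + m) (t' + m) (by omega) (by omega) (h m (by omega)) a
    simp only [Fd, pow_succ] at *
    rw [← add_assoc, ← add_assoc]
    linear_combination r - l * e

lemma decode (hrec : Rec x l n) {N : ℕ} {z z' : Z}
    (h : ∀ a, ∀ s < n, code x l N z a s = code x l N z' a s) :
    ∀ s < n, Wd x z s = Wd x z' s := by
  intro s
  induction s using Nat.strong_induction_on with
  | _ s ih =>
  intro hs
  have hp : ∀ i < s, Wd x z i = Wd x z' i := fun i hi => ih i hi (by omega)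
  funext a
  change SignType.sign (x z s a) = SignType.sign (x z' s a)
  by_contra hne
  have hb' : Br x a s z' := ⟨z, hp, hne⟩
  have hb : Br x a s z := Br_congr (fun i hi => (hp i hi).symm) hb'
  have hc := h a s hs
  unfold code at hc
  split_ifs at hc with c1 c2 c2
  · exact hne (Option.some.inj hc)
  · rw [not_or] at c1 c2
    have hnf : ∃ t < s, s ≤ t + N ∧ Br x a t z := by
      by_contra hcon
      push Not at hcon
      exact c1.1 ⟨hb, hcon⟩
    obtain ⟨t0, ht0, ht0N, hbt0⟩ := hnf
    classical
    have hex : ∃ k, k < s ∧ Br x a (s - 1 - k) z := ⟨s - 1 - t0, by omega, by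
      rwa [show s - 1 - (s - 1 - t0) = t0 by omega]⟩
    let k := Nat.find hex
    obtain ⟨hk1, hk2⟩ := Nat.find_spec hex
    change k < s at hk1
    change Br x a (s - 1 - k) z at hk2
    have hkle : k ≤ s - 1 - t0 := Nat.find_min' hex ⟨by omega, by
      rwa [show s - 1 - (s - 1 - t0) = t0 by omega]⟩
    have hkmin : ∀ t', s - 1 - k < t' → t' < s → ¬ Br x a t' z := by
      intro t' h1 h2 hbr
      have : k ≤ s - 1 - t' := Nat.find_min' hex ⟨by omega, by
        rwa [show s - 1 - (s - 1 - t') = t' by omega]⟩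
      omega
    obtain ⟨t, m, hsm, hm1, hmN, hbt, hmin⟩ : ∃ t m, s = t + m ∧ 1 ≤ m ∧ m ≤ N ∧ Br x a t z ∧
        ∀ t', t < t' → t' < s → ¬ Br x a t' z :=
      ⟨s - 1 - k, k + 1, by omega, by omega, by omega, hk2, hkmin⟩
    subst hsm
    have e1 : SignType.sign (x z (t + m) a) = - SignType.sign (Fd x l z t m a) := by
      by_contra hh
      exact c1.2 ⟨t, m, rfl, hb, ⟨hm1, hmN, hbt, hmin⟩, hh⟩
    have e2 : SignType.sign (x z' (t + m) a) = - SignType.sign (Fd x l z' t m a) := by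
      by_contra hh
      refine c2.2 ⟨t, m, rfl, hb', ⟨hm1, hmN, ?_, ?_⟩, hh⟩
      · exact Br_congr (fun i hi => hp i (by omega)) hbt
      · intro t' h1 h2 hbr
        exact hmin t' h1 h2 (Br_congr (fun i hi => (hp i (by omega)).symm) hbr)
    rw [Fd_congr hrec (z' := z') (t' := t) a m (by omega) (by omega)
      (fun i hi => hp _ (by omega))] at e1
    exact hne (e1.trans e2.symm)

lemma sign_mul_congr {c u w : ℝ} (h : SignType.sign u = SignType.sign w) :
    SignType.sign (c * u) = SignType.sign (c * w) := by
  rw [sign_mul, sign_mul, h]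

lemma exc_step (hrec : Rec x l n) {N : ℕ} {a : G} {t m : ℕ} {z : Z} (hn : t + m < n)
    (h : ExcAt x l N a t m z) :
    |x z (t + m) a| < |Fd x l z t m a| ∧ 0 ≤ x z (t + m) a * Fd x l z t m a ∧
    ∃ y, (∀ s < t + m, Wd x y s = Wd x z s) ∧ |Fd x l z t m a| ≤ |(-l) ^ m * x y t a| := by
  obtain ⟨hb, ⟨hm1, hmN, hbt, hmin⟩, hne⟩ := h
  obtain ⟨y, hy, hyne⟩ := hb
  have hF : Fd x l y t m a = Fd x l z t m a :=
    Fd_congr hrec a m (by omega) (by omega) (fun i hi => hy _ (by omega))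
  have ez : x z (t + m) a = (-l) ^ m * x z t a + Fd x l z t m a := by simp [Fd]
  have ey : x y (t + m) a = (-l) ^ m * x y t a + Fd x l z t m a := by rw [← hF]; simp [Fd]
  have hs : SignType.sign (x z t a) = SignType.sign (x y t a) :=
    (congrFun (hy t (by omega)) a).symm
  rw [ez] at hne hyne
  rw [ey] at hyne
  obtain ⟨r1, r2, r3⟩ := real_aux _ _ _ (sign_mul_congr hs) hne hyne
  rw [ez]
  refine ⟨r1, r2, ?_⟩
  rcases r3 with r3 | r3
  · exact ⟨z, fun _ _ => rfl, r3⟩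
  · exact ⟨y, hy, r3⟩

lemma ExcAt_congr (hrec : Rec x l n) {N : ℕ} {a : G} {t m : ℕ} {z z' : Z} (hn : t + m < n)
    (hp : ∀ s < t + m + 1, Wd x z s = Wd x z' s)
    (h : ExcAt x l N a t m z) : ExcAt x l N a t m z' := by
  obtain ⟨hb, ⟨hm1, hmN, hbt, hmin⟩, hne⟩ := h
  refine ⟨Br_congr (fun i hi => hp i (by omega)) hb, ⟨hm1, hmN, ?_, ?_⟩, ?_⟩
  · exact Br_congr (fun i hi => hp i (by omega)) hbt
  · intro t' h1 h2 hbr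
    exact hmin t' h1 h2 (Br_congr (fun i hi => (hp i (by omega)).symm) hbr)
  · rw [← Fd_congr hrec (z := z) (t := t) a m (by omega) (by omega)
      (fun i hi => hp _ (by omega))]
    have : SignType.sign (x z (t + m) a) = SignType.sign (x z' (t + m) a) :=
      congrFun (hp (t + m) (by omega)) a
    rwa [← this]

lemma exc_unique (hrec : Rec x l n) (hl0 : 0 < l) (hl1 : l < 1) {N : ℕ} {a : G} {t t' m : ℕ}
    {z : Z} (hn : t' + m < n) (hlt : t < t') (hw : ∀ i < m, Wd x z (t + i) = Wd x z (t' + i))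
    (h : ExcAt x l N a t m z) (h' : ExcAt x l N a t' m z) : False := by
  have hF : Fd x l z t m a = Fd x l z t' m a :=
    Fd_congr hrec a m (by omega) (by omega) hw
  obtain ⟨-, -, y, hy, hyf⟩ := exc_step hrec hn h'
  rw [← hF] at hyf
  have hm1 : 1 ≤ m := h.2.1.1
  have hle : t + m ≤ t' := by
    by_contra hc
    exact h'.2.1.2.2.2 (t + m) (by omega) (by omega) h.1
  have key : ∀ y, (∀ s < t + m + 1, Wd x y s = Wd x z s) →
      |x y (t + m) a| < |Fd x l z t m a| ∧ 0 ≤ x y (t + m) a * Fd x l z t m a := by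
    intro y hy
    have := exc_step hrec (by omega) (ExcAt_congr hrec (by omega) (fun s hs => (hy s hs).symm) h)
    rw [Fd_congr hrec (z := y) (z' := z) (t := t) (t' := t) a m (by omega) (by omega)
      (fun i hi => hy _ (by omega))] at this
    exact ⟨this.1, this.2.1⟩
  have hpow : ∀ j : ℕ, |(-l) ^ j| ≤ 1 := by
    intro j
    rw [abs_pow, abs_neg, abs_of_pos hl0]
    exact pow_le_one₀ hl0.le hl1.le
  have hyb : |Fd x l z t m a| ≤ |x y t' a| := by
    refine hyf.trans ?_
    rw [abs_mul]
    exact mul_le_of_le_one_left (abs_nonneg _) (hpow m)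
  have ky := key y (fun s hs => hy s (by omega))
  rcases hle.eq_or_lt with heq | hlt2
  · rw [← heq] at hyb
    linarith [ky.1]
  · have hbr : Br x a t' y := Br_congr (fun i hi => (hy i (by omega)).symm) h'.2.1.2.2.1
    obtain ⟨y', hy', hne⟩ := hbr
    have ky' := key y' (fun s hs => (hy' s (by omega)).trans (hy s (by omega)))
    have h1 := abs_le_of_sign_ne _ _ hne
    have h2 := abs_sub_lt_aux _ _ _ ky.1 ky'.1 ky.2 ky'.2
    obtain ⟨j, rfl⟩ : ∃ j, t' = t + m + j := ⟨t' - (t + m), by omega⟩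
    have h3 := Fd_congr hrec (z := y) (z' := y') (t := t + m) (t' := t + m) a j (by omega)
      (by omega) (fun i hi => (hy' _ (by omega)).symm)
    simp only [Fd] at h3 hyb h2
    have h4 : x y (t + m + j) a - x y' (t + m + j) a
        = (-l) ^ j * (x y (t + m) a - x y' (t + m) a) := by linear_combination h3
    rw [h4, abs_mul] at h1
    have := mul_le_of_le_one_left (abs_nonneg (x y (t + m) a - x y' (t + m) a)) (hpow j)
    linarith

open Classical in
lemma fresh_card (N n : ℕ) (a : G) (z : Z) :
    ((Finset.range n).filter (fun s => Fresh x N a s z)).card ≤ n / (N + 1) + 1 := by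
  have : ((Finset.range n).filter (fun s => Fresh x N a s z)).card
      ≤ (Finset.range (n / (N + 1) + 1)).card := by
    apply Finset.card_le_card_of_injOn (fun s => s / (N + 1))
    · intro s hs
      simp only [Finset.coe_filter, Finset.mem_range, Set.mem_ofPred_eq] at hs
      simp only [Finset.coe_range, Set.mem_Iio]
      exact Nat.lt_succ_of_le (Nat.div_le_div_right hs.1.le)
    · have main : ∀ s s', Fresh x N a s z → Fresh x N a s' z → s < s' →
          s / (N + 1) ≠ s' / (N + 1) := by
        intro s s' h h' hlt heq
        have h1 : ¬ s' ≤ s + N := fun hc => h'.2 s hlt hc h.1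
        have h2 : s / (N + 1) + 1 ≤ s' / (N + 1) := by
          rw [← Nat.add_div_right _ (Nat.succ_pos N)]
          exact Nat.div_le_div_right (by omega)
        omega
      intro s hs s' hs' heq
      simp only [Finset.coe_filter, Finset.mem_range, Set.mem_ofPred_eq] at hs hs'
      rcases lt_trichotomy s s' with h | h | h
      · exact absurd heq (main s s' hs.2 hs'.2 h)
      · exact h
      · exact absurd heq.symm (main s' s hs'.2 hs.2 h)
  simpa using this

/-- Number of keys. -/
def Bnum (g N : ℕ) : ℕ := (N + 1) * (3 ^ g) ^ N

open Classical in
lemma exc_card [Fintype G] (hrec : Rec x l n) (hl0 : 0 < l) (hl1 : l < 1) (N : ℕ) (a : G)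
    (z : Z) :
    ((Finset.range n).filter (fun s => Exc x l N a s z)).card ≤ Bnum (Fintype.card G) N := by
  have hch : ∀ s, ∃ tm : ℕ × ℕ, Exc x l N a s z → s = tm.1 + tm.2 ∧ ExcAt x l N a tm.1 tm.2 z := by
    intro s
    by_cases h : Exc x l N a s z
    · obtain ⟨t, m, h⟩ := h
      exact ⟨(t, m), fun _ => h⟩
    · exact ⟨(0, 0), fun h' => absurd h' h⟩
  choose tm htm using hch
  have : ((Finset.range n).filter (fun s => Exc x l N a s z)).card
      ≤ (Finset.range (N + 1) ×ˢ (Finset.univ : Finset (Fin N → G → SignType))).card := by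
    apply Finset.card_le_card_of_injOn
      (fun s => ((tm s).2, fun i : Fin N => Wd x z ((tm s).1 + i)))
    · intro s hs
      simp only [Finset.coe_filter, Finset.mem_range, Set.mem_ofPred_eq] at hs
      have := (htm s hs.2).2.2.1.2.1
      simp only [Finset.coe_product, Set.mem_prod, Finset.coe_range, Set.mem_Iio, Finset.coe_univ,
        Set.mem_univ, and_true]
      omega
    · have main : ∀ s s', s' < n → Exc x l N a s z → Exc x l N a s' z → s < s' →
          (tm s).2 = (tm s').2 → (fun i : Fin N => Wd x z ((tm s).1 + i)) =
            (fun i : Fin N => Wd x z ((tm s').1 + i)) → False := by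
        intro s s' hn h h' hlt e1 e2
        obtain ⟨a1, a2⟩ := htm s h
        obtain ⟨b1, b2⟩ := htm s' h'
        rw [e1] at a1 a2
        refine exc_unique hrec hl0 hl1 (by omega) (by omega) ?_ a2 b2
        intro i hi
        have hN := b2.2.1.2.1
        exact congrFun e2 ⟨i, by omega⟩
      intro s hs s' hs' heq
      simp only [Finset.coe_filter, Finset.mem_range, Set.mem_ofPred_eq] at hs hs'
      simp only [Prod.mk.injEq] at heq
      rcases lt_trichotomy s s' with h | h | h
      · exact (main s s' hs'.1 hs.2 hs'.2 h heq.1 heq.2).elim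
      · exact h
      · exact (main s' s hs.1 hs'.2 hs.2 h heq.1.symm heq.2.symm).elim
  refine this.trans (le_of_eq ?_)
  rw [Finset.card_product]
  have h3 : Fintype.card SignType = 3 := rfl
  simp [Bnum, h3]

lemma weight_card {ι : Type} [Fintype ι] [DecidableEq ι] (K : ℕ) (y : ℝ) (hy0 : 0 < y)
    (hy1 : y ≤ 1) (S : Finset (ι → Option SignType))
    (hS : ∀ e ∈ S, (Finset.univ.filter (fun i => e i ≠ none)).card ≤ K) :
    (S.card : ℝ) * y ^ K ≤ (1 + 3 * y) ^ Fintype.card ι := by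
  have h3 : (Finset.univ : Finset (Option SignType)).sum
      (fun o => if o ≠ none then y else 1) = 1 + 3 * y := by
    have h3 : Fintype.card SignType = 3 := rfl
    rw [Fintype.sum_option]
    simp [h3]
  have h1 : ∑ e : ι → Option SignType, ∏ i, (if e i ≠ none then y else 1)
      = (1 + 3 * y) ^ Fintype.card ι := by
    have := Finset.prod_univ_sum (fun _ : ι => (Finset.univ : Finset (Option SignType)))
      (fun _ o => if o ≠ none then y else (1 : ℝ))
    rw [Fintype.piFinset_univ] at this
    rw [← this, h3]
    simp
  rw [← h1]
  calc (S.card : ℝ) * y ^ K = ∑ e ∈ S, y ^ K := by simp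
    _ ≤ ∑ e ∈ S, ∏ i, (if e i ≠ none then y else 1) := by
        apply Finset.sum_le_sum
        intro e he
        rw [Finset.prod_ite]
        simp only [Finset.prod_const, one_pow, mul_one]
        exact pow_le_pow_of_le_one hy0.le hy1 (hS e he)
    _ ≤ _ := by
        apply Finset.sum_le_sum_of_subset_of_nonneg (Finset.subset_univ _)
        intro e _ _
        apply Finset.prod_nonneg
        intro i _
        split_ifs <;> linarith

/-- Support bound of the code, one coordinate. -/
def Kb (g N n : ℕ) : ℕ := n / (N + 1) + 1 + Bnum g N

open Classical in
lemma code_supp [Fintype G] (hrec : Rec x l n) (hl0 : 0 < l) (hl1 : l < 1) (N : ℕ) (z : Z) :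
    (Finset.univ.filter (fun i : G × Fin n => code x l N z i.1 i.2 ≠ none)).card
      ≤ Fintype.card G * Kb (Fintype.card G) N n := by
  have hsub : (Finset.univ.filter (fun i : G × Fin n => code x l N z i.1 i.2 ≠ none)).card ≤
      ((Finset.univ : Finset G).sigma (fun a =>
        (Finset.range n).filter (fun s => Fresh x N a s z) ∪
        (Finset.range n).filter (fun s => Exc x l N a s z))).card := by
    apply Finset.card_le_card_of_injOn (fun i => ⟨i.1, (i.2 : ℕ)⟩)
    · intro i hi
      simp only [Finset.coe_filter, Finset.mem_univ, true_and, Set.mem_ofPred_eq] at hi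
      have : Fresh x N i.1 i.2 z ∨ Exc x l N i.1 i.2 z := by
        by_contra hc
        exact hi (by simp [code, hc])
      simpa using this
    · rintro ⟨a, s⟩ _ ⟨a', s'⟩ _ h
      simp only [Sigma.mk.injEq, heq_eq_eq] at h
      ext
      · exact h.1
      · exact h.2
  refine hsub.trans ?_
  rw [Finset.card_sigma]
  calc _ ≤ ∑ a : G, Kb (Fintype.card G) N n := by
        apply Finset.sum_le_sum
        intro a _
        refine (Finset.card_union_le _ _).trans ?_
        exact add_le_add (fresh_card N n a z) (exc_card hrec hl0 hl1 N a z)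
    _ = _ := by simp

/-- Main uniform count. -/
lemma main_count [Fintype G] (hrec : Rec x l n) (hl0 : 0 < l) (hl1 : l < 1) (N : ℕ)
    (y : ℝ) (hy0 : 0 < y) (hy1 : y ≤ 1) {W : Type} (S : Finset W) (φ : W → Z)
    (hφ : ∀ w ∈ S, ∀ w' ∈ S, (∀ s < n, Wd x (φ w) s = Wd x (φ w') s) → w = w') :
    (S.card : ℝ) * y ^ (Fintype.card G * Kb (Fintype.card G) N n)
      ≤ (1 + 3 * y) ^ (Fintype.card G * n) := by
  classical
  let c : W → (G × Fin n → Option SignType) := fun w i => code x l N (φ w) i.1 i.2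
  have hinj : Set.InjOn c S := by
    intro w hw w' hw' h
    refine hφ w hw w' hw' (decode (N := N) hrec ?_)
    intro a s hs
    exact congrFun h (a, ⟨s, hs⟩)
  have h := weight_card (Fintype.card G * Kb (Fintype.card G) N n) y hy0 hy1 (S.image c) (by
    intro e he
    obtain ⟨w, _, rfl⟩ := Finset.mem_image.1 he
    exact code_supp hrec hl0 hl1 N (φ w))
  rw [Finset.card_image_of_injOn hinj] at h
  simpa using h

end abstract_part

end ItinAux

namespace ItinAux

lemma cone_unique {d : ℕ} {v : Fin d → ℂ} {k k' : Fin d} {z : ℂ} (h : z ∈ cone v k)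
    (h' : z ∈ cone v k') : k = k' := by
  by_contra hne
  have h1 := h k' (Ne.symm hne)
  have h2 := h' k hne
  simp only [cross] at h1 h2
  linarith

lemma billiardMap_of_mem {d : ℕ} {v : Fin d → ℂ} {lam : ℝ} {k : Fin d} {z : ℂ}
    (h : z ∈ cone v k) : billiardMap v lam z = -(lam : ℂ) * z + (1 + (lam : ℂ)) * v k := by
  have hex : ∃ k : Fin d, z ∈ cone v k := ⟨k, h⟩
  unfold billiardMap
  rw [dif_pos hex, cone_unique hex.choose_spec h]

lemma cross_step (p q z v : ℂ) (l : ℝ) :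
    cross (p - (-(l : ℂ) * z + (1 + (l : ℂ)) * v)) (q - (-(l : ℂ) * z + (1 + (l : ℂ)) * v))
      + l * cross (p - z) (q - z) = (1 + l) * cross (p - v) (q - v) := by
  simp [cross]
  ring

/-- Words of order `n` of `T_{v,lam}` without restriction to a disc. -/
def Wds {d : ℕ} (v : Fin d → ℂ) (lam : ℝ) (n : ℕ) : Set (Fin n → Fin d) :=
  {i | ∃ z : ℂ, ∀ j : Fin n, (billiardMap v lam)^[(j : ℕ)] z ∈ cone v (i j)}

/-- Points with `n` well-defined iterates. -/
def Zt {d : ℕ} (v : Fin d → ℂ) (lam : ℝ) (n : ℕ) : Type :=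
  {z : ℂ // ∀ t < n, ∃ k, (billiardMap v lam)^[t] z ∈ cone v k}

/-- Coordinates. -/
def xc {d : ℕ} (v : Fin d → ℂ) (lam : ℝ) (n : ℕ) (z : Zt v lam n) (t : ℕ)
    (a : Fin d × Fin d) : ℝ :=
  cross (v a.1 - (billiardMap v lam)^[t] z.1) (v a.2 - (billiardMap v lam)^[t] z.1)

lemma cone_of_Wd {d : ℕ} {v : Fin d → ℂ} {lam : ℝ} {n : ℕ} {z z' : Zt v lam n} {t t' : ℕ}
    (h : Wd (xc v lam n) z t = Wd (xc v lam n) z' t') {k : Fin d}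
    (hk : (billiardMap v lam)^[t] z.1 ∈ cone v k) :
    (billiardMap v lam)^[t'] z'.1 ∈ cone v k := by
  intro j hj
  have h1 : SignType.sign (xc v lam n z t (k, j)) = SignType.sign (xc v lam n z' t' (k, j)) :=
    congrFun h (k, j)
  rw [sign_pos (show 0 < xc v lam n z t (k, j) from hk j hj)] at h1
  exact sign_eq_one_iff.1 h1.symm

lemma rec_xc {d : ℕ} (v : Fin d → ℂ) (lam : ℝ) (n : ℕ) : Rec (xc v lam n) lam n := by
  intro z z' t t' ht ht' h a
  obtain ⟨k, hk⟩ := z.2 t ht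
  have hk' := cone_of_Wd h hk
  simp only [xc, Function.iterate_succ_apply']
  rw [billiardMap_of_mem hk, billiardMap_of_mem hk', cross_step, cross_step]

lemma wds_count {d : ℕ} (v : Fin d → ℂ) (lam : ℝ) (n : ℕ) (h0 : 0 < lam) (h1 : lam < 1)
    (N : ℕ) (y : ℝ) (hy0 : 0 < y) (hy1 : y ≤ 1) :
    ((Wds v lam n).ncard : ℝ) * y ^ (d * d * Kb (d * d) N n) ≤ (1 + 3 * y) ^ (d * d * n) := by
  classical
  have hfin : (Wds v lam n).Finite := Set.toFinite _
  by_cases hne : Nonempty (Zt v lam n)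
  · have hch : ∀ i : Fin n → Fin d, ∃ z : Zt v lam n, i ∈ Wds v lam n →
        ∀ j : Fin n, (billiardMap v lam)^[(j : ℕ)] z.1 ∈ cone v (i j) := by
      intro i
      by_cases hi : i ∈ Wds v lam n
      · obtain ⟨z, hz⟩ := hi
        exact ⟨⟨z, fun t ht => ⟨i ⟨t, ht⟩, hz ⟨t, ht⟩⟩⟩, fun _ => hz⟩
      · exact ⟨hne.some, fun h => absurd h hi⟩
    choose φ hφ using hch
    have := main_count (rec_xc v lam n) h0 h1 N y hy0 hy1 hfin.toFinset φ (by
      intro i hi i' hi' h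
      rw [Set.Finite.mem_toFinset] at hi hi'
      funext j
      exact cone_unique (cone_of_Wd (h j j.2) (hφ i hi j)) (hφ i' hi' j))
    rw [Set.ncard_eq_toFinset_card _ hfin]
    simpa using this
  · have : Wds v lam n = ∅ := by
      ext i
      simp only [Set.mem_empty_iff_false, iff_false]
      rintro ⟨z, hz⟩
      exact hne ⟨⟨z, fun t ht => ⟨i ⟨t, ht⟩, hz ⟨t, ht⟩⟩⟩⟩
    rw [this]
    simp only [Set.ncard_empty, Nat.cast_zero, zero_mul]
    positivity

lemma uniform_bound (d : ℕ) (hd : 0 < d) (η : ℝ) (hη : 0 < η) :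
    ∃ n : ℕ, 1 ≤ n ∧ ∀ (v : Fin d → ℂ) (lam : ℝ), 0 < lam → lam < 1 →
      ((Wds v lam n).ncard : ℝ) ≤ Real.exp (η * n) := by
  set g : ℝ := ((d * d : ℕ) : ℝ) with hg
  have hgpos : 0 < g := by rw [hg]; exact_mod_cast Nat.mul_pos hd hd
  set y : ℝ := min 1 (η / (9 * g)) with hy
  have hy0 : 0 < y := by rw [hy]; positivity
  have hy1 : y ≤ 1 := min_le_left _ _
  have hyη : 3 * g * y ≤ η / 3 := by
    have : y ≤ η / (9 * g) := min_le_right _ _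
    calc 3 * g * y ≤ 3 * g * (η / (9 * g)) := by gcongr
      _ = η / 3 := by field_simp; norm_num
  set c : ℝ := g * (-Real.log y) with hc
  have hc0 : 0 ≤ c := mul_nonneg hgpos.le (by linarith [Real.log_nonpos hy0.le hy1])
  obtain ⟨N, hN⟩ := exists_nat_gt (c / (η / 3))
  have hN' : c ≤ (η / 3) * (N + 1) := by
    rw [div_lt_iff₀ (by positivity)] at hN
    nlinarith
  obtain ⟨n, hn⟩ := exists_nat_gt (c * (1 + Bnum (d * d) N) / (η / 3))
  rw [div_lt_iff₀ (by positivity)] at hn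
  refine ⟨n + 1, by omega, ?_⟩
  intro v lam h0 h1
  have h := wds_count v lam (n + 1) h0 h1 N y hy0 hy1
  rcases Nat.eq_zero_or_pos (Wds v lam (n + 1)).ncard with hz | hpos
  · rw [hz]; simp only [Nat.cast_zero]; positivity
  have hX : (0 : ℝ) < ((Wds v lam (n + 1)).ncard : ℝ) := by exact_mod_cast hpos
  rw [← Real.log_le_iff_le_exp hX]
  have hlog := Real.log_le_log (by positivity) h
  rw [Real.log_mul hX.ne' (by positivity), Real.log_pow, Real.log_pow] at hlog
  have hl3 : Real.log (1 + 3 * y) ≤ 3 * y := by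
    have := Real.log_le_sub_one_of_pos (show 0 < 1 + 3 * y by positivity)
    linarith
  have hK : ((Kb (d * d) N (n + 1) : ℕ) : ℝ) ≤ ((n : ℝ) + 1) / (N + 1) + (1 + Bnum (d * d) N) := by
    have : (((n + 1) / (N + 1) : ℕ) : ℝ) ≤ ((n + 1 : ℕ) : ℝ) / ((N + 1 : ℕ) : ℝ) :=
      Nat.cast_div_le
    unfold Kb
    push_cast at this ⊢
    linarith
  have e1 : Real.log ((Wds v lam (n + 1)).ncard : ℝ)
      ≤ g * (n + 1) * (3 * y) + c * (Kb (d * d) N (n + 1) : ℕ) := by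
    have t1 : ((d * d * (n + 1) : ℕ) : ℝ) * Real.log (1 + 3 * y) ≤ g * (n + 1) * (3 * y) := by
      rw [Nat.cast_mul, ← hg]
      push_cast
      exact mul_le_mul_of_nonneg_left hl3 (by positivity)
    have t2 : ((d * d * Kb (d * d) N (n + 1) : ℕ) : ℝ) * Real.log y
        = - (c * (Kb (d * d) N (n + 1) : ℕ)) := by
      rw [Nat.cast_mul, ← hg, hc]; ring
    rw [t2] at hlog
    linarith
  have e2 : c * (Kb (d * d) N (n + 1) : ℕ)
      ≤ c * (((n : ℝ) + 1) / (N + 1)) + c * (1 + Bnum (d * d) N) := by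
    rw [← mul_add]
    exact mul_le_mul_of_nonneg_left hK hc0
  have e3 : c * (((n : ℝ) + 1) / (N + 1)) ≤ (η / 3) * (n + 1) := by
    rw [← mul_div_assoc, div_le_iff₀ (by positivity)]
    calc c * ((n : ℝ) + 1) ≤ (η / 3) * (N + 1) * (n + 1) := by gcongr
      _ = _ := by ring
  have e4 : g * (n + 1) * (3 * y) ≤ (η / 3) * (n + 1) := by
    calc g * (n + 1) * (3 * y) = (3 * g * y) * (n + 1) := by ring
      _ ≤ _ := by gcongr
  push_cast
  nlinarith

lemma wds_block {d : ℕ} {v : Fin d → ℂ} {lam : ℝ} {L n : ℕ} {i : Fin L → Fin d}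
    (hi : i ∈ Wds v lam L) (s : ℕ) (hs : s + n ≤ L) :
    (fun j : Fin n => i ⟨s + j, by omega⟩) ∈ Wds v lam n := by
  obtain ⟨z, hz⟩ := hi
  refine ⟨(billiardMap v lam)^[s] z, fun j => ?_⟩
  rw [← Function.iterate_add_apply]
  have := hz ⟨s + j, by omega⟩
  rwa [show (j : ℕ) + s = s + j by omega]

/-- All words of order `L` of all systems. -/
def AllW (d L : ℕ) : Set (Fin L → Fin d) :=
  {i | ∃ (v : Fin d → ℂ) (lam : ℝ), 0 < lam ∧ lam < 1 ∧ i ∈ Wds v lam L}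

lemma blocks_count {d n q r : ℕ} (S : Finset (Fin n → Fin d)) (A : Finset (Fin (q * n + r) → Fin d))
    (hA : ∀ i ∈ A, ∀ s (_ : s < q) (hs : s * n + n ≤ q * n + r),
      (fun j : Fin n => i ⟨s * n + j, by omega⟩) ∈ S) :
    A.card ≤ S.card ^ q * d ^ r := by
  classical
  have hb : ∀ s : Fin q, (s : ℕ) * n + n ≤ q * n + r := by
    intro s
    have : ((s : ℕ) + 1) * n ≤ q * n := Nat.mul_le_mul_right n s.2
    linarith [add_mul (s : ℕ) 1 n]
  have : A.card ≤ ((Fintype.piFinset (fun _ : Fin q => S)) ×ˢ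
      (Finset.univ : Finset (Fin r → Fin d))).card := by
    apply Finset.card_le_card_of_injOn (fun i =>
      ((fun s : Fin q => fun j : Fin n => i ⟨s * n + j, by have := hb s; omega⟩),
        fun j : Fin r => i ⟨q * n + j, by omega⟩))
    · intro i hi
      simp only [Finset.coe_product, Set.mem_prod, Finset.mem_coe, Fintype.mem_piFinset,
        Finset.mem_univ, and_true]
      intro s
      exact hA i hi s s.2 (hb s)
    · intro i _ i' _ h
      simp only [Prod.mk.injEq] at h
      funext ⟨t, ht⟩
      by_cases hc : t < q * n
      · have hn : 0 < n := by
          rcases Nat.eq_zero_or_pos n with h0 | h0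
          · subst h0; simp at hc
          · exact h0
        have h1 := congrFun (congrFun h.1 ⟨t / n, Nat.div_lt_of_lt_mul (by rwa [mul_comm])⟩)
          ⟨t % n, Nat.mod_lt _ hn⟩
        simp only [Nat.div_add_mod'] at h1
        exact h1
      · have h2 := congrFun h.2 ⟨t - q * n, by omega⟩
        simp only [show q * n + (t - q * n) = t by omega] at h2
        exact h2
  refine this.trans (le_of_eq ?_)
  simp

lemma allW_count (d n : ℕ) (hd : 0 < d) (η : ℝ) (hη : 0 < η)
    (h : ∀ (v : Fin d → ℂ) (lam : ℝ), 0 < lam → lam < 1 →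
      ((Wds v lam n).ncard : ℝ) ≤ Real.exp (η * n)) (q r : ℕ) (hr : r ≤ n) :
    ((AllW d (q * n + r)).ncard : ℝ) ≤
      (2 ^ (d ^ n) * d ^ n : ℝ) * Real.exp (η * (q * n)) := by
  classical
  set F : Finset (Finset (Fin n → Fin d)) :=
    Finset.univ.filter (fun S => (S.card : ℝ) ≤ Real.exp (η * n)) with hF
  let C : Finset (Fin n → Fin d) → Finset (Fin (q * n + r) → Fin d) := fun S =>
    Finset.univ.filter (fun i => ∀ s (_ : s < q) (hs : s * n + n ≤ q * n + r),
      (fun j : Fin n => i ⟨s * n + j, by omega⟩) ∈ S)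
  have hsub : AllW d (q * n + r) ⊆ ((F.biUnion C : Finset _) : Set (Fin (q * n + r) → Fin d)) := by
    rintro i ⟨v, lam, h0, h1, hi⟩
    have hfin : (Wds v lam n).Finite := Set.toFinite _
    simp only [Finset.coe_biUnion, Set.mem_iUnion]
    refine ⟨hfin.toFinset, ?_, ?_⟩
    · simp only [hF, Finset.coe_filter, Finset.mem_univ, true_and, Set.mem_ofPred_eq]
      rw [← Set.ncard_eq_toFinset_card _ hfin]
      exact h v lam h0 h1
    · simp only [C, Finset.coe_filter, Finset.mem_univ, true_and, Set.mem_ofPred_eq]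
      intro s hs hs'
      rw [Set.Finite.mem_toFinset]
      exact wds_block hi (s * n) hs'
  have h1 : (AllW d (q * n + r)).ncard ≤ (F.biUnion C).card := by
    have := Set.ncard_le_ncard hsub (Finset.finite_toSet _)
    rwa [Set.ncard_coe_finset] at this
  have h2 : ((F.biUnion C).card : ℝ) ≤ ∑ S ∈ F, ((C S).card : ℝ) := by
    exact_mod_cast Finset.card_biUnion_le
  have h3 : ∀ S ∈ F, ((C S).card : ℝ) ≤ Real.exp (η * (q * n)) * d ^ n := by
    intro S hS
    have hS' : (S.card : ℝ) ≤ Real.exp (η * n) := by simpa [hF] using hS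
    have hb := blocks_count S (C S) (by
      intro i hi
      simpa [C] using hi)
    calc ((C S).card : ℝ) ≤ (S.card : ℝ) ^ q * (d : ℝ) ^ r := by exact_mod_cast hb
      _ ≤ (Real.exp (η * n)) ^ q * (d : ℝ) ^ n := by
          have hd1 : (1 : ℝ) ≤ d := by exact_mod_cast hd
          gcongr
      _ = _ := by rw [← Real.exp_nat_mul]; ring_nf
  have h4 : (F.card : ℝ) ≤ 2 ^ (d ^ n) := by
    have : F.card ≤ 2 ^ (d ^ n) := by
      refine (Finset.card_le_univ _).trans (le_of_eq ?_)
      simp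
    exact_mod_cast this
  calc ((AllW d (q * n + r)).ncard : ℝ) ≤ ((F.biUnion C).card : ℝ) := by exact_mod_cast h1
    _ ≤ ∑ S ∈ F, ((C S).card : ℝ) := h2
    _ ≤ ∑ S ∈ F, Real.exp (η * (q * n)) * d ^ n := Finset.sum_le_sum h3
    _ = F.card * (Real.exp (η * (q * n)) * d ^ n) := by simp
    _ ≤ 2 ^ (d ^ n) * (Real.exp (η * (q * n)) * d ^ n) := by gcongr
    _ = _ := by ring

lemma log_bound (d : ℕ) (hd : 0 < d) (η : ℝ) (hη : 0 < η) :
    ∃ C : ℝ, ∀ L : ℕ, Real.log ((AllW d L).ncard) ≤ C + η * L := by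
  obtain ⟨n, hn1, hn⟩ := uniform_bound d hd η hη
  have hd1 : (1 : ℝ) ≤ d := by exact_mod_cast hd
  have hC1 : (1 : ℝ) ≤ 2 ^ (d ^ n) * d ^ n :=
    one_le_mul_of_one_le_of_one_le (one_le_pow₀ (by norm_num)) (one_le_pow₀ hd1)
  have hlogC := Real.log_nonneg hC1
  refine ⟨Real.log (2 ^ (d ^ n) * d ^ n : ℝ), fun L => ?_⟩
  have h := allW_count d n hd η hη hn (L / n) (L % n) (Nat.mod_lt _ hn1).le
  rw [Nat.div_add_mod'] at h
  have hq : (((L / n : ℕ) : ℝ) * n) ≤ L := by exact_mod_cast Nat.div_mul_le_self L n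
  rcases Nat.eq_zero_or_pos (AllW d L).ncard with hz | hpos
  · rw [hz]; simp only [Nat.cast_zero, Real.log_zero]; positivity
  have hX : (0 : ℝ) < ((AllW d L).ncard : ℝ) := by exact_mod_cast hpos
  have h5 := Real.log_le_log hX h
  rw [Real.log_mul (by positivity) (by positivity), Real.log_exp] at h5
  have : η * (((L / n : ℕ) : ℝ) * n) ≤ η * L := by gcongr
  linarith

lemma isOpen_convex (d : ℕ) [NeZero d] : IsOpen {w : Fin d → ℂ | IsConvexPolygon w} := by
  have : {w : Fin d → ℂ | IsConvexPolygon w} = ⋂ i : Fin d, ⋂ j : Fin d, ⋂ _ : j ≠ i,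
      ⋂ _ : j ≠ i + 1, {w | 0 < cross (w (i + 1) - w i) (w j - w i)} := by
    ext w
    simp [IsConvexPolygon]
  rw [this]
  refine isOpen_iInter_of_finite fun i => isOpen_iInter_of_finite fun j =>
    isOpen_iInter_of_finite fun _ => isOpen_iInter_of_finite fun _ => ?_
  refine isOpen_lt continuous_const ?_
  unfold cross
  fun_prop

end ItinAux

/-- If `T_{P,λ}` has no singular connections, then for some `ε > 0` the number of
admissible itineraries of all systems in `Δ_ε(P,λ)` has subexponential growth:
`(1/n) log #I_n^ε → 0`. -/
theorem itinerary_subexponential_growth (d : ℕ) [NeZero d] (hd : 3 ≤ d)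
    (vP : Fin d → ℂ) (lP : ℝ) (hconv : IsConvexPolygon vP)
    (hl : lP ∈ Set.Ioo (0 : ℝ) 1) (hns : ¬ HasSingularConnection vP lP) :
    ∃ ε : ℝ, 0 < ε ∧ 0 < lP - ε ∧ lP + ε < 1 ∧
      (∀ w : Fin d → ℂ, ‖w - vP‖ < ε → IsConvexPolygon w) ∧
      Filter.Tendsto (fun n : ℕ => Real.log ((ItinSet vP lP ε n).ncard) / n)
        Filter.atTop (nhds 0) := by

  have hd0 : 0 < d := by omega
  obtain ⟨hl0, hl1⟩ := hl
  obtain ⟨ε₁, hε₁, hball⟩ := Metric.isOpen_iff.1 (ItinAux.isOpen_convex d) vP hconv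
  refine ⟨min ε₁ (min (lP / 2) ((1 - lP) / 2)), ?_, ?_, ?_, ?_, ?_⟩
  · refine lt_min hε₁ (lt_min ?_ ?_) <;> linarith
  · have : min ε₁ (min (lP / 2) ((1 - lP) / 2)) ≤ lP / 2 :=
      (min_le_right _ _).trans (min_le_left _ _)
    linarith
  · have : min ε₁ (min (lP / 2) ((1 - lP) / 2)) ≤ (1 - lP) / 2 :=
      (min_le_right _ _).trans (min_le_right _ _)
    linarith
  · intro w hw
    apply hball
    rw [Metric.mem_ball, dist_eq_norm]
    exact lt_of_lt_of_le hw (min_le_left _ _)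
  · set ε := min ε₁ (min (lP / 2) ((1 - lP) / 2)) with hε
    have hε2 : ε ≤ lP / 2 := (min_le_right _ _).trans (min_le_left _ _)
    have hε3 : ε ≤ (1 - lP) / 2 := (min_le_right _ _).trans (min_le_right _ _)
    have hsub : ∀ n, ItinSet vP lP ε n ⊆ ItinAux.AllW d n := by
      rintro n i ⟨q, hq, z, hz⟩
      obtain ⟨_, hq1, hq2⟩ := hq
      exact ⟨q.1, q.2, by linarith, by linarith, z, fun j => (hz j).1⟩
    have hcard : ∀ n, Real.log ((ItinSet vP lP ε n).ncard)
        ≤ Real.log ((ItinAux.AllW d n).ncard) := by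
      intro n
      have h := Set.ncard_le_ncard (hsub n) (Set.toFinite _)
      rcases Nat.eq_zero_or_pos (ItinSet vP lP ε n).ncard with hz | hpos
      · rw [hz]
        simp only [Nat.cast_zero, Real.log_zero]
        exact Real.log_natCast_nonneg _
      · exact Real.log_le_log (by exact_mod_cast hpos) (by exact_mod_cast h)
    rw [Metric.tendsto_atTop]
    intro η hη
    obtain ⟨C, hC⟩ := ItinAux.log_bound d hd0 (η / 2) (by positivity)
    obtain ⟨M, hM⟩ := exists_nat_gt (C / (η / 2))
    refine ⟨M + 1, fun n hn => ?_⟩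
    have hn' : (M : ℝ) + 1 ≤ n := by exact_mod_cast hn
    have hn0 : (0 : ℝ) < n := by linarith [Nat.cast_nonneg (α := ℝ) M]
    rw [div_lt_iff₀ (by positivity)] at hM
    rw [Real.dist_eq, sub_zero, abs_of_nonneg (div_nonneg (Real.log_natCast_nonneg _) hn0.le),
      div_lt_iff₀ hn0]
    have h1 := (hcard n).trans (hC n)
    nlinarith
end
end

section
/- For every α > 0 and every integer k ≥ 0, r_α(k) ≥ (1 + 1/(k+1))^{−1/2} · (α²(k+1) + 1)^{−1/(2(k+1))}. -/
open MeasureTheory Set Filter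

noncomputable section

/-- The coefficient sequence `a` defines a power series in the class `F_α`:
`p(x) = 1 + ∑_{n ≥ 1} a_n xⁿ` with all coefficients `a_n ∈ [-α, α]`. -/
def memF (α : ℝ) (a : ℕ → ℝ) : Prop :=
  a 0 = 1 ∧ ∀ n : ℕ, 1 ≤ n → |a n| ≤ α

/-- The function on `(-1,1)` defined by the power series with coefficients `a`. -/
def Fsum (a : ℕ → ℝ) (x : ℝ) : ℝ := ∑' n : ℕ, a n * x ^ n

/-- `r_α(k) = inf {x > 0 : ∃ p ∈ F_α, p⁽ʲ⁾(x) = 0 for j = 0, …, k}`. -/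
def rAlpha (α : ℝ) (k : ℕ) : ℝ :=
  sInf {x : ℝ | 0 < x ∧ x < 1 ∧
    ∃ a : ℕ → ℝ, memF α a ∧ ∀ j : ℕ, j ≤ k → iteratedDeriv j (Fsum a) x = 0}

open Topology

lemma summable_bdd {b : ℕ → ℝ} {C : ℝ} (hb : ∀ n, |b n| ≤ C) {x : ℝ} (hx : |x| < 1) :
    Summable fun n => b n * x ^ n := by
  refine Summable.of_norm_bounded (g := fun n => C * |x| ^ n)
    ((summable_geometric_of_lt_one (abs_nonneg x) hx).mul_left C) fun n => ?_
  rw [Real.norm_eq_abs, abs_mul, abs_pow]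
  exact mul_le_mul_of_nonneg_right (hb n) (by positivity)

lemma analyticAt_Fsum {b : ℕ → ℝ} {C : ℝ} (hb : ∀ n, |b n| ≤ C) {x : ℝ} (hx : |x| < 1) :
    AnalyticAt ℝ (Fsum b) x := by
  have hF : Fsum b = (FormalMultilinearSeries.ofScalars ℝ b).sum := by
    have := FormalMultilinearSeries.ofScalarsSum_eq_tsum (E := ℝ) b
    unfold FormalMultilinearSeries.ofScalarsSum at this
    rw [this]
    ext y
    simp [Fsum]
  have hrad : (1 : ENNReal) ≤ (FormalMultilinearSeries.ofScalars ℝ b).radius := by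
    have := (FormalMultilinearSeries.ofScalars ℝ b).le_radius_of_bound C (r := 1) (by
      intro n
      rw [FormalMultilinearSeries.ofScalars_norm]
      simpa using hb n)
    simpa using this
  have h := (FormalMultilinearSeries.ofScalars ℝ b).hasFPowerSeriesOnBall
    (lt_of_lt_of_le one_pos hrad)
  rw [hF]
  refine h.analyticAt_of_mem ?_
  refine Metric.eball_subset_eball hrad ?_
  rw [Metric.mem_eball, edist_dist, dist_zero_right, Real.norm_eq_abs]
  simpa using hx

/-- Shift of a sequence to the right. -/
def shiftR (q : ℕ → ℝ) : ℕ → ℝ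
  | 0 => 0
  | n + 1 => q n

lemma shiftR_bdd {q : ℕ → ℝ} {C : ℝ} (hq : ∀ n, |q n| ≤ C) (n : ℕ) : |shiftR q n| ≤ C := by
  cases n with
  | zero => simpa [shiftR] using (abs_nonneg _).trans (hq 0)
  | succ n => exact hq n

lemma Fsum_shiftR {q : ℕ → ℝ} {C : ℝ} (hq : ∀ n, |q n| ≤ C) {x : ℝ} (hx : |x| < 1) :
    Fsum (shiftR q) x = x * Fsum q x := by
  unfold Fsum
  rw [(summable_bdd (shiftR_bdd hq) hx).tsum_eq_zero_add, ← tsum_mul_left]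
  simp only [shiftR, zero_mul, zero_add]
  exact tsum_congr fun n => by ring

lemma Fsum_lin {p q : ℕ → ℝ} {C D : ℝ} (hp : ∀ n, |p n| ≤ C) (hq : ∀ n, |q n| ≤ D) (u v : ℝ)
    {x : ℝ} (hx : |x| < 1) :
    Fsum (fun n => u * p n - v * q n) x = u * Fsum p x - v * Fsum q x := by
  unfold Fsum
  rw [← tsum_mul_left, ← tsum_mul_left,
    ← ((summable_bdd hp hx).mul_left u).tsum_sub ((summable_bdd hq hx).mul_left v)]
  exact tsum_congr fun n => by ring

lemma summable_sq {b : ℕ → ℝ} {C : ℝ} (hb : ∀ n, |b n| ≤ C) {ρ : ℝ} (h0 : 0 < ρ) (h1 : ρ < 1) :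
    Summable fun n => (b n * ρ ^ n) ^ 2 := by
  have h2 : |ρ ^ 2| < 1 := by
    rw [abs_of_pos (by positivity)]; nlinarith
  have := summable_bdd (b := fun n => b n ^ 2) (C := C ^ 2) (fun n => by
    rw [abs_pow]; exact pow_le_pow_left₀ (abs_nonneg _) (hb n) 2) h2
  refine this.congr fun n => ?_
  ring

lemma jensen_ineq {r ρ : ℝ} (hr0 : 0 < r) (hrρ : r < ρ) (hρ : ρ < 1) (m : ℕ) :
    ∀ (b : ℕ → ℝ) (C : ℝ), (∀ n, |b n| ≤ C) → (m : ℕ∞) ≤ analyticOrderAt (Fsum b) r →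
      (ρ ^ 2) ^ m * b 0 ^ 2 ≤ (r ^ 2) ^ m * ∑' n, (b n * ρ ^ n) ^ 2 := by
  have hρ0 : 0 < ρ := hr0.trans hrρ
  have hr1 : |r| < 1 := by rw [abs_of_pos hr0]; linarith
  induction m with
  | zero =>
    intro b C hb _
    have := (summable_sq hb hρ0 hρ).le_tsum 0 (fun _ _ => sq_nonneg _)
    simpa using this
  | succ m ih =>
    intro b C hb hord
    have hzero : Fsum b r = 0 := by
      apply apply_eq_zero_of_analyticOrderAt_ne_zero
      intro h
      rw [h] at hord
      simp at hord
    set q : ℕ → ℝ := fun n => ∑' j, b (n + 1 + j) * r ^ j with hqdef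
    have hsum : ∀ n, Summable fun j => b (n + j) * r ^ j := fun n =>
      summable_bdd (fun j => hb (n + j)) hr1
    have hq : ∀ n, |q n| ≤ C * (1 - r)⁻¹ := by
      intro n
      rw [← tsum_geometric_of_lt_one hr0.le (by linarith), ← tsum_mul_left, ← Real.norm_eq_abs]
      refine tsum_of_norm_bounded
        ((summable_geometric_of_lt_one hr0.le (by linarith)).mul_left C).hasSum fun j => ?_
      rw [Real.norm_eq_abs, abs_mul, abs_pow, abs_of_pos hr0]
      exact mul_le_mul_of_nonneg_right (hb _) (by positivity)
    have hrec : ∀ n, ∑' j, b (n + j) * r ^ j = b n + r * q n := by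
      intro n
      rw [(hsum n).tsum_eq_zero_add, hqdef, ← tsum_mul_left]
      simp only [add_zero, pow_zero, mul_one]
      congr 1
      refine tsum_congr fun j => ?_
      rw [show n + (j + 1) = n + 1 + j by ring]; ring
    have hbq : ∀ n, b n = 1 * shiftR q n - r * q n := by
      intro n
      have h := hrec n
      cases n with
      | zero =>
        have h0 : ∑' j, b (0 + j) * r ^ j = 0 := by simpa [Fsum] using hzero
        rw [h0] at h
        simp only [shiftR]; linarith
      | succ n =>
        have h0 : ∑' j, b (n + 1 + j) * r ^ j = q n := rfl
        rw [h0] at h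
        simp only [shiftR]; linarith
    set b' : ℕ → ℝ := fun n => ρ * q n - (r / ρ) * shiftR q n with hb'def
    have hsq := shiftR_bdd hq
    have hb' : ∀ n, |b' n| ≤ ρ * (C * (1 - r)⁻¹) + (r / ρ) * (C * (1 - r)⁻¹) := by
      intro n
      refine (abs_sub _ _).trans ?_
      rw [abs_mul, abs_mul, abs_of_pos hρ0, abs_of_pos (div_pos hr0 hρ0)]
      have := hq n
      have := hsq n
      gcongr
    have hnhds : ∀ᶠ x in 𝓝 r, |x| < 1 :=
      (continuous_abs.tendsto r).eventually (gt_mem_nhds hr1)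
    have hqan := analyticAt_Fsum hq hr1
    have e1 : Fsum b =ᶠ[𝓝 r] (fun x => x - r) * Fsum q := by
      filter_upwards [hnhds] with x hx
      have : b = fun n => 1 * shiftR q n - r * q n := funext hbq
      rw [this, Fsum_lin hsq hq 1 r hx, Fsum_shiftR hq hx]
      simp only [Pi.mul_apply]; ring
    have e2 : Fsum b' =ᶠ[𝓝 r] (fun x => ρ - (r / ρ) * x) * Fsum q := by
      filter_upwards [hnhds] with x hx
      rw [hb'def, Fsum_lin hq hsq ρ (r / ρ) hx, Fsum_shiftR hq hx]
      simp only [Pi.mul_apply]; ring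
    have o1 : analyticOrderAt (Fsum b) r = 1 + analyticOrderAt (Fsum q) r := by
      rw [analyticOrderAt_congr e1, analyticOrderAt_mul (by fun_prop) hqan,
        analyticOrderAt_id_sub_const_self]
    have o2 : analyticOrderAt (Fsum q) r ≤ analyticOrderAt (Fsum b') r := by
      rw [analyticOrderAt_congr e2, analyticOrderAt_mul (by fun_prop) hqan]
      exact le_add_self
    have hord' : (m : ℕ∞) ≤ analyticOrderAt (Fsum b') r := by
      refine le_trans ?_ o2
      rw [o1, add_comm 1] at hord
      push_cast at hord
      exact (ENat.add_le_add_iff_right ENat.one_ne_top).1 hord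
    have key := ih b' _ hb' hord'
    have hb'0 : r * b' 0 = - (ρ * b 0) := by
      rw [hbq 0]; simp only [hb'def, shiftR]; ring
    have hS : ∑' n, (b' n * ρ ^ n) ^ 2 = ∑' n, (b n * ρ ^ n) ^ 2 := by
      have s1 := summable_sq hq hρ0 hρ
      have s2 := summable_sq hb hρ0 hρ
      have s3 : Summable fun n => (ρ⁻¹ * (shiftR q n * ρ ^ n)) ^ 2 := by
        refine ((summable_sq hsq hρ0 hρ).mul_left (ρ⁻¹ ^ 2)).congr fun n => ?_
        ring
      have hs13 : ∑' n, (ρ⁻¹ * (shiftR q n * ρ ^ n)) ^ 2 = ∑' n, (q n * ρ ^ n) ^ 2 := by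
        rw [s3.tsum_eq_zero_add]
        simp only [shiftR, zero_mul, mul_zero]
        rw [zero_pow two_ne_zero, zero_add]
        refine tsum_congr fun n => ?_
        field_simp
        ring
      have : ∀ n, (b' n * ρ ^ n) ^ 2 = (b n * ρ ^ n) ^ 2 + (ρ ^ 2 - r ^ 2) *
          ((q n * ρ ^ n) ^ 2 - (ρ⁻¹ * (shiftR q n * ρ ^ n)) ^ 2) := by
        intro n
        rw [hbq n]; simp only [hb'def]
        field_simp
        ring
      rw [tsum_congr this, s2.tsum_add ((s1.sub s3).mul_left _), tsum_mul_left,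
        s1.tsum_sub s3, hs13]
      ring
    rw [hS] at key
    have h2 : (r * b' 0) ^ 2 = (ρ * b 0) ^ 2 := by rw [hb'0]; ring
    calc (ρ ^ 2) ^ (m + 1) * b 0 ^ 2 = (ρ ^ 2) ^ m * (ρ * b 0) ^ 2 := by ring
      _ = r ^ 2 * ((ρ ^ 2) ^ m * b' 0 ^ 2) := by rw [← h2]; ring
      _ ≤ r ^ 2 * ((r ^ 2) ^ m * ∑' n, (b n * ρ ^ n) ^ 2) := by gcongr
      _ = _ := by ring

open Polynomial in
lemma exists_poly {α r : ℝ} (hα : 0 < α) (hα1 : α ≤ 1) {M K : ℕ} (hM : 1 ≤ M)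
    (hr : ∀ i < K, 1 / α ≤ ∑ n ∈ Finset.Ico 1 M, r ^ (n * M ^ i)) :
    ∀ i ≤ K, ∃ P : ℝ[X], (∀ n, M ^ i ≤ n → P.coeff n = 0) ∧ P.coeff 0 = 1 ∧
      (∀ n, 1 ≤ n → |P.coeff n| ≤ α) ∧ (X - C r) ^ i ∣ P := by
  intro i
  induction i with
  | zero =>
    intro _
    refine ⟨1, ?_, by simp, ?_, by simp⟩
    · intro n hn
      rw [coeff_one, if_neg]
      simp at hn; omega
    · intro n hn
      rw [coeff_one, if_neg (by omega)]
      simpa using hα.le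
  | succ i ih =>
    intro hi
    obtain ⟨P, hdeg, h0, hcoe, hdvd⟩ := ih (by omega)
    set N := M ^ i with hN
    have hNpos : 0 < N := by positivity
    set S := ∑ n ∈ Finset.Ico 1 M, r ^ (n * N) with hS
    have hSα : 1 / α ≤ S := hr i (by omega)
    have hSpos : 0 < S := lt_of_lt_of_le (by positivity) hSα
    have hSinv : S⁻¹ ≤ α := by
      rw [inv_le_comm₀ hSpos hα, ← one_div]; exact hSα
    set d : ℕ → ℝ := fun n => if n = 0 then 1 else - S⁻¹ with hd
    have hd1 : ∀ n, 1 ≤ n → |d n| ≤ α := by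
      intro n hn
      simp only [hd]
      rw [if_neg (by omega), abs_neg, abs_of_pos (by positivity)]
      exact hSinv
    have hP1 : ∀ n, |P.coeff n| ≤ 1 := by
      intro n
      rcases Nat.eq_zero_or_pos n with rfl | h
      · simp [h0]
      · exact (hcoe n h).trans hα1
    set G : ℝ[X] := ∑ n ∈ Finset.range M, C (d n) * X ^ (n * N) with hG
    have hcoeff : ∀ m, (G * P).coeff m =
        if m / N < M then d (m / N) * P.coeff (m % N) else 0 := by
      intro m
      rw [hG, Finset.sum_mul, finsetSum_coeff]
      have hterm : ∀ n, (C (d n) * X ^ (n * N) * P).coeff m =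
          if n = m / N then d (m / N) * P.coeff (m % N) else 0 := by
        intro n
        rw [mul_assoc, coeff_C_mul, coeff_X_pow_mul']
        have hdm := Nat.div_add_mod m N
        have hml := Nat.mod_lt m hNpos
        split_ifs with h1 h2 h2
        · subst h2
          congr 2
          have : m / N * N = N * (m / N) := mul_comm _ _
          omega
        · rw [hdeg, mul_zero]
          have h3 : n ≤ m / N := (Nat.le_div_iff_mul_le hNpos).2 h1
          have h4 : n + 1 ≤ m / N := by omega
          have h5 := (Nat.le_div_iff_mul_le hNpos).1 h4
          rw [add_mul, one_mul] at h5
          omega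
        · exact absurd ((Nat.le_div_iff_mul_le hNpos).1 h2.le) h1
        · simp
      rw [Finset.sum_congr rfl fun n _ => hterm n, Finset.sum_ite_eq']
      simp
    refine ⟨G * P, ?_, ?_, ?_, ?_⟩
    · intro n hn
      rw [hcoeff, if_neg]
      rw [not_lt, Nat.le_div_iff_mul_le hNpos]
      rw [pow_succ, mul_comm, ← hN] at hn
      exact hn
    · rw [hcoeff]
      simp only [Nat.zero_div, Nat.zero_mod]
      rw [if_pos (by omega), h0]
      simp [hd]
    · intro n hn
      rw [hcoeff]
      split_ifs with h
      · rw [abs_mul]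
        rcases Nat.eq_zero_or_pos (n / N) with h1 | h1
        · have hlt : n < N := by
            rcases (Nat.div_eq_zero_iff).1 h1 with h2 | h2
            · omega
            · exact h2
          rw [h1, Nat.mod_eq_of_lt hlt]
          have : d 0 = 1 := by simp [hd]
          rw [this, abs_one, one_mul]
          exact hcoe n hn
        · calc |d (n / N)| * |P.coeff (n % N)| ≤ α * 1 := by
                gcongr
                · exact hd1 _ h1
                · exact hP1 _
            _ = α := mul_one _
      · simpa using hα.le
    · rw [pow_succ, mul_comm]
      refine mul_dvd_mul ?_ hdvd
      rw [dvd_iff_isRoot, IsRoot.def, hG, eval_finsetSum, Finset.range_eq_Ico,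
        Finset.sum_eq_sum_Ico_succ_bot (by omega)]
      have : ∑ n ∈ Finset.Ico (0 + 1) M, eval r (C (d n) * X ^ (n * N)) = - S⁻¹ * S := by
        rw [hS, Finset.mul_sum, zero_add]
        refine Finset.sum_congr rfl fun n hn => ?_
        have := (Finset.mem_Ico.1 hn).1
        simp only [eval_mul, eval_C, eval_pow, eval_X, hd]
        rw [if_neg (by omega)]
      rw [this]
      simp [hd, hSpos.ne']

lemma rAlpha_set_nonempty {α : ℝ} (hα : 0 < α) (k : ℕ) :
    {x : ℝ | 0 < x ∧ x < 1 ∧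
    ∃ a : ℕ → ℝ, memF α a ∧ ∀ j : ℕ, j ≤ k → iteratedDeriv j (Fsum a) x = 0}.Nonempty := by
  set β := min α 1 with hβ
  have hβ0 : 0 < β := lt_min hα one_pos
  obtain ⟨T, hT⟩ := exists_nat_ge (2 / β)
  set M := T + 1 with hM
  set L := M ^ (k + 1) with hL
  have hLpos : (1 : ℝ) ≤ L := by
    have : 1 ≤ L := Nat.one_le_pow _ _ (by omega)
    exact_mod_cast this
  set r : ℝ := 1 - 1 / (2 * L) with hr
  have hr2 : 1 / (2 * (L : ℝ)) ≤ 1 / 2 := by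
    apply one_div_le_one_div_of_le <;> linarith
  have hr3 : 0 < 1 / (2 * (L : ℝ)) := by positivity
  have hr0 : 0 < r := by linarith
  have hr1 : r < 1 := by linarith
  have hrL : 1 / 2 ≤ r ^ L := by
    have := one_add_mul_le_pow (a := -(1 / (2 * (L : ℝ)))) (by linarith) L
    have e : 1 + (L : ℝ) * -(1 / (2 * (L : ℝ))) = 1 / 2 := by field_simp; ring
    rw [e] at this
    rwa [hr, sub_eq_add_neg]
  obtain ⟨P, hdeg, h0, hcoe, hdvd⟩ := exists_poly (r := r) hβ0 (min_le_right _ _) (M := M)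
    (K := k + 1) (by omega) (by
      intro i hi
      have : ∀ n ∈ Finset.Ico 1 M, (1 / 2 : ℝ) ≤ r ^ (n * M ^ i) := by
        intro n hn
        refine hrL.trans (pow_le_pow_of_le_one hr0.le hr1.le ?_)
        have h1 := (Finset.mem_Ico.1 hn).2
        calc n * M ^ i ≤ M * M ^ k :=
              Nat.mul_le_mul h1.le (Nat.pow_le_pow_right (by omega) (by omega))
          _ = L := by rw [hL, pow_succ, mul_comm]
      have h := Finset.card_nsmul_le_sum _ _ _ this
      rw [Nat.card_Ico, nsmul_eq_mul] at h
      refine le_trans ?_ h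
      have : ((M - 1 : ℕ) : ℝ) = T := by simp [hM]
      rw [this]
      have : 2 / β = 2 * (1 / β) := by ring
      linarith) (k + 1) le_rfl
  refine ⟨r, hr0, hr1, P.coeff, ⟨h0, fun n hn => (hcoe n hn).trans (min_le_left _ _)⟩, ?_⟩
  have hF : Fsum P.coeff = fun x => P.eval x := by
    ext x
    unfold Fsum
    rw [Polynomial.eval_eq_sum_range, tsum_eq_sum]
    intro n hn
    rw [Polynomial.coeff_eq_zero_of_natDegree_lt (by simpa using hn), zero_mul]
  have han : ∀ Q : Polynomial ℝ, AnalyticAt ℝ (fun x => Q.eval x) r := fun Q => by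
    simpa using AnalyticAt.aeval_polynomial (analyticAt_id (𝕜 := ℝ) (z := r)) Q
  obtain ⟨Q, hQ⟩ := hdvd
  have hord : ((k + 1 : ℕ) : ℕ∞) ≤ analyticOrderAt (fun x => P.eval x) r := by
    rw [natCast_le_analyticOrderAt (han P)]
    refine ⟨fun x => Q.eval x, han Q, Eventually.of_forall fun x => ?_⟩
    rw [hQ]; simp
  rw [hF]
  intro j hj
  exact (natCast_le_analyticOrderAt_iff_iteratedDeriv_eq_zero (han P)).1 hord j (by omega)

/-- Lower bound for `r_α(k)`:
`r_α(k) ≥ (1 + 1/(k+1))^(-1/2) (α²(k+1) + 1)^(-1/(2(k+1)))`. -/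
theorem rAlpha_lower_bound (α : ℝ) (hα : 0 < α) (k : ℕ) :
    (1 + 1 / ((k : ℝ) + 1)) ^ (-(1 / 2) : ℝ) *
        (α ^ 2 * ((k : ℝ) + 1) + 1) ^ (-(1 / (2 * ((k : ℝ) + 1)))) ≤
      rAlpha α k := by
  refine le_csInf (rAlpha_set_nonempty hα k) ?_
  rintro r ⟨hr0, hr1, a, ⟨ha0, ha⟩, hder⟩
  have hk : (0 : ℝ) < (k : ℝ) + 1 := by positivity
  set B : ℝ := α ^ 2 * ((k : ℝ) + 1) + 1 with hB
  have hB1 : 1 ≤ B := by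
    have : 0 ≤ α ^ 2 * ((k : ℝ) + 1) := by positivity
    linarith
  set D : ℝ := 1 + 1 / ((k : ℝ) + 1) with hD
  have hDpos : 1 < D := by
    have : 0 < 1 / ((k : ℝ) + 1) := by positivity
    linarith
  set ρ : ℝ := D ^ (-(1 / 2) : ℝ) with hρ
  set E : ℝ := B ^ (-(1 / (2 * ((k : ℝ) + 1)))) with hE
  have hρ0 : 0 < ρ := Real.rpow_pos_of_pos (by linarith) _
  have hE0 : 0 < E := Real.rpow_pos_of_pos (by linarith) _
  have hE1 : E ≤ 1 := Real.rpow_le_one_of_one_le_of_nonpos hB1 (by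
    have : 0 ≤ 1 / (2 * ((k : ℝ) + 1)) := by positivity
    linarith)
  have hρ1 : ρ < 1 := Real.rpow_lt_one_of_one_lt_of_neg hDpos (by norm_num)
  have hρ2 : ρ ^ 2 = D⁻¹ := by
    rw [hρ, ← Real.rpow_natCast, ← Real.rpow_mul (by linarith), ← Real.rpow_neg_one]
    norm_num
  have hE2 : (E ^ 2) ^ (k + 1) = B⁻¹ := by
    rw [← pow_mul, hE, ← Real.rpow_natCast, ← Real.rpow_mul (by linarith), ← Real.rpow_neg_one]
    congr 1
    push_cast
    field_simp
  by_contra! hcon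
  have hrρ : r < ρ := hcon.trans_le (by nlinarith)
  have hbd : ∀ n, |a n| ≤ α + 1 := by
    intro n
    rcases Nat.eq_zero_or_pos n with rfl | h
    · rw [ha0, abs_one]; linarith
    · have := ha n h; linarith
  have han := analyticAt_Fsum hbd (x := r) (by rwa [abs_of_pos hr0])
  have hord : ((k + 1 : ℕ) : ℕ∞) ≤ analyticOrderAt (Fsum a) r :=
    (natCast_le_analyticOrderAt_iff_iteratedDeriv_eq_zero han).2 fun i hi => hder i (by omega)
  have key := jensen_ineq hr0 hrρ hρ1 (k + 1) a _ hbd hord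
  have hsum : ∑' n, (a n * ρ ^ n) ^ 2 ≤ B := by
    have s := summable_sq hbd hρ0 hρ1
    have hρ21 : ρ ^ 2 < 1 := by nlinarith
    have sg : Summable fun n : ℕ => α ^ 2 * ρ ^ 2 * (ρ ^ 2) ^ n :=
      (summable_geometric_of_lt_one (by positivity) hρ21).mul_left _
    rw [s.tsum_eq_zero_add]
    have h1 : ∑' n, (a (n + 1) * ρ ^ (n + 1)) ^ 2 ≤ ∑' n : ℕ, α ^ 2 * ρ ^ 2 * (ρ ^ 2) ^ n := by
      refine Summable.tsum_le_tsum (fun n => ?_) ((summable_nat_add_iff 1).2 s) sg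
      have h2 : a (n + 1) ^ 2 ≤ α ^ 2 := sq_le_sq' (abs_le.1 (ha (n + 1) (by omega))).1
        (abs_le.1 (ha (n + 1) (by omega))).2
      calc (a (n + 1) * ρ ^ (n + 1)) ^ 2 = a (n + 1) ^ 2 * (ρ ^ 2 * (ρ ^ 2) ^ n) := by ring
        _ ≤ α ^ 2 * (ρ ^ 2 * (ρ ^ 2) ^ n) := by gcongr
        _ = _ := by ring
    rw [tsum_mul_left, tsum_geometric_of_lt_one (by positivity) hρ21] at h1
    have h3 : ρ ^ 2 * (1 - ρ ^ 2)⁻¹ = (k : ℝ) + 1 := by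
      have h5 : ρ ^ 2 = ((k : ℝ) + 1) / ((k : ℝ) + 2) := by
        rw [hρ2, hD]; field_simp; ring
      have h4 : 1 - ρ ^ 2 = 1 / ((k : ℝ) + 2) := by
        rw [h5]; field_simp; ring
      rw [h4, h5]; field_simp
    rw [mul_assoc, h3] at h1
    rw [ha0]
    simp only [pow_zero, mul_one, one_pow]
    linarith
  have hlt : (r ^ 2) ^ (k + 1) < (ρ ^ 2) ^ (k + 1) * B⁻¹ := by
    rw [← hE2, ← mul_pow, ← mul_pow]
    gcongr
  have h6 : (r ^ 2) ^ (k + 1) * ∑' n, (a n * ρ ^ n) ^ 2 ≤ (r ^ 2) ^ (k + 1) * B := by gcongr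
  have h7 : (r ^ 2) ^ (k + 1) * B < (ρ ^ 2) ^ (k + 1) := by
    calc (r ^ 2) ^ (k + 1) * B < (ρ ^ 2) ^ (k + 1) * B⁻¹ * B := by gcongr
      _ = _ := by field_simp
  rw [ha0] at key
  linarith
end
end

section
/- For every α > 0 and every integer k ≥ 0, r_α(k) ≤ (1 − 1/(k+2))^{min{α/9, 1}}. -/
open MeasureTheory Set Filter

noncomputable section

theorem aux_coeff (f : ℂ → ℂ) (M : ℝ) (hf : DifferentiableOn ℂ f (Metric.closedBall 0 1))
    (h0 : f 0 = 1) (hM : ∀ z : ℂ, ‖z‖ = 1 → ‖f z‖ ≤ M) :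
    ∃ c : ℕ → ℂ, c 0 = 1 ∧ (∀ n, 1 ≤ n → |(c n).re| ≤ 2 * (M - 1)) ∧
      ∀ z : ℂ, ‖z‖ < 1 → HasSum (fun n => c n * z ^ n) (f z) := by
  have hps := DifferentiableOn.hasFPowerSeriesOnBall (R := 1) (c := (0 : ℂ)) (f := f)
    (by simpa using hf) one_pos
  have hpi : (2 * Real.pi : ℂ) ≠ 0 := by
    simp [Real.pi_ne_zero]
  let c : ℕ → ℂ := fun n => (cauchyPowerSeries f 0 1 n) (fun _ => 1)
  have hsum : ∀ z : ℂ, ‖z‖ < 1 → HasSum (fun n => c n * z ^ n) (f z) := by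
    intro z hz
    have h1 := hps.hasSum (y := z) (by
      rw [Metric.mem_eball, edist_zero_right]
      simpa [enorm_eq_nnnorm, ← NNReal.coe_lt_coe] using hz)
    rw [zero_add] at h1
    have h2 : (fun n => c n * z ^ n) = fun n => (cauchyPowerSeries f 0 ((1 : NNReal) : ℝ) n)
        (fun _ => z) := by
      funext n
      have := (cauchyPowerSeries f 0 1 n).map_smul_univ (fun _ => z) (fun _ => 1)
      simp only [smul_eq_mul, mul_one, Finset.prod_const, Finset.card_univ,
        Fintype.card_fin] at this
      rw [NNReal.coe_one, this, mul_comm]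
    rw [h2]
    exact h1
  have hc0 : c 0 = 1 := by
    have h1 := hsum 0 (by simp)
    have h2 : HasSum (fun n => c n * (0 : ℂ) ^ n) (c 0 * 0 ^ 0) :=
      hasSum_single 0 (fun n hn => by simp [hn])
    have := h1.unique h2
    simp [h0] at this
    exact this.symm
  refine ⟨c, hc0, ?_, hsum⟩
  let e : ℝ → ℂ := fun θ => Complex.exp (θ * Complex.I)
  let F : ℝ → ℂ := fun θ => f (e θ)
  have he : Continuous e := by fun_prop
  have hen : ∀ θ, ‖e θ‖ = 1 := fun θ => Complex.norm_exp_ofReal_mul_I θ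
  have hne : ∀ θ, e θ ≠ 0 := fun θ => Complex.exp_ne_zero _
  have hF : Continuous F :=
    hf.continuousOn.comp_continuous he (fun θ => by simp [hen θ])
  have hJ : ∀ n, ∫ θ in (0:ℝ)..2 * Real.pi, F θ * (e θ)⁻¹ ^ n = 2 * Real.pi * c n := by
    intro n
    have : c n = (2 * Real.pi * Complex.I)⁻¹ *
        ∫ θ in (0:ℝ)..2 * Real.pi, Complex.I * (F θ * (e θ)⁻¹ ^ n) := by
      simp only [c, cauchyPowerSeries_apply, circleIntegral, smul_eq_mul]
      congr 1
      apply intervalIntegral.integral_congr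
      intro θ _
      have := hne θ
      simp only [deriv_circleMap, circleMap, F, e, Complex.ofReal_one, one_mul, zero_add,
        sub_zero, one_div] at this ⊢
      field_simp
    rw [this, intervalIntegral.integral_const_mul]
    field_simp
  have hZ : ∀ n, 1 ≤ n → ∫ θ in (0:ℝ)..2 * Real.pi, F θ * (e θ) ^ n = 0 := by
    intro n hn
    obtain ⟨m, rfl⟩ := Nat.exists_eq_add_of_le' hn
    have hd : DifferentiableOn ℂ (fun z => f z * z ^ m) (Metric.closedBall 0 1) :=
      hf.mul (by fun_prop)
    have h1 : (∮ z in C(0, 1), f z * z ^ m) = 0 := by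
      apply DiffContOnCl.circleIntegral_eq_zero zero_le_one
      apply DifferentiableOn.diffContOnCl
      rwa [closure_ball _ one_ne_zero]
    have h2 : (∮ z in C(0, 1), f z * z ^ m) =
        ∫ θ in (0:ℝ)..2 * Real.pi, Complex.I * (F θ * (e θ) ^ (m + 1)) := by
      simp only [circleIntegral, smul_eq_mul]
      apply intervalIntegral.integral_congr
      intro θ _
      simp only [deriv_circleMap, circleMap, F, e, Complex.ofReal_one, one_mul, zero_add]
      ring
    rw [h1, intervalIntegral.integral_const_mul] at h2
    simpa using h2.symm
  intro n hn
  have key : ∀ s : ℝ, |s| ≤ 1 → 2 + s * (c n).re ≤ 2 * M := by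
    intro s hs
    have hw : ∀ θ : ℝ, (e θ) ^ n + (e θ)⁻¹ ^ n = ((2 * Real.cos (n * θ) : ℝ) : ℂ) := by
      intro θ
      simp only [e, ← Complex.exp_neg, ← Complex.exp_nat_mul]
      push_cast
      rw [Complex.two_cos]
      congr 2 <;> ring
    have hcn : Continuous fun θ => F θ * (e θ)⁻¹ ^ n :=
      hF.mul ((he.inv₀ hne).pow n)
    have hcp : Continuous fun θ => F θ * (e θ) ^ n := hF.mul (he.pow n)
    have hW : ∫ θ in (0:ℝ)..2 * Real.pi, F θ * ((2 + s * (2 * Real.cos (n * θ)) : ℝ) : ℂ)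
        = 2 * Real.pi * (2 + s * c n) := by
      have h1 : ∀ θ : ℝ, F θ * ((2 + s * (2 * Real.cos (n * θ)) : ℝ) : ℂ) =
          2 * (F θ * (e θ)⁻¹ ^ 0) + s * (F θ * (e θ) ^ n + F θ * (e θ)⁻¹ ^ n) := by
        intro θ
        rw [← mul_add, hw]
        push_cast
        ring
      simp_rw [h1]
      rw [intervalIntegral.integral_add, intervalIntegral.integral_const_mul,
        intervalIntegral.integral_const_mul, intervalIntegral.integral_add, hJ, hJ, hZ n hn, hc0]
      · ring
      · exact hcp.intervalIntegrable _ _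
      · exact hcn.intervalIntegrable _ _
      · apply Continuous.intervalIntegrable
        have := hF.const_mul 2
        simpa using this
      · apply Continuous.intervalIntegrable
        exact continuous_const.mul (hcp.add hcn)
    have hcos : ∫ θ in (0:ℝ)..2 * Real.pi, M * (2 + s * (2 * Real.cos (n * θ)))
        = 4 * Real.pi * M := by
      have hn0 : (n : ℝ) ≠ 0 := by positivity
      have h3 : ∫ θ in (0:ℝ)..2 * Real.pi, Real.cos (n * θ) = 0 := by
        rw [intervalIntegral.integral_comp_mul_left (fun x => Real.cos x) hn0, integral_cos]
        have : (n : ℝ) * (2 * Real.pi) = ((2 * n : ℕ) : ℝ) * Real.pi := by push_cast; ring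
        rw [this, Real.sin_nat_mul_pi]
        simp
      rw [intervalIntegral.integral_const_mul, intervalIntegral.integral_add,
        intervalIntegral.integral_const_mul, intervalIntegral.integral_const_mul, h3]
      · simp; ring
      · exact continuous_const.intervalIntegrable _ _
      · apply Continuous.intervalIntegrable; fun_prop
    have hle : ‖∫ θ in (0:ℝ)..2 * Real.pi, F θ * ((2 + s * (2 * Real.cos (n * θ)) : ℝ) : ℂ)‖
        ≤ ∫ θ in (0:ℝ)..2 * Real.pi, M * (2 + s * (2 * Real.cos (n * θ))) := by
      apply intervalIntegral.norm_integral_le_of_norm_le (by positivity)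
      · refine Filter.Eventually.of_forall fun θ _ => ?_
        have hpos : 0 ≤ 2 + s * (2 * Real.cos (n * θ)) := by
          have : |s * Real.cos (n * θ)| ≤ 1 := by
            rw [abs_mul]
            exact mul_le_one₀ hs (abs_nonneg _) (Real.abs_cos_le_one _)
          have := (abs_le.1 this).1
          linarith
        rw [norm_mul, Complex.norm_real, Real.norm_of_nonneg hpos]
        exact mul_le_mul_of_nonneg_right (hM _ (hen θ)) hpos
      · apply Continuous.intervalIntegrable; fun_prop
    rw [hW, hcos] at hle
    have h5 : (2 * Real.pi * (2 + s * c n) : ℂ).re ≤ 4 * Real.pi * M :=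
      (Complex.re_le_norm _).trans hle
    have h6 : (2 * Real.pi * (2 + s * c n) : ℂ) = ((2 * Real.pi : ℝ) : ℂ) * (2 + (s : ℂ) * c n) := by
      push_cast; ring
    rw [h6, Complex.re_ofReal_mul, Complex.add_re, Complex.re_ofReal_mul] at h5
    have h7 : (2 : ℂ).re = 2 := by simp
    rw [h7] at h5
    have := Real.pi_pos
    nlinarith
  have k1 := key 1 (by simp)
  have k2 := key (-1) (by simp)
  rw [abs_le]
  constructor <;> linarith


theorem aux_exists (r : ℝ) (hr0 : 0 < r) (hr1 : r < 1) (k : ℕ) (α : ℝ)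
    (hα : 2 * (r⁻¹ ^ (k + 1) - 1) ≤ α) :
    ∃ a : ℕ → ℝ, memF α a ∧ ∀ j : ℕ, j ≤ k → iteratedDeriv j (Fsum a) r = 0 := by
  have hrc : (r : ℂ) ≠ 0 := by exact_mod_cast hr0.ne'
  have hden : ∀ z : ℂ, ‖z‖ ≤ 1 → 1 - (r : ℂ) * z ≠ 0 := by
    intro z hz h
    have h1 : (r : ℂ) * z = 1 := (sub_eq_zero.1 h).symm
    have h2 := congrArg norm h1
    rw [norm_mul, Complex.norm_real, Real.norm_of_nonneg hr0.le, norm_one] at h2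
    nlinarith [norm_nonneg z]
  obtain ⟨c, hc0, hcn, hcs⟩ := aux_coeff
    (fun z => ((r - z) / (1 - r * z)) ^ (k + 1) * (r : ℂ)⁻¹ ^ (k + 1)) (r⁻¹ ^ (k + 1))
    (by
      intro z hz
      have := hden z (by simpa using hz)
      apply DifferentiableAt.differentiableWithinAt
      fun_prop (disch := assumption))
    (by simp [hrc])
    (by
      intro z hz
      have hd := hden z hz.le
      have h1 : ‖(r : ℂ) - z‖ = ‖1 - (r : ℂ) * z‖ := by
        have h2 : z.re * z.re + z.im * z.im = 1 := by
          rw [← Complex.normSq_apply, Complex.normSq_eq_norm_sq, hz]; norm_num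
        rw [← sq_eq_sq₀ (norm_nonneg _) (norm_nonneg _), ← Complex.normSq_eq_norm_sq,
          ← Complex.normSq_eq_norm_sq, Complex.normSq_apply, Complex.normSq_apply]
        simp
        linear_combination (1 - r ^ 2) * h2
      have h3 : ‖1 - (r : ℂ) * z‖ ≠ 0 := norm_ne_zero_iff.2 hd
      rw [norm_mul, norm_pow, norm_div, h1, div_self h3, norm_pow, norm_inv, Complex.norm_real,
        Real.norm_of_nonneg hr0.le]
      simp)
  refine ⟨fun n => (c n).re, ⟨by simp [hc0], fun n hn => (hcn n hn).trans hα⟩, ?_⟩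
  let g : ℝ → ℝ := fun x => ((r - x) / (1 - r * x)) ^ (k + 1) * r⁻¹ ^ (k + 1)
  have hEq : Fsum (fun n => (c n).re) =ᶠ[nhds r] g := by
    have hmem : Set.Ioo (-1 : ℝ) 1 ∈ nhds r := Ioo_mem_nhds (by linarith) hr1
    filter_upwards [hmem] with x hx
    have h1 := hcs (x : ℂ) (by
      rw [Complex.norm_real, Real.norm_eq_abs, abs_lt]; exact hx)
    have h2 := Complex.hasSum_re h1
    have h3 : ((((r : ℂ) - x) / (1 - r * x)) ^ (k + 1) * (r : ℂ)⁻¹ ^ (k + 1)).re = g x := by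
      rw [← Complex.ofReal_re (g x)]
      congr 1
      simp [g]
    rw [h3] at h2
    rw [← h2.tsum_eq]
    apply tsum_congr
    intro n
    rw [← Complex.ofReal_pow, Complex.re_mul_ofReal]
  have hd : 1 - r * r ≠ 0 := by nlinarith
  have hg : AnalyticAt ℝ g r := by
    have h : AnalyticAt ℝ (fun x : ℝ => (r - x) / (1 - r * x)) r :=
      (analyticAt_const.sub analyticAt_id).div
        (analyticAt_const.sub (analyticAt_const.mul analyticAt_id)) hd
    exact (h.pow _).mul analyticAt_const
  have hord : ((k + 1 : ℕ) : ℕ∞) ≤ analyticOrderAt g r := by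
    rw [natCast_le_analyticOrderAt hg]
    refine ⟨fun x => (-1 / (1 - r * x)) ^ (k + 1) * r⁻¹ ^ (k + 1), ?_, ?_⟩
    · have h : AnalyticAt ℝ (fun x : ℝ => -1 / (1 - r * x)) r :=
        analyticAt_const.div
          (analyticAt_const.sub (analyticAt_const.mul analyticAt_id)) hd
      exact (h.pow _).mul analyticAt_const
    · refine Filter.Eventually.of_forall fun x => ?_
      simp only [g, smul_eq_mul]
      have h : (r - x) / (1 - r * x) = (x - r) * (-1 / (1 - r * x)) := by ring
      rw [h, mul_pow, mul_assoc]
  intro j hj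
  rw [hEq.iteratedDeriv_eq]
  exact (natCast_le_analyticOrderAt_iff_iteratedDeriv_eq_zero hg).1 hord j (by omega)

/-- Upper bound for `r_α(k)`: `r_α(k) ≤ (1 - 1/(k+2))^(min{α/9, 1})`. -/
theorem rAlpha_upper_bound (α : ℝ) (hα : 0 < α) (k : ℕ) :
    rAlpha α k ≤ (1 - 1 / ((k : ℝ) + 2)) ^ min (α / 9) 1 := by
  set c := min (α / 9) 1 with hc
  have hc0 : 0 < c := lt_min (by positivity) one_pos
  have hc1 : c ≤ 1 := min_le_right _ _
  have hc2 : c ≤ α / 9 := min_le_left _ _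
  have hk : (0 : ℝ) ≤ k := Nat.cast_nonneg k
  set b : ℝ := 1 - 1 / ((k : ℝ) + 2) with hb
  have hbe : b = ((k : ℝ) + 1) / (k + 2) := by rw [hb]; field_simp; ring
  have hb0 : 0 < b := by rw [hbe]; positivity
  have hb1 : b < 1 := by
    have : 0 < 1 / ((k : ℝ) + 2) := by positivity
    linarith
  have hr0 : 0 < b ^ c := Real.rpow_pos_of_pos hb0 c
  have hr1 : b ^ c < 1 := Real.rpow_lt_one hb0.le hb1 hc0
  unfold rAlpha
  refine csInf_le ⟨0, fun x hx => hx.1.le⟩ ⟨hr0, hr1, aux_exists _ hr0 hr1 k α ?_⟩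
  have hlog : -(1 / ((k : ℝ) + 1)) ≤ Real.log b := by
    have h := Real.one_sub_inv_le_log_of_pos hb0
    have h2 : 1 - b⁻¹ = -(1 / ((k : ℝ) + 1)) := by
      rw [hbe, inv_div]; field_simp; ring
    linarith
  have hM : (b ^ c)⁻¹ ^ (k + 1) ≤ Real.exp c := by
    have h1 : (b ^ c)⁻¹ ^ (k + 1) = Real.exp (((k : ℝ) + 1) * (-(Real.log b * c))) := by
      rw [Real.rpow_def_of_pos hb0, ← Real.exp_neg, ← Real.exp_nat_mul]
      push_cast
      rfl
    rw [h1]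
    apply Real.exp_le_exp.2
    have h3 : -1 ≤ ((k : ℝ) + 1) * Real.log b := by
      have := mul_le_mul_of_nonneg_left hlog (by positivity : (0 : ℝ) ≤ (k : ℝ) + 1)
      have h4 : ((k : ℝ) + 1) * -(1 / ((k : ℝ) + 1)) = -1 := by field_simp
      linarith
    nlinarith
  have hexp := Real.abs_exp_sub_one_le (x := c) (by rw [abs_of_pos hc0]; exact hc1)
  rw [abs_of_pos hc0] at hexp
  have := (le_abs_self _).trans hexp
  linarith
end
end

section
/- For every α > 0 one has r_α(k) < 1 for every integer k ≥ 0, and lim_{k→∞} r_α(k) = 1. -/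
open MeasureTheory Set Filter

noncomputable section

open Polynomial in
lemma exists_poly_s11 (β : ℝ) (hβ : 0 < β) (hβ1 : β ≤ 1) (k : ℕ) :
    ∃ N : ℕ, 0 < N ∧ ∀ᶠ x in nhdsWithin (1:ℝ) (Set.Iio 1), ∃ p : ℝ[X], p.natDegree < N ∧
      p.coeff 0 = 1 ∧ (∀ n, 1 ≤ n → |p.coeff n| ≤ β) ∧ (X - C x) ^ k ∣ p := by
  obtain ⟨M, hM⟩ := exists_nat_gt (1 / β)
  induction k with
  | zero =>
    refine ⟨1, one_pos, Filter.Eventually.of_forall fun x => ⟨1, by simp, by simp, ?_, by simp⟩⟩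
    intro n hn
    rw [coeff_one, if_neg (by omega)]
    simpa using hβ.le
  | succ k ih =>
    obtain ⟨N, hN, ih⟩ := ih
    refine ⟨N * (M + 1), by positivity, ?_⟩
    have hcont : Continuous fun x : ℝ => ∑ m ∈ Finset.range M, x ^ (N * (m + 1)) := by fun_prop
    have h1 : ∀ᶠ x in nhdsWithin (1:ℝ) (Set.Iio 1),
        1 / β < ∑ m ∈ Finset.range M, x ^ (N * (m + 1)) := by
      apply Filter.Eventually.filter_mono nhdsWithin_le_nhds
      apply hcont.continuousAt.eventually (lt_mem_nhds _)
      simpa using hM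
    filter_upwards [ih, h1] with x hx h1
    obtain ⟨p, hdeg, hp0, hpb, hdvd⟩ := hx
    set s := ∑ m ∈ Finset.range M, x ^ (N * (m + 1)) with hs
    have hspos : 0 < s := lt_trans (by positivity) h1
    have hcβ : 1 / s ≤ β := by
      rw [div_le_iff₀ hspos]
      rw [div_lt_iff₀ hβ] at h1
      linarith
    have hple : ∀ n, |p.coeff n| ≤ 1 := by
      intro n
      rcases Nat.eq_zero_or_pos n with h | h
      · simp [h, hp0]
      · exact (hpb n h).trans hβ1
    set g : ℝ[X] := ∑ m ∈ Finset.range M, X ^ (N * (m + 1)) with hg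
    have hcoeff : ∀ n, (p * (1 - C (1 / s) * g)).coeff n = p.coeff n - 1 / s *
        ∑ m ∈ Finset.range M, if N * (m + 1) ≤ n then p.coeff (n - N * (m + 1)) else 0 := by
      intro n
      have : p * (1 - C (1 / s) * g) = p - C (1 / s) * (∑ m ∈ Finset.range M, p * X ^ (N * (m + 1))) := by
        rw [hg, ← Finset.mul_sum]; ring
      rw [this, coeff_sub, coeff_C_mul, finsetSum_coeff]
      simp only [coeff_mul_X_pow']
    refine ⟨p * (1 - C (1 / s) * g), ?_, ?_, ?_, ?_⟩
    · have hgd : g.natDegree ≤ N * M := by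
        apply natDegree_sum_le_of_forall_le
        intro m hm
        rw [natDegree_X_pow]
        exact Nat.mul_le_mul_left _ (Finset.mem_range.1 hm)
      have h2 : (1 - C (1 / s) * g).natDegree ≤ N * M := by
        refine (natDegree_sub_le _ _).trans (max_le (by simp) ?_)
        exact (natDegree_C_mul_le _ _).trans hgd
      calc _ ≤ p.natDegree + (1 - C (1 / s) * g).natDegree := natDegree_mul_le
        _ < N * (M + 1) := by rw [mul_add]; omega
    · rw [hcoeff, hp0, Finset.sum_eq_zero]
      · simp
      · intro m _
        rw [if_neg]
        have : 0 < N * (m + 1) := by positivity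
        omega
    · intro n hn
      rw [hcoeff]
      rcases lt_or_ge n N with h | h
      · rw [Finset.sum_eq_zero]
        · simpa using hpb n hn
        · intro m _
          rw [if_neg]
          have : N * (m + 1) = N * m + N := by ring
          omega
      · rw [coeff_eq_zero_of_natDegree_lt (lt_of_lt_of_le hdeg h), zero_sub, abs_neg, abs_mul,
          abs_of_pos (by positivity : 0 < 1 / s)]
        have hsum : |∑ m ∈ Finset.range M,
            if N * (m + 1) ≤ n then p.coeff (n - N * (m + 1)) else 0| ≤ 1 := by
          calc _ ≤ ∑ m ∈ Finset.range M, |if N * (m + 1) ≤ n then p.coeff (n - N * (m + 1)) else 0| :=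
                Finset.abs_sum_le_sum_abs _ _
            _ ≤ ∑ m ∈ Finset.range M, if m = n / N - 1 then (1:ℝ) else 0 := by
                apply Finset.sum_le_sum
                intro m _
                split_ifs with ha hb hb
                · exact hple _
                · rw [coeff_eq_zero_of_natDegree_lt, abs_zero]
                  refine lt_of_lt_of_le hdeg ?_
                  by_contra hcon
                  apply hb
                  have : n / N = m + 1 := by
                    rw [Nat.div_eq_iff hN]
                    have : N * (m + 1) = (m + 1) * N := by ring
                    constructor <;> omega
                  omega
                · simp
                · simp
            _ ≤ 1 := by
                rw [Finset.sum_ite_eq']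
                split_ifs <;> simp
        calc _ ≤ β * 1 := by gcongr
          _ = β := mul_one _
    · rw [pow_succ]
      apply mul_dvd_mul hdvd
      rw [dvd_iff_isRoot, IsRoot.def]
      simp [hg, eval_finsetSum, ← hs, hspos.ne']

lemma Fsum_coeff (p : Polynomial ℝ) : Fsum p.coeff = fun t => p.eval t := by
  funext t
  rw [Fsum, Polynomial.eval_eq_sum_range, tsum_eq_sum]
  intro n hn
  rw [Polynomial.coeff_eq_zero_of_natDegree_lt, zero_mul]
  simpa [Nat.lt_succ_iff] using hn

lemma exists_mem (α : ℝ) (hα : 0 < α) (k : ℕ) : ∃ x : ℝ, 0 < x ∧ x < 1 ∧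
    ∃ a : ℕ → ℝ, memF α a ∧ ∀ j : ℕ, j ≤ k → iteratedDeriv j (Fsum a) x = 0 := by
  obtain ⟨N, -, h⟩ := exists_poly_s11 (min α 1) (by positivity) (min_le_right _ _) (k + 1)
  have h0 : ∀ᶠ x in nhdsWithin (1:ℝ) (Set.Iio 1), 0 < x :=
    Filter.Eventually.filter_mono nhdsWithin_le_nhds (lt_mem_nhds one_pos)
  obtain ⟨x, ⟨p, -, hp0, hpb, q, hq⟩, hx0, hx1⟩ := (h.and (h0.and self_mem_nhdsWithin)).exists
  refine ⟨x, hx0, hx1, p.coeff, ⟨hp0, fun n hn => (hpb n hn).trans (min_le_left _ _)⟩, ?_⟩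
  have han : ∀ p : Polynomial ℝ, AnalyticAt ℝ (fun t => p.eval t) x := fun p => by
    simpa using AnalyticAt.aeval_polynomial (analyticAt_id (𝕜 := ℝ) (z := x)) p
  intro j hj
  rw [Fsum_coeff]
  refine (natCast_le_analyticOrderAt_iff_iteratedDeriv_eq_zero (n := k + 1) (han p)).1 ?_ j (by omega)
  rw [natCast_le_analyticOrderAt (han p)]
  exact ⟨fun t => q.eval t, han q, Filter.Eventually.of_forall fun t => by simp [hq]⟩

/-- boundedness of a sequence -/
def Bd (a : ℕ → ℝ) : Prop := ∃ B, ∀ n, |a n| ≤ B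

/-- multiplication by `1 - c z` on coefficient sequences -/
def S (c : ℝ) (u : ℕ → ℝ) : ℕ → ℝ := fun n => u n - c * (if n = 0 then 0 else u (n - 1))

@[simp] lemma S_zero (c : ℝ) (u : ℕ → ℝ) : S c u 0 = u 0 := by simp [S]

@[simp] lemma S_succ (c : ℝ) (u : ℕ → ℝ) (n : ℕ) : S c u (n + 1) = u (n + 1) - c * u n := by
  simp [S]

lemma S_comm (c d : ℝ) (u : ℕ → ℝ) : S c (S d u) = S d (S c u) := by
  funext n
  rcases n with _ | _ | n
  · simp
  · simp; ring
  · simp; ring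

lemma Bd.S {u : ℕ → ℝ} (hu : Bd u) (c : ℝ) : Bd (S c u) := by
  obtain ⟨B, hB⟩ := hu
  have hB0 : 0 ≤ B := (abs_nonneg _).trans (hB 0)
  refine ⟨B + |c| * B, fun n => ?_⟩
  rcases n with _ | n
  · rw [S_zero]
    have := hB 0
    have : 0 ≤ |c| * B := by positivity
    linarith
  · rw [S_succ]
    calc _ ≤ |u (n+1)| + |c * u n| := abs_sub _ _
      _ ≤ _ := by rw [abs_mul]; gcongr <;> apply hB

lemma Bd.iter {u : ℕ → ℝ} (hu : Bd u) (c : ℝ) (m : ℕ) : Bd ((_root_.S c)^[m] u) := by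
  induction m with
  | zero => exact hu
  | succ m ih => rw [Function.iterate_succ_apply']; exact ih.S c

lemma iter_zero (u : ℕ → ℝ) (c : ℝ) (m : ℕ) : (S c)^[m] u 0 = u 0 := by
  induction m with
  | zero => rfl
  | succ m ih => rw [Function.iterate_succ_apply', S_zero, ih]

lemma Bd.summable {u : ℕ → ℝ} (hu : Bd u) {t : ℝ} (ht : |t| < 1) : Summable fun n => u n * t ^ n := by
  obtain ⟨B, hB⟩ := hu
  refine Summable.of_norm_bounded (g := fun n => B * |t| ^ n)
    ((summable_geometric_of_lt_one (abs_nonneg _) ht).mul_left B) fun n => ?_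
  rw [Real.norm_eq_abs, abs_mul, abs_pow]
  gcongr
  exact hB n

lemma Fsum_S {u : ℕ → ℝ} (hu : Bd u) {t : ℝ} (ht : |t| < 1) (c : ℝ) :
    Fsum (S c u) t = (1 - c * t) * Fsum u t := by
  have h1 := (hu.S c).summable ht
  have h2 := hu.summable ht
  have h3 := (summable_nat_add_iff 1).2 h2
  rw [Fsum, h1.tsum_eq_zero_add, Fsum]
  have : ∀ n, S c u (n + 1) * t ^ (n + 1) = u (n + 1) * t ^ (n + 1) - c * t * (u n * t ^ n) := by
    intro n; rw [S_succ]; ring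
  simp_rw [this]
  rw [h3.tsum_sub (h2.mul_left _), tsum_mul_left, sub_mul, one_mul]
  conv_rhs => rw [h2.tsum_eq_zero_add]
  rw [← h2.tsum_eq_zero_add, h2.tsum_eq_zero_add]
  simp
  ring

lemma Fsum_iter {u : ℕ → ℝ} (hu : Bd u) {t : ℝ} (ht : |t| < 1) (c : ℝ) (m : ℕ) :
    Fsum ((S c)^[m] u) t = (1 - c * t) ^ m * Fsum u t := by
  induction m with
  | zero => simp
  | succ m ih => rw [Function.iterate_succ_apply', Fsum_S (hu.iter c m) ht, ih]; ring

lemma Bd.analyticAt {u : ℕ → ℝ} (hu : Bd u) {t : ℝ} (ht : |t| < 1) : AnalyticAt ℝ (Fsum u) t := by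
  obtain ⟨B, hB⟩ := hu
  set P := FormalMultilinearSeries.ofScalars ℝ u with hP
  have hr : ((1 : NNReal) : ENNReal) ≤ P.radius := by
    apply FormalMultilinearSeries.le_radius_of_bound P B
    intro n
    simpa [hP, FormalMultilinearSeries.ofScalars_norm] using hB n
  have hF : Fsum u = P.sum := by
    funext y
    have := FormalMultilinearSeries.ofScalars_sum_eq (E := ℝ) u y
    simp only [smul_eq_mul] at this
    rw [Fsum, ← this]; rfl
  rw [hF]
  have hpos : 0 < P.radius := lt_of_lt_of_le (by simp) hr
  apply (P.hasFPowerSeriesOnBall hpos).analyticAt_of_mem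
  refine Metric.eball_subset_eball hr ?_
  simpa [edist_dist, Real.dist_eq] using ht

lemma exists_div {u : ℕ → ℝ} (hu : Bd u) {x : ℝ} (hx0 : 0 < x) (hx1 : x < 1) (h : Fsum u x = 0) :
    ∃ v, Bd v ∧ u = S (1 / x) v := by
  have hax : |x| < 1 := by rwa [abs_of_pos hx0]
  have hsum := hu.summable hax
  obtain ⟨B, hB⟩ := hu
  have hB0 : 0 ≤ B := (abs_nonneg _).trans (hB 0)
  refine ⟨fun n => (∑ i ∈ Finset.range (n + 1), u i * x ^ i) / x ^ n, ⟨B * x / (1 - x), ?_⟩, ?_⟩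
  · intro n
    have h1 := hsum.sum_add_tsum_nat_add (n + 1)
    rw [show ∑' n, u n * x ^ n = 0 from h] at h1
    have h2 : |∑' i, u (i + (n + 1)) * x ^ (i + (n + 1))| ≤ B * x ^ (n + 1) * (1 - x)⁻¹ := by
      have hg := (hasSum_geometric_of_lt_one hx0.le hx1).mul_left (B * x ^ (n + 1))
      rw [← Real.norm_eq_abs]
      refine tsum_of_norm_bounded hg fun i => ?_
      rw [Real.norm_eq_abs, abs_mul, abs_of_pos (by positivity : 0 < x ^ (i + (n+1)))]
      calc _ ≤ B * x ^ (i + (n + 1)) := by gcongr; apply hB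
        _ = _ := by ring
    rw [abs_div, abs_of_pos (by positivity : 0 < x ^ n), div_le_iff₀ (by positivity),
      eq_neg_of_add_eq_zero_left h1, abs_neg]
    refine h2.trans (le_of_eq ?_)
    rw [pow_succ]; ring
  · funext n
    rcases n with _ | n
    · simp
    · rw [S_succ, Finset.sum_range_succ _ (n + 1)]
      field_simp
      ring

lemma exists_div_iter {a : ℕ → ℝ} (ha : Bd a) {x : ℝ} (hx0 : 0 < x) (hx1 : x < 1) (m : ℕ)
    (h : ∀ j < m, iteratedDeriv j (Fsum a) x = 0) :
    ∃ v, Bd v ∧ a = (S (1 / x))^[m] v := by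
  have hax : |x| < 1 := by rwa [abs_of_pos hx0]
  induction m with
  | zero => exact ⟨a, ha, rfl⟩
  | succ m ih =>
    obtain ⟨u, hu, hau⟩ := ih fun j hj => h j (by omega)
    have hord := (natCast_le_analyticOrderAt_iff_iteratedDeriv_eq_zero (n := m + 1)
      (ha.analyticAt hax)).2 h
    have hlin : AnalyticAt ℝ (fun t : ℝ => 1 - 1 / x * t) x := by fun_prop
    have hlin1 : analyticOrderAt (fun t : ℝ => 1 - 1 / x * t) x = (1 : ℕ) := by
      rw [hlin.analyticOrderAt_eq_natCast]
      refine ⟨fun _ => - (1 / x), analyticAt_const, by simpa using hx0.ne', ?_⟩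
      refine Filter.Eventually.of_forall fun t => ?_
      simp; field_simp; ring
    have heq : Fsum a =ᶠ[nhds x] (fun t : ℝ => 1 - 1 / x * t) ^ m * Fsum u := by
      have : ∀ᶠ t in nhds x, |t| < 1 := continuous_abs.continuousAt.eventually (gt_mem_nhds hax)
      filter_upwards [this] with t ht
      rw [hau, Fsum_iter hu ht]
      rfl
    rw [analyticOrderAt_congr heq, analyticOrderAt_mul (hlin.pow m) (hu.analyticAt hax),
      analyticOrderAt_pow hlin, hlin1] at hord
    have hz : Fsum u x = 0 := by
      apply apply_eq_zero_of_analyticOrderAt_ne_zero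
      intro h0
      rw [h0] at hord
      simp at hord
      have : m + 1 ≤ m := by exact_mod_cast hord
      omega
    obtain ⟨v, hv, huv⟩ := exists_div hu hx0 hx1 hz
    exact ⟨v, hv, by rw [Function.iterate_succ_apply, ← huv, hau]⟩

/-- weighted square norm -/
def Nrm (s : ℝ) (a : ℕ → ℝ) : ℝ := ∑' n, a n ^ 2 * s ^ n

lemma Bd.mul {u v : ℕ → ℝ} (hu : Bd u) (hv : Bd v) : Bd fun n => u n * v n := by
  obtain ⟨B, hB⟩ := hu
  obtain ⟨D, hD⟩ := hv
  refine ⟨B * D, fun n => ?_⟩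
  rw [abs_mul]
  have := (abs_nonneg _).trans (hB 0)
  gcongr
  · exact hB n
  · exact hD n

lemma Bd.sq {u : ℕ → ℝ} (hu : Bd u) : Bd fun n => u n ^ 2 := by
  simpa [_root_.sq] using hu.mul hu

lemma Nrm_S {w : ℕ → ℝ} (hw : Bd w) {s : ℝ} (hs0 : 0 < s) (hs1 : s < 1) (c : ℝ) :
    Nrm s (S c w) = (1 + c ^ 2 * s) * Nrm s w - 2 * c * ∑' n, (w n * w (n + 1)) * s ^ (n + 1) := by
  have has : |s| < 1 := by rwa [abs_of_pos hs0]
  have h1 := (hw.S c).sq.summable has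
  have h2 := hw.sq.summable has
  have h3 := (summable_nat_add_iff 1).2 h2
  have hsh : Bd fun n => w (n + 1) := by
    obtain ⟨B, hB⟩ := hw
    exact ⟨B, fun n => hB _⟩
  have h4 : Summable fun n => (w n * w (n + 1)) * s ^ (n + 1) := by
    refine (((hw.mul hsh).summable has).mul_left s).congr fun n => ?_
    ring
  have key : ∀ n, S c w (n + 1) ^ 2 * s ^ (n + 1) = w (n + 1) ^ 2 * s ^ (n + 1)
      + c ^ 2 * s * (w n ^ 2 * s ^ n) - 2 * c * (w n * w (n + 1) * s ^ (n + 1)) := by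
    intro n; rw [S_succ]; ring
  have e1 : Nrm s (S c w) = w 0 ^ 2 + (∑' n, w (n + 1) ^ 2 * s ^ (n + 1)
      + c ^ 2 * s * Nrm s w - 2 * c * ∑' n, (w n * w (n + 1)) * s ^ (n + 1)) := by
    rw [Nrm, h1.tsum_eq_zero_add]
    simp_rw [key]
    rw [(h3.add (h2.mul_left _)).tsum_sub (h4.mul_left _), h3.tsum_add (h2.mul_left _),
      tsum_mul_left, tsum_mul_left]
    simp [Nrm]
  have e2 : Nrm s w = w 0 ^ 2 + ∑' n, w (n + 1) ^ 2 * s ^ (n + 1) := by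
    rw [Nrm, h2.tsum_eq_zero_add]; simp
  rw [e1]
  linear_combination -e2

lemma Nrm_flip {w : ℕ → ℝ} (hw : Bd w) {s x : ℝ} (hs0 : 0 < s) (hs1 : s < 1) (hx : 0 < x) :
    Nrm s (S (x / s) w) = x ^ 2 / s * Nrm s (S (1 / x) w) := by
  rw [Nrm_S hw hs0 hs1, Nrm_S hw hs0 hs1]
  field_simp
  ring

lemma Nrm_flip_iter {s x : ℝ} (hs0 : 0 < s) (hs1 : s < 1) (hx : 0 < x) (m : ℕ) :
    ∀ {w : ℕ → ℝ}, Bd w →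
    Nrm s ((S (x / s))^[m] w) = (x ^ 2 / s) ^ m * Nrm s ((S (1 / x))^[m] w) := by
  induction m with
  | zero => intro w _; simp
  | succ m ih =>
    intro w hw
    have hc : (S (1 / x))^[m] (S (x / s) w) = S (x / s) ((S (1 / x))^[m] w) :=
      (Function.Commute.iterate_left (fun u => S_comm _ _ u) m) w
    rw [Function.iterate_succ_apply, ih (hw.S _), hc, Nrm_flip (hw.iter _ m) hs0 hs1 hx,
      Function.iterate_succ_apply', pow_succ]
    ring

lemma key_bound {α : ℝ} {k : ℕ} {r x : ℝ} (hr0 : 0 < r) (hr1 : r < 1) (hx0 : 0 < x) (hxr : x ≤ r)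
    {a : ℕ → ℝ} (ha : memF α a) (h : ∀ j : ℕ, j ≤ k → iteratedDeriv j (Fsum a) x = 0) :
    1 ≤ r ^ (k + 1) * ((max 1 α) ^ 2 * (1 - r)⁻¹) := by
  have hle : ∀ n, |a n| ≤ max 1 α := by
    intro n
    rcases Nat.eq_zero_or_pos n with hn | hn
    · simp [hn, ha.1]
    · exact (ha.2 n hn).trans (le_max_right _ _)
  have hbd : Bd a := ⟨_, hle⟩
  obtain ⟨v, hv, hav⟩ := exists_div_iter hbd hx0 (hxr.trans_lt hr1) (k + 1)
    fun j hj => h j (by omega)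
  have hflip := Nrm_flip_iter hr0 hr1 hx0 (k + 1) hv
  rw [← hav] at hflip
  have hv0 : v 0 = 1 := by rw [← ha.1, hav, iter_zero]
  have har : |r| < 1 := by rwa [abs_of_pos hr0]
  have h1 : 1 ≤ Nrm r ((S (x / r))^[k + 1] v) := by
    have := (hv.iter (x / r) (k + 1)).sq.summable har
    have h2 := this.le_tsum 0 (fun n _ => by positivity)
    simp only [iter_zero, hv0] at h2
    simpa [Nrm] using h2
  have h2 : Nrm r a ≤ (max 1 α) ^ 2 * (1 - r)⁻¹ := by
    have hg := (hasSum_geometric_of_lt_one hr0.le hr1).mul_left ((max 1 α) ^ 2)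
    rw [← hg.tsum_eq]
    refine (hbd.sq.summable har).tsum_le_tsum (fun n => ?_) hg.summable
    rw [← sq_abs]
    gcongr
    exact hle n
  have h3 : 0 ≤ Nrm r a := tsum_nonneg fun n => by positivity
  have h4 : x ^ 2 / r ≤ r := by
    rw [div_le_iff₀ hr0]; nlinarith
  calc 1 ≤ (x ^ 2 / r) ^ (k + 1) * Nrm r a := hflip ▸ h1
    _ ≤ _ := by gcongr

/-- For every `α > 0`, `r_α(k) < 1` for every `k` and `r_α(k) → 1` as `k → ∞`. -/
theorem rAlpha_lt_one_tendsto_one (α : ℝ) (hα : 0 < α) :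
    (∀ k : ℕ, rAlpha α k < 1) ∧
      Filter.Tendsto (fun k : ℕ => rAlpha α k) Filter.atTop (nhds 1) := by
  have hbdd : ∀ k, BddBelow {x : ℝ | 0 < x ∧ x < 1 ∧
      ∃ a : ℕ → ℝ, memF α a ∧ ∀ j : ℕ, j ≤ k → iteratedDeriv j (Fsum a) x = 0} :=
    fun k => ⟨0, fun x hx => hx.1.le⟩
  have hlt : ∀ k : ℕ, rAlpha α k < 1 := by
    intro k
    obtain ⟨x, hx⟩ := exists_mem α hα k
    exact (csInf_le (hbdd k) hx).trans_lt hx.2.1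
  refine ⟨hlt, ?_⟩
  rw [tendsto_order]
  refine ⟨fun b hb => ?_, fun b hb => Filter.Eventually.of_forall fun k => (hlt k).trans hb⟩
  obtain ⟨r, hr, hr1⟩ := exists_between (max_lt hb one_pos)
  have hr0 : 0 < r := (le_max_right _ _).trans_lt hr
  have hbr : b < r := (le_max_left _ _).trans_lt hr
  have hlim : Filter.Tendsto (fun k : ℕ => r ^ (k + 1) * ((max 1 α) ^ 2 * (1 - r)⁻¹))
      Filter.atTop (nhds 0) := by
    have := ((tendsto_pow_atTop_nhds_zero_of_lt_one hr0.le hr1).comp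
      (Filter.tendsto_add_atTop_nat 1)).mul_const ((max 1 α) ^ 2 * (1 - r)⁻¹)
    simpa using this
  filter_upwards [hlim.eventually (gt_mem_nhds one_pos)] with k hk
  refine lt_of_lt_of_le hbr (le_csInf (exists_mem α hα k) ?_)
  rintro x ⟨hx0, hx1, a, ha, hj⟩
  by_contra hcon
  have := key_bound hr0 hr1 hx0 (not_le.1 hcon).le ha hj
  linarith
end
end

section
/- For every α > 0: (i) r_α(0) = 1/(1+α), realized by the power series 1 − α ∑_{n≥1} x^n = 1 − αx/(1−x); (ii) r_α(k) ≥ 1/(1+α) for every integer k ≥ 0; and (iii) the infimum defining r_α(k) is attained, i.e. there exists p ∈ F_α with p^{(j)}(r_α(k)) = 0 for all j = 0, …, k. -/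
open MeasureTheory Set Filter

noncomputable section

/-- Formal derivative of a coefficient sequence. -/
def Dseq (a : ℕ → ℝ) : ℕ → ℝ := fun n => ((n : ℝ) + 1) * a (n + 1)

lemma summable_aux (m : ℕ) (r : ℝ) (h0 : 0 < r) (h1 : r < 1) :
    Summable (fun n : ℕ => ((n : ℝ) + 1) ^ m * r ^ n) := by
  have h := summable_pow_mul_geometric_of_norm_lt_one m (r := r)
    (by rw [Real.norm_eq_abs, abs_of_pos h0]; exact h1)
  have h2 := ((summable_nat_add_iff 1).2 h).mul_right r⁻¹
  refine h2.congr fun n => ?_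
  push_cast
  field_simp
  ring

lemma Dseq_bound {a : ℕ → ℝ} {C : ℝ} {m : ℕ} (hC : 0 ≤ C)
    (h : ∀ n, |a n| ≤ C * ((n : ℝ) + 1) ^ m) :
    ∀ n, |Dseq a n| ≤ (C * 2 ^ m) * ((n : ℝ) + 1) ^ (m + 1) := by
  intro n
  have hn : (0 : ℝ) ≤ n := Nat.cast_nonneg n
  have h1 := h (n + 1)
  push_cast at h1
  have h2 : ((n : ℝ) + 1 + 1) ^ m ≤ (2 * ((n : ℝ) + 1)) ^ m :=
    pow_le_pow_left₀ (by positivity) (by linarith) m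
  rw [mul_pow] at h2
  unfold Dseq
  rw [abs_mul, abs_of_pos (by positivity : (0 : ℝ) < (n : ℝ) + 1)]
  calc ((n : ℝ) + 1) * |a (n + 1)| ≤ ((n : ℝ) + 1) * (C * (2 ^ m * ((n : ℝ) + 1) ^ m)) := by
        gcongr
        exact h1.trans (by gcongr)
    _ = _ := by ring

lemma summable_F {a : ℕ → ℝ} {C : ℝ} {m : ℕ}
    (h : ∀ n, |a n| ≤ C * ((n : ℝ) + 1) ^ m) {x : ℝ} (hx : |x| < 1) :
    Summable (fun n => a n * x ^ n) := by
  obtain ⟨r, hr, hr1⟩ := exists_between hx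
  have hr0 : 0 < r := (abs_nonneg x).trans_lt hr
  refine Summable.of_norm_bounded ((summable_aux m r hr0 hr1).mul_left C) fun n => ?_
  rw [norm_mul, norm_pow, Real.norm_eq_abs, Real.norm_eq_abs, ← mul_assoc]
  exact mul_le_mul (h n) (pow_le_pow_left₀ (abs_nonneg x) hr.le n) (by positivity)
    ((abs_nonneg _).trans (h n))

lemma hasDerivAt_F {a : ℕ → ℝ} {C : ℝ} {m : ℕ} (hC : 0 ≤ C)
    (h : ∀ n, |a n| ≤ C * ((n : ℝ) + 1) ^ m) {x : ℝ} (hx : |x| < 1) :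
    HasDerivAt (Fsum a) (Fsum (Dseq a) x) x := by
  obtain ⟨r, hr, hr1⟩ := exists_between hx
  have hr0 : 0 < r := (abs_nonneg x).trans_lt hr
  have hD := Dseq_bound hC h
  have hu : Summable (fun n : ℕ => |a n| * ((n : ℝ) * r ^ (n - 1))) := by
    rw [← summable_nat_add_iff 1]
    refine Summable.of_nonneg_of_le (fun n => by positivity) (fun n => ?_)
      ((summable_aux (m + 1) r hr0 hr1).mul_left (C * 2 ^ m))
    have h3 := hD n
    unfold Dseq at h3
    rw [abs_mul, abs_of_pos (by positivity : (0 : ℝ) < (n : ℝ) + 1)] at h3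
    simp only [Nat.add_sub_cancel]
    push_cast
    have := mul_le_mul_of_nonneg_right h3 (pow_nonneg hr0.le n)
    linarith
  have key := hasDerivAt_tsum_of_isPreconnected (g := fun n (y : ℝ) => a n * y ^ n)
    (g' := fun n (y : ℝ) => a n * ((n : ℝ) * y ^ (n - 1))) (t := Ioo (-r) r) (y₀ := 0) (y := x)
    hu isOpen_Ioo isPreconnected_Ioo
    (fun n y _ => (hasDerivAt_pow n y).const_mul (a n))
    (fun n y hy => by
      rw [norm_mul, norm_mul, norm_pow, Real.norm_eq_abs, Real.norm_eq_abs, Real.norm_eq_abs,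
        Nat.abs_cast]
      have : |y| ≤ r := abs_le.2 ⟨hy.1.le, hy.2.le⟩
      gcongr)
    ⟨by linarith, hr0⟩ (summable_F h (by simp)) (abs_lt.1 hr)
  have e : (∑' n, a n * ((n : ℝ) * x ^ (n - 1))) = Fsum (Dseq a) x := by
    have hs : Summable (fun n => a n * ((n : ℝ) * x ^ (n - 1))) := by
      refine Summable.of_norm_bounded hu fun n => ?_
      rw [norm_mul, norm_mul, norm_pow, Real.norm_eq_abs, Real.norm_eq_abs, Real.norm_eq_abs,
        Nat.abs_cast]
      gcongr
    rw [hs.tsum_eq_zero_add]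
    simp only [Nat.cast_zero, zero_mul, mul_zero, zero_add, Nat.add_sub_cancel]
    unfold Fsum Dseq
    refine tsum_congr fun n => ?_
    push_cast
    ring
  rw [e] at key
  exact key

/-- The iterated bound constant. -/
def Cj (C : ℝ) : ℕ → ℝ
  | 0 => C
  | j + 1 => Cj C j * 2 ^ j

lemma Cj_nonneg {C : ℝ} (hC : 0 ≤ C) (j : ℕ) : 0 ≤ Cj C j := by
  induction j with
  | zero => exact hC
  | succ j ih => exact mul_nonneg ih (by positivity)

lemma Dseq_iter_bound {a : ℕ → ℝ} {C : ℝ} (hC : 0 ≤ C) (h : ∀ n, |a n| ≤ C) (j : ℕ) :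
    ∀ n, |Dseq^[j] a n| ≤ Cj C j * ((n : ℝ) + 1) ^ j := by
  induction j with
  | zero => intro n; simpa [Cj] using h n
  | succ j ih =>
    rw [Function.iterate_succ_apply']
    exact Dseq_bound (Cj_nonneg hC j) ih

lemma iteratedDeriv_F {a : ℕ → ℝ} {C : ℝ} (hC : 0 ≤ C) (h : ∀ n, |a n| ≤ C) (j : ℕ) :
    ∀ x : ℝ, |x| < 1 → iteratedDeriv j (Fsum a) x = Fsum (Dseq^[j] a) x := by
  induction j with
  | zero => intro x _; simp
  | succ j ih =>
    intro x hx
    rw [iteratedDeriv_succ, Function.iterate_succ_apply']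
    have : iteratedDeriv j (Fsum a) =ᶠ[nhds x] Fsum (Dseq^[j] a) := by
      filter_upwards [(isOpen_lt continuous_abs continuous_const).mem_nhds hx] with y hy
      exact ih y hy
    rw [this.deriv_eq]
    exact (hasDerivAt_F (Cj_nonneg hC j) (Dseq_iter_bound hC h j) hx).deriv

lemma memF_bound {α : ℝ} (hα : 0 < α) {a : ℕ → ℝ} (h : memF α a) : ∀ n, |a n| ≤ 1 + α := by
  intro n
  rcases Nat.eq_zero_or_pos n with rfl | hn
  · rw [h.1]; simp; exact hα.le
  · linarith [h.2 n hn]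

lemma F_lower {α : ℝ} (hα : 0 < α) {a : ℕ → ℝ} (h : memF α a) {x : ℝ} (h0 : 0 < x)
    (h1 : x < 1) (hz : Fsum a x = 0) : 1 / (1 + α) ≤ x := by
  have hx : |x| < 1 := by rwa [abs_of_pos h0]
  have hs := summable_F (m := 0) (C := 1 + α) (a := a) (by simpa using memF_bound hα h) hx
  unfold Fsum at hz
  rw [hs.tsum_eq_zero_add, h.1] at hz
  have hg : HasSum (fun n => α * x * x ^ n) (α * x * (1 - x)⁻¹) :=
    (hasSum_geometric_of_lt_one h0.le h1).mul_left _
  have hb := tsum_of_norm_bounded (f := fun n => a (n + 1) * x ^ (n + 1)) hg (fun n => by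
    rw [norm_mul, norm_pow, Real.norm_eq_abs, Real.norm_eq_abs, abs_of_pos h0, pow_succ]
    have := mul_le_mul_of_nonneg_right (h.2 (n + 1) (by omega))
      (by positivity : 0 ≤ x ^ n * x)
    linarith)
  have e : (∑' n, a (n + 1) * x ^ (n + 1)) = -1 := by
    simp only [pow_zero, mul_one] at hz
    linarith
  rw [e] at hb
  simp only [norm_neg, norm_one] at hb
  have hx' : 0 < 1 - x := by linarith
  rw [← div_eq_mul_inv, le_div_iff₀ hx'] at hb
  rw [div_le_iff₀ (by positivity)]
  linarith

/-- Auxiliary sequence: coefficients of `x A(x) / (1 - (1-δ) x)`. -/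
def sseq (δ : ℝ) (a : ℕ → ℝ) : ℕ → ℝ
  | 0 => 0
  | n + 1 => (1 - δ) * sseq δ a n + a n

lemma construct (δ : ℝ) (h0 : 0 < δ) (h1 : δ < 1) (K : ℕ) :
    ∃ a : ℕ → ℝ, a 0 = 1 ∧ (∀ n, 1 ≤ n → |a n| ≤ (3 ^ K - 1) * δ) ∧
      ∀ x : ℝ, |x| < 1 → Fsum a x = ((1 - (1 + δ) * x) / (1 - (1 - δ) * x)) ^ K := by
  induction K with
  | zero =>
    refine ⟨fun n => if n = 0 then 1 else 0, by simp, ?_, ?_⟩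
    · intro n hn
      simp [Nat.one_le_iff_ne_zero.1 hn]
    · intro x _
      unfold Fsum
      rw [tsum_eq_single 0 (by intro n hn; simp [hn])]
      simp
  | succ K ih =>
    obtain ⟨a, ha0, hab, haF⟩ := ih
    have h3 : (1 : ℝ) ≤ 3 ^ K := one_le_pow₀ (by norm_num)
    set B : ℝ := 3 ^ K with hB
    have hs : ∀ n, |sseq δ a n| ≤ B := by
      intro n
      induction n with
      | zero => simp [sseq]; linarith
      | succ n ih =>
        rcases Nat.eq_zero_or_pos n with rfl | hn
        · simp [sseq, ha0]; exact h3
        · have := hab n hn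
          simp only [sseq]
          calc _ ≤ |(1 - δ) * sseq δ a n| + |a n| := abs_add_le _ _
            _ ≤ (1 - δ) * B + (B - 1) * δ := by
              rw [abs_mul, abs_of_pos (by linarith : 0 < 1 - δ)]
              have := mul_le_mul_of_nonneg_left ih (by linarith : 0 ≤ 1 - δ)
              linarith
            _ ≤ B := by nlinarith
    have haB : ∀ n, |a n| ≤ B := by
      intro n
      rcases Nat.eq_zero_or_pos n with rfl | hn
      · rw [ha0]; simpa using h3
      · have := hab n hn
        nlinarith
    refine ⟨fun n => a n - 2 * δ * sseq δ a n, by simp [sseq, ha0], ?_, ?_⟩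
    · intro n hn
      calc _ ≤ |a n| + |2 * δ * sseq δ a n| := abs_sub _ _
        _ ≤ (B - 1) * δ + 2 * δ * B := by
          rw [abs_mul, abs_of_pos (by linarith : 0 < 2 * δ)]
          have := mul_le_mul_of_nonneg_left (hs n) (by linarith : 0 ≤ 2 * δ)
          linarith [hab n hn]
        _ = _ := by rw [pow_succ]; ring
    · intro x hx
      have hA := summable_F (m := 0) (C := B) (a := a) (by simpa using haB) hx
      have hS := summable_F (m := 0) (C := B) (a := sseq δ a) (by simpa using hs) hx
      have hxx := abs_lt.1 hx
      have hd : 0 < 1 - (1 - δ) * x := by nlinarith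
      have eS : Fsum (sseq δ a) x = x * ((1 - δ) * Fsum (sseq δ a) x + Fsum a x) := by
        conv_lhs => unfold Fsum
        rw [hS.tsum_eq_zero_add]
        simp only [sseq, zero_mul, zero_add]
        unfold Fsum
        rw [← tsum_mul_left, ← (hS.mul_left (1 - δ)).tsum_add hA, ← tsum_mul_left]
        refine tsum_congr fun n => ?_
        ring
      have eC : Fsum (fun n => a n - 2 * δ * sseq δ a n) x
          = Fsum a x - 2 * δ * Fsum (sseq δ a) x := by
        unfold Fsum
        rw [← tsum_mul_left, ← hA.tsum_sub (hS.mul_left (2 * δ))]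
        refine tsum_congr fun n => ?_
        ring
      have eS2 : Fsum (sseq δ a) x = x * Fsum a x / (1 - (1 - δ) * x) := by
        rw [eq_div_iff hd.ne']
        linarith
      rw [eC, eS2, pow_succ, ← haF x hx]
      have hd' := hd.ne'
      generalize hq : 1 - (1 - δ) * x = q at hd'
      field_simp
      rw [← hq]
      ring

lemma exists_zero {α : ℝ} (hα : 0 < α) (k : ℕ) : ∃ x : ℝ, 0 < x ∧ x < 1 ∧
    ∃ a : ℕ → ℝ, memF α a ∧ ∀ j : ℕ, j ≤ k → iteratedDeriv j (Fsum a) x = 0 := by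
  set B : ℝ := 3 ^ (k + 1) with hB
  have hB1 : 0 < B := by positivity
  set δ : ℝ := min (1 / 2) (α / B) with hδ
  have h0 : 0 < δ := lt_min (by norm_num) (by positivity)
  have h1 : δ < 1 := (min_le_left _ _).trans_lt (by norm_num)
  have h2 : B * δ ≤ α := by
    have : δ ≤ α / B := min_le_right _ _
    rw [le_div_iff₀ hB1] at this
    linarith
  obtain ⟨a, ha0, hab, haF⟩ := construct δ h0 h1 (k + 1)
  have hc0 : 0 < 1 / (1 + δ) := by positivity
  have hc1 : 1 / (1 + δ) < 1 := by rw [div_lt_one (by linarith)]; linarith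
  have hc : |1 / (1 + δ)| < 1 := by rwa [abs_of_pos hc0]
  refine ⟨1 / (1 + δ), hc0, hc1, a, ⟨ha0, fun n hn => (hab n hn).trans (by linarith)⟩, ?_⟩
  set c := 1 / (1 + δ) with hcdef
  have hd : 1 - (1 - δ) * c ≠ 0 := by
    have : (1 - δ) * c < 1 := by nlinarith
    linarith
  have hg : AnalyticAt ℝ (fun x : ℝ => (-(1 + δ) / (1 - (1 - δ) * x)) ^ (k + 1)) c := by
    fun_prop (disch := exact hd)
  have hev : ∀ᶠ z in nhds c, Fsum a z =
      (z - c) ^ (k + 1) • (fun x : ℝ => (-(1 + δ) / (1 - (1 - δ) * x)) ^ (k + 1)) z := by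
    filter_upwards [(isOpen_lt continuous_abs continuous_const).mem_nhds hc] with z hz
    rw [haF z hz, smul_eq_mul, ← mul_pow]
    congr 1
    rw [← mul_div_assoc]
    congr 1
    rw [hcdef]
    field_simp
    ring
  have hf : AnalyticAt ℝ (Fsum a) c := by
    refine AnalyticAt.congr ?_ (EventuallyEq.symm hev)
    exact ((analyticAt_id.sub analyticAt_const).pow (k + 1)).smul hg
  have := (natCast_le_analyticOrderAt_iff_iteratedDeriv_eq_zero hf).1
    ((natCast_le_analyticOrderAt hf).2 ⟨_, hg, hev⟩)
  exact fun j hj => this j (by omega)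

lemma continuous_Dseq : Continuous Dseq := by
  unfold Dseq
  fun_prop

lemma isCompact_memF (α : ℝ) : IsCompact {a : ℕ → ℝ | memF α a} := by
  have : {a : ℕ → ℝ | memF α a} =
      Set.pi univ (fun n : ℕ => if n = 0 then Icc (1 : ℝ) 1 else Icc (-α) α) := by
    ext a
    simp only [mem_setOf_eq, mem_univ_pi, memF]
    constructor
    · rintro ⟨h0, h⟩ n
      rcases Nat.eq_zero_or_pos n with rfl | hn
      · simp [h0]
      · rw [if_neg hn.ne']
        exact abs_le.1 (h n hn)
    · intro h
      refine ⟨by simpa using h 0, fun n hn => ?_⟩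
      have := h n
      rw [if_neg (by omega)] at this
      exact abs_le.2 this
  rw [this]
  refine isCompact_univ_pi fun n => ?_
  split_ifs <;> exact isCompact_Icc

lemma attained {α : ℝ} (hα : 0 < α) (k : ℕ) :
    ∃ m, IsLeast {x : ℝ | 0 < x ∧ x < 1 ∧
      ∃ a : ℕ → ℝ, memF α a ∧ ∀ j : ℕ, j ≤ k → iteratedDeriv j (Fsum a) x = 0} m := by
  obtain ⟨x₀, hx0, hx1, a₀, ha₀, hz₀⟩ := exists_zero hα k
  have hC : 0 ≤ 1 + α := by linarith
  have hl : 0 < 1 / (1 + α) := by positivity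
  set P : Set (ℝ × (ℕ → ℝ)) := Icc (1 / (1 + α)) x₀ ×ˢ {a : ℕ → ℝ | memF α a} with hP
  have hPc : IsCompact P := isCompact_Icc.prod (isCompact_memF α)
  have hcont : ∀ j, ContinuousOn (fun q : ℝ × (ℕ → ℝ) => Fsum (Dseq^[j] q.2) q.1) P := by
    intro j
    unfold Fsum
    refine continuousOn_tsum (u := fun n : ℕ => Cj (1 + α) j * (((n : ℝ) + 1) ^ j * x₀ ^ n))
      ?_ ((summable_aux j x₀ hx0 hx1).mul_left _) ?_
    · intro n
      have : Continuous (fun q : ℝ × (ℕ → ℝ) => Dseq^[j] q.2 n) :=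
        (continuous_apply n).comp ((continuous_Dseq.iterate j).comp continuous_snd)
      exact (this.mul (continuous_fst.pow n)).continuousOn
    · rintro n ⟨x, a⟩ ⟨hx, ha⟩
      have hb := Dseq_iter_bound hC (memF_bound hα ha) j n
      have hxp : 0 < x := hl.trans_le hx.1
      rw [norm_mul, norm_pow, Real.norm_eq_abs, Real.norm_eq_abs, abs_of_pos hxp, ← mul_assoc]
      exact mul_le_mul hb (pow_le_pow_left₀ hxp.le hx.2 n) (by positivity)
        ((abs_nonneg _).trans hb)
  set T : Set (ℝ × (ℕ → ℝ)) := P ∩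
    ⋂ j ∈ Iic k, (P ∩ (fun q : ℝ × (ℕ → ℝ) => Fsum (Dseq^[j] q.2) q.1) ⁻¹' {0}) with hT
  have hTc : IsCompact T := hPc.inter_right (isClosed_biInter fun j _ =>
    (hcont j).preimage_isClosed_of_isClosed hPc.isClosed isClosed_singleton)
  have hmem : ∀ x a, 0 < x → x ≤ x₀ → memF α a →
      (∀ j : ℕ, j ≤ k → iteratedDeriv j (Fsum a) x = 0) → (x, a) ∈ T := by
    intro x a h0 hx ha hz
    have h1 : x < 1 := hx.trans_lt hx1
    have hxP : (x, a) ∈ P := ⟨⟨F_lower hα ha h0 h1 (by simpa using hz 0 (Nat.zero_le k)), hx⟩, ha⟩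
    refine ⟨hxP, ?_⟩
    simp only [mem_iInter]
    intro j hj
    refine ⟨hxP, ?_⟩
    rw [mem_preimage, mem_singleton_iff]
    exact (iteratedDeriv_F hC (memF_bound hα ha) j x (by rwa [abs_of_pos h0])).symm.trans (hz j hj)
  obtain ⟨m, ⟨⟨⟨m', a⟩, hmT, rfl⟩, hmin⟩⟩ := (hTc.image continuous_fst).exists_isLeast
    ⟨x₀, (x₀, a₀), hmem x₀ a₀ hx0 le_rfl ha₀ hz₀, rfl⟩
  have hmx : m' ≤ x₀ := hmT.1.1.2
  have hm0 : 0 < m' := hl.trans_le hmT.1.1.1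
  have hm1 : m' < 1 := hmx.trans_lt hx1
  have ham : memF α a := hmT.1.2
  refine ⟨m', ⟨hm0, hm1, a, ham, ?_⟩, ?_⟩
  · intro j hj
    rw [iteratedDeriv_F hC (memF_bound hα ham) j m' (by rwa [abs_of_pos hm0])]
    have := hmT.2
    simp only [mem_iInter] at this
    exact (this j hj).2
  · rintro x ⟨h0, h1, b, hb, hz⟩
    rcases le_total x x₀ with hx | hx
    · exact hmin ⟨(x, b), hmem x b h0 hx hb hz, rfl⟩
    · exact hmx.trans hx

/-- (i) `r_α(0) = 1/(1+α)`, realized by the power series `1 - α ∑_{n≥1} xⁿ`;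
(ii) `r_α(k) ≥ 1/(1+α)` for every `k`; (iii) the infimum defining `r_α(k)` is
attained on `F_α`. -/
theorem rAlpha_basic (α : ℝ) (hα : 0 < α) :
    (rAlpha α 0 = 1 / (1 + α) ∧
      memF α (fun n : ℕ => if n = 0 then 1 else -α) ∧
      Fsum (fun n : ℕ => if n = 0 then 1 else -α) (1 / (1 + α)) = 0) ∧
    (∀ k : ℕ, 1 / (1 + α) ≤ rAlpha α k) ∧
    (∀ k : ℕ, ∃ a : ℕ → ℝ, memF α a ∧
      ∀ j : ℕ, j ≤ k → iteratedDeriv j (Fsum a) (rAlpha α k) = 0) := by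
  have hA : memF α (fun n : ℕ => if n = 0 then 1 else -α) := by
    refine ⟨by simp, fun n hn => ?_⟩
    simp [Nat.one_le_iff_ne_zero.1 hn, abs_of_pos hα]
  have hc0 : 0 < 1 / (1 + α) := by positivity
  have hc1 : 1 / (1 + α) < 1 := by rw [div_lt_one (by linarith)]; linarith
  have hF : Fsum (fun n : ℕ => if n = 0 then 1 else -α) (1 / (1 + α)) = 0 := by
    have hs := summable_F (m := 0) (C := 1 + α) (by simpa using memF_bound hα hA)
      (show |1 / (1 + α)| < 1 by rwa [abs_of_pos hc0])
    unfold Fsum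
    rw [hs.tsum_eq_zero_add]
    have hg : HasSum (fun n => -α * (1 / (1 + α)) * (1 / (1 + α)) ^ n)
        (-α * (1 / (1 + α)) * (1 - 1 / (1 + α))⁻¹) :=
      (hasSum_geometric_of_lt_one hc0.le hc1).mul_left _
    have e : (∑' n : ℕ, (if n + 1 = 0 then 1 else -α) * (1 / (1 + α)) ^ (n + 1)) = -1 := by
      have e1 : -α * (1 / (1 + α)) * (1 - 1 / (1 + α))⁻¹ = -1 := by
        have : 1 - 1 / (1 + α) = α / (1 + α) := by field_simp; ring
        rw [this]
        field_simp
      rw [← e1, ← hg.tsum_eq]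
      refine tsum_congr fun n => ?_
      rw [if_neg (by omega)]
      ring
    rw [e]
    simp
  have hlow : ∀ k : ℕ, 1 / (1 + α) ≤ rAlpha α k := by
    intro k
    obtain ⟨m, hm⟩ := attained hα k
    unfold rAlpha
    rw [hm.csInf_eq]
    obtain ⟨h0, h1, a, ha, hz⟩ := hm.1
    exact F_lower hα ha h0 h1 (by simpa using hz 0 (Nat.zero_le k))
  refine ⟨⟨le_antisymm ?_ (hlow 0), hA, hF⟩, hlow, ?_⟩
  · refine csInf_le ⟨0, fun x hx => hx.1.le⟩ ⟨hc0, hc1, _, hA, ?_⟩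
    intro j hj
    obtain rfl : j = 0 := by omega
    simpa using hF
  · intro k
    obtain ⟨m, hm⟩ := attained hα k
    unfold rAlpha
    rw [hm.csInf_eq]
    exact hm.1.2.2
end
end

section
/- For every α > 0, every integer k ≥ 1 and every τ > 0 there exists δ ∈ (0,1) such that for every p ∈ F_α and every x ∈ [0, r_α(k) − τ]: if |p(x)| < δ, then max_{1 ≤ j ≤ k} |p^{(j)}(x)| ≥ δ. -/
open MeasureTheory Set Filter

noncomputable section

/-- Coefficients of the derivative. -/
def Dc (a : ℕ → ℝ) : ℕ → ℝ := fun n => ((n : ℝ) + 1) * a (n + 1)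

def PB (C : ℝ) (m : ℕ) (a : ℕ → ℝ) : Prop := ∀ n : ℕ, |a n| ≤ C * ((n : ℝ) + 1) ^ m

lemma summ_aux (m : ℕ) {ρ : ℝ} (h0 : 0 < ρ) (h1 : ρ < 1) :
    Summable (fun n : ℕ => ((n : ℝ) + 1) ^ m * ρ ^ n) := by
  have h := summable_pow_mul_geometric_of_norm_lt_one (R := ℝ) m (r := ρ)
    (by rw [Real.norm_eq_abs, abs_of_pos h0]; exact h1)
  have h2 := ((summable_nat_add_iff 1).2 h).mul_left ρ⁻¹
  refine h2.congr fun n => ?_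
  push_cast
  field_simp
  ring

lemma PB.Dc {C : ℝ} {m : ℕ} {a : ℕ → ℝ} (hC : 0 ≤ C) (h : PB C m a) :
    PB (C * 2 ^ m) (m + 1) (Dc a) := by
  intro n
  have h1 := h (n + 1)
  push_cast at h1
  have h2 : ((n : ℝ) + 1 + 1) ^ m ≤ (2 * ((n : ℝ) + 1)) ^ m := by
    gcongr
    have : (0 : ℝ) ≤ n := n.cast_nonneg
    linarith
  have hn : (0 : ℝ) < (n : ℝ) + 1 := by positivity
  unfold _root_.Dc
  rw [abs_mul, abs_of_pos hn]
  calc ((n : ℝ) + 1) * |a (n + 1)| ≤ (n + 1) * (C * (2 * ((n : ℝ) + 1)) ^ m) := by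
        gcongr
        exact h1.trans (by gcongr)
    _ = _ := by rw [mul_pow]; ring

lemma term_bound {C : ℝ} {m : ℕ} {a : ℕ → ℝ} (h : PB C m a) {x ρ : ℝ}
    (hx : |x| ≤ ρ) (n : ℕ) : ‖a n * x ^ n‖ ≤ C * (((n : ℝ) + 1) ^ m * ρ ^ n) := by
  rw [Real.norm_eq_abs, abs_mul, abs_pow, ← mul_assoc]
  have := h n
  have h0 : 0 ≤ C * ((n : ℝ) + 1) ^ m := (abs_nonneg _).trans this
  gcongr

lemma hasDeriv_Fsum {C : ℝ} {m : ℕ} {a : ℕ → ℝ} (hC : 0 ≤ C) (h : PB C m a) {x : ℝ}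
    (hx : |x| < 1) : HasDerivAt (Fsum a) (Fsum (Dc a) x) x := by
  obtain ⟨ρ, h1, h2⟩ := exists_between hx
  have h0 : 0 < ρ := (abs_nonneg x).trans_lt h1
  have hD := PB.Dc hC h
  have hs := (summ_aux (m + 1) h0 h2).mul_left (C * 2 ^ m)
  have key : HasDerivAt (fun y => ∑' n : ℕ, a (n + 1) * y ^ (n + 1)) (Fsum (Dc a) x) x := by
    refine hasDerivAt_tsum_of_isPreconnected (t := Metric.ball (0 : ℝ) ρ) (y₀ := 0)
      (g := fun n y => a (n + 1) * y ^ (n + 1)) (g' := fun n y => Dc a n * y ^ n)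
      hs Metric.isOpen_ball
      (convex_ball (0 : ℝ) ρ).isPreconnected ?_ ?_ ?_ ?_ ?_
    · intro n y _
      have := (hasDerivAt_pow (n + 1) y).const_mul (a (n + 1))
      refine this.congr_deriv ?_
      show _ = ((n : ℝ) + 1) * a (n + 1) * y ^ n
      push_cast
      ring
    · intro n y hy
      rw [mem_ball_zero_iff, Real.norm_eq_abs] at hy
      exact term_bound hD hy.le n
    · simpa using h0
    · simp
    · simpa using h1
  have key2 := key.const_add (a 0)
  refine key2.congr_of_eventuallyEq ?_
  have hb : Metric.ball (0 : ℝ) ρ ∈ nhds x :=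
    Metric.isOpen_ball.mem_nhds (by simpa using h1)
  filter_upwards [hb] with y hy
  rw [mem_ball_zero_iff, Real.norm_eq_abs] at hy
  have hsy : Summable fun n => a n * y ^ n :=
    Summable.of_norm_bounded ((summ_aux m h0 h2).mul_left C) (term_bound h hy.le)
  unfold Fsum
  rw [hsy.tsum_eq_zero_add]
  simp

lemma iter_PB {C : ℝ} (hC : 0 ≤ C) (j : ℕ) : ∃ C' : ℝ, 0 ≤ C' ∧ ∃ m : ℕ,
    ∀ a, PB C 0 a → PB C' m (Dc^[j] a) := by
  induction j with
  | zero => exact ⟨C, hC, 0, fun a h => h⟩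
  | succ j ih =>
    obtain ⟨C', h0, m, h⟩ := ih
    refine ⟨C' * 2 ^ m, by positivity, m + 1, fun a ha => ?_⟩
    rw [Function.iterate_succ_apply']
    exact PB.Dc h0 (h a ha)

lemma iter_deriv {C : ℝ} (hC : 0 ≤ C) {a : ℕ → ℝ} (ha : PB C 0 a) (j : ℕ) :
    ∀ x : ℝ, |x| < 1 → iteratedDeriv j (Fsum a) x = Fsum (Dc^[j] a) x := by
  induction j with
  | zero => intro x _; simp
  | succ j ih =>
    intro x hx
    obtain ⟨C', h0, m, h⟩ := iter_PB hC j
    rw [iteratedDeriv_succ, Function.iterate_succ_apply',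
      ← (hasDeriv_Fsum h0 (h a ha) hx).deriv]
    apply Filter.EventuallyEq.deriv_eq
    have : {y : ℝ | |y| < 1} ∈ nhds x := (isOpen_lt continuous_abs continuous_const).mem_nhds hx
    filter_upwards [this] with y hy using ih y hy

lemma memF_PB {α : ℝ} (hα : 0 < α) {a : ℕ → ℝ} (h : memF α a) : PB (α + 1) 0 a := by
  intro n
  rcases Nat.eq_zero_or_pos n with rfl | hn
  · rw [h.1]; simp; linarith
  · have := h.2 n hn
    simp; linarith

lemma continuous_Dc : Continuous Dc := by
  unfold Dc
  fun_prop

lemma memF_compact (α : ℝ) : IsCompact {a | memF α a} := by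
  have : {a | memF α a} = Set.pi Set.univ
      (fun n : ℕ => if n = 0 then ({1} : Set ℝ) else Set.Icc (-α) α) := by
    ext a
    simp only [Set.mem_ofPred_eq, Set.mem_pi, Set.mem_univ, true_imp_iff, memF]
    constructor
    · rintro ⟨h0, h⟩ n
      rcases Nat.eq_zero_or_pos n with rfl | hn
      · simpa using h0
      · rw [if_neg hn.ne']
        exact abs_le.1 (h n hn)
    · intro h
      refine ⟨by simpa using h 0, fun n hn => ?_⟩
      have := h n
      rw [if_neg (by omega)] at this
      exact abs_le.2 this
  rw [this]
  refine isCompact_univ_pi fun n => ?_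
  split_ifs
  · exact isCompact_singleton
  · exact isCompact_Icc

lemma cont_aux {α : ℝ} (hα : 0 < α) (j : ℕ) {ρ : ℝ} (h0 : 0 < ρ) (h1 : ρ < 1) :
    ContinuousOn (fun q : (ℕ → ℝ) × ℝ => Fsum (Dc^[j] q.1) q.2)
      ({a | memF α a} ×ˢ Set.Icc 0 ρ) := by
  obtain ⟨C', hC', m, h⟩ := iter_PB (C := α + 1) (by linarith) j
  unfold Fsum
  refine continuousOn_tsum (u := fun n : ℕ => C' * (((n : ℝ) + 1) ^ m * ρ ^ n)) ?_
    ((summ_aux m h0 h1).mul_left C') ?_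
  · intro n
    have hc : Continuous (fun q : (ℕ → ℝ) × ℝ => (Dc^[j] q.1) n) :=
      (continuous_apply n).comp ((continuous_Dc.iterate j).comp continuous_fst)
    exact (hc.mul (continuous_snd.pow n)).continuousOn
  · rintro n ⟨a, x⟩ ⟨ha, hx⟩
    exact term_bound (h a (memF_PB hα ha)) (by
      rw [abs_of_nonneg hx.1]; exact hx.2) n

/-- `(δ,k)`-transversality: for every `k ≥ 1` and `τ > 0` there is `δ ∈ (0,1)` such that
for every `p ∈ F_α` and `x ∈ [0, r_α(k) - τ]`, if `|p(x)| < δ` then some derivative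
`p⁽ʲ⁾(x)`, `1 ≤ j ≤ k`, satisfies `|p⁽ʲ⁾(x)| ≥ δ`. -/
theorem delta_k_transversality (α : ℝ) (hα : 0 < α) (k : ℕ) (hk : 1 ≤ k)
    (τ : ℝ) (hτ : 0 < τ) :
    ∃ δ : ℝ, δ ∈ Set.Ioo (0 : ℝ) 1 ∧ ∀ a : ℕ → ℝ, memF α a →
      ∀ x ∈ Set.Icc (0 : ℝ) (rAlpha α k - τ), |Fsum a x| < δ →
        ∃ j : ℕ, 1 ≤ j ∧ j ≤ k ∧ δ ≤ |iteratedDeriv j (Fsum a) x| := by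
  set S : Set ℝ := {x : ℝ | 0 < x ∧ x < 1 ∧
    ∃ a : ℕ → ℝ, memF α a ∧ ∀ j : ℕ, j ≤ k → iteratedDeriv j (Fsum a) x = 0} with hS
  have hR : rAlpha α k = sInf S := rfl
  have hbd : BddBelow S := ⟨0, fun x hx => hx.1.le⟩
  have hR1 : rAlpha α k < 1 := by
    rw [hR]
    rcases S.eq_empty_or_nonempty with he | ⟨y, hy⟩
    · rw [he, Real.sInf_empty]; exact one_pos
    · exact (csInf_le hbd hy).trans_lt hy.2.1
  set ρ : ℝ := rAlpha α k - τ with hρ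
  by_cases h0 : 0 < ρ
  swap
  · -- the interval contains at most the point zero, where the value is one
    refine ⟨1 / 2, by norm_num, fun a ha x hx hlt => ?_⟩
    have hx0 : x = 0 := le_antisymm (hx.2.trans (not_lt.1 h0)) hx.1
    exfalso
    have : Fsum a x = 1 := by
      rw [hx0]; unfold Fsum
      rw [tsum_eq_single 0 (by intro n hn; simp [hn])]
      simp [ha.1]
    rw [this] at hlt
    norm_num at hlt
  have h1 : ρ < 1 := by linarith
  let g : (ℕ → ℝ) × ℝ → ℝ := fun q => ∑ j ∈ Finset.range (k + 1), |Fsum (Dc^[j] q.1) q.2|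
  have hg : ContinuousOn g ({a | memF α a} ×ˢ Set.Icc 0 ρ) :=
    continuousOn_finsetSum _ fun j _ => (cont_aux hα j h0 h1).abs
  have hK : IsCompact ({a | memF α a} ×ˢ Set.Icc 0 ρ) := (memF_compact α).prod isCompact_Icc
  have hne : ({a | memF α a} ×ˢ Set.Icc 0 ρ).Nonempty := by
    refine ⟨(fun n => if n = 0 then 1 else 0, 0), ⟨by simp, fun n hn => ?_⟩, le_rfl, h0.le⟩
    have hn0 : n ≠ 0 := by omega
    simpa [hn0] using hα.le
  obtain ⟨⟨b, y⟩, ⟨hb, hy⟩, hmin⟩ := hK.exists_isMinOn hne hg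
  replace hb : memF α b := hb
  replace hy : y ∈ Set.Icc (0 : ℝ) ρ := hy
  have hder : ∀ a, memF α a → ∀ x ∈ Set.Icc (0 : ℝ) ρ, ∀ j,
      iteratedDeriv j (Fsum a) x = Fsum (Dc^[j] a) x := fun a ha x hx j =>
    iter_deriv (C := α + 1) (by linarith) (memF_PB hα ha) j x (by
      rw [abs_of_nonneg hx.1]; exact hx.2.trans_lt h1)
  have hpos : 0 < g (b, y) := by
    have hnn : 0 ≤ g (b, y) := Finset.sum_nonneg fun j _ => abs_nonneg _
    refine lt_of_le_of_ne hnn fun he => ?_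
    have hz := (Finset.sum_eq_zero_iff_of_nonneg (fun j _ => abs_nonneg _)).1 he.symm
    have hz' : ∀ j : ℕ, j ≤ k → iteratedDeriv j (Fsum b) y = 0 := fun j hj => by
      rw [hder b hb y hy]
      exact abs_eq_zero.1 (hz j (Finset.mem_range.2 (by omega)))
    have hy0 : 0 < y := by
      refine lt_of_le_of_ne hy.1 fun hy0 => ?_
      have := hz' 0 (Nat.zero_le _)
      rw [iteratedDeriv_zero, ← hy0] at this
      unfold Fsum at this
      rw [tsum_eq_single 0 (by intro n hn; simp [hn])] at this
      simp [hb.1] at this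
    have hyS : y ∈ S := ⟨hy0, hy.2.trans_lt h1, b, hb, hz'⟩
    have := csInf_le hbd hyS
    have := hy.2
    linarith
  have hk0 : (0 : ℝ) < (k : ℝ) + 1 := by positivity
  refine ⟨min (g (b, y) / (k + 1)) (1 / 2), ⟨lt_min (by positivity) (by norm_num),
    (min_le_right _ _).trans_lt (by norm_num)⟩, fun a ha x hx hlt => ?_⟩
  by_contra! hcon
  have hle : g (b, y) ≤ g (a, x) := hmin (show (a, x) ∈ _ from ⟨ha, hx⟩)
  have hlt2 : g (a, x) < ∑ j ∈ Finset.range (k + 1), g (b, y) / (k + 1) := by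
    refine Finset.sum_lt_sum_of_nonempty ⟨0, by simp⟩ fun j hj => ?_
    refine lt_of_lt_of_le ?_ (min_le_left _ (1 / 2))
    rcases Nat.eq_zero_or_pos j with rfl | hj0
    · simpa using hlt
    · rw [← hder a ha x hx]
      exact hcon j hj0 (by have := Finset.mem_range.1 hj; omega)
  rw [Finset.sum_const, Finset.card_range, nsmul_eq_mul] at hlt2
  push_cast at hlt2
  rw [mul_div_cancel₀ _ hk0.ne'] at hlt2
  linarith
end
end

section
/- Let d ≥ 1 be an integer, 0 < δ < 1, ε > 0, and let I = [a,b] ⊂ [0,1] with a < b. If p is a real polynomial of degree n ≥ d such that for every x ∈ I with |p(x)| < ε one has max_{1 ≤ j ≤ d} |p^{(j)}(x)| ≥ δ, then Leb{x ∈ I : |p(x)| < ε} ≤ C' · ε^{1/d}, where C' := (2/(b−a))^{2d−1} · (2^{d+3}/δ²) · (4 n^{2(d+1)} · max_{x∈I} |p(x)| + 1). -/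
open MeasureTheory Set Filter

noncomputable section

open Polynomial in
/-- Sublevel set estimate. -/
lemma aux_sublevel (j : ℕ) : ∀ (q : Polynomial ℝ) (J : Set ℝ) (δ t : ℝ), J.OrdConnected → 0 < δ →
    0 < t → (∀ x ∈ J, δ ≤ (derivative^[j] q).eval x) →
    volume {x ∈ J | |q.eval x| < δ * t ^ j} ≤ ENNReal.ofReal ((2 ^ (j + 1) - 2) * t) := by
  induction j with
  | zero =>
    intro q J δ t hJ hδ ht h
    have : {x ∈ J | |q.eval x| < δ * t ^ 0} = ∅ := by
      ext x
      simp only [mem_ofPred_eq, mem_empty_iff_false, iff_false, not_and, not_lt]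
      intro hx
      have := h x hx
      simp at this
      simpa using this.trans (le_abs_self _)
    rw [this]; simp
  | succ j ih =>
    intro q J δ t hJ hδ ht h
    set g := derivative^[j] q with hg
    have hmv : ∀ x ∈ J, ∀ y ∈ J, x ≤ y → δ * (y - x) ≤ g.eval y - g.eval x := by
      intro x hx y hy hxy
      refine Convex.mul_sub_le_image_sub_of_le_deriv (f := fun x => g.eval x) hJ.convex
        g.continuous.continuousOn g.differentiable.differentiableOn ?_ x hx y hy hxy
      intro z hz
      have := h z (interior_subset hz)
      rw [Function.iterate_succ_apply'] at this
      rw [Polynomial.deriv]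
      exact this
    have hmono : ∀ x ∈ J, ∀ y ∈ J, x ≤ y → g.eval x ≤ g.eval y := by
      intro x hx y hy hxy
      have := hmv x hx y hy hxy
      have : 0 ≤ δ * (y - x) := mul_nonneg hδ.le (by linarith)
      linarith
    set A := {x ∈ J | |g.eval x| < δ * t}
    set P := {x ∈ J | δ * t ≤ g.eval x}
    set N := {x ∈ J | g.eval x ≤ - (δ * t)}
    have hP : P.OrdConnected := by
      refine ⟨fun x hx y hy z hz => ?_⟩
      have hzJ := hJ.out hx.1 hy.1 hz
      exact ⟨hzJ, hx.2.trans (hmono x hx.1 z hzJ hz.1)⟩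
    have hN : N.OrdConnected := by
      refine ⟨fun x hx y hy z hz => ?_⟩
      have hzJ := hJ.out hx.1 hy.1 hz
      exact ⟨hzJ, (hmono z hzJ y hy.1 hz.2).trans hy.2⟩
    have hA : volume A ≤ ENNReal.ofReal (2 * t) := by
      refine (Real.volume_le_diam A).trans (Metric.ediam_le ?_)
      intro x hx y hy
      rw [edist_dist]
      apply ENNReal.ofReal_le_ofReal
      have key : ∀ x ∈ A, ∀ y ∈ A, x ≤ y → y - x ≤ 2 * t := by
        intro x hx y hy hxy
        have h1 := hmv x hx.1 y hy.1 hxy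
        have h2 := abs_lt.1 hx.2
        have h3 := abs_lt.1 hy.2
        have : δ * (y - x) ≤ δ * (2 * t) := by linarith [h2.1, h3.2]
        exact le_of_mul_le_mul_left this hδ
      rw [Real.dist_eq]
      rcases le_total x y with hxy | hxy
      · rw [abs_sub_comm, abs_of_nonneg (by linarith)]; exact key x hx y hy hxy
      · rw [abs_of_nonneg (by linarith)]; exact key y hy x hx hxy
    have hδt : 0 < δ * t := mul_pos hδ ht
    have h1 := ih q P (δ * t) t hP hδt ht (fun x hx => hx.2)
    have h2 := ih (-q) N (δ * t) t hN hδt ht (fun x hx => by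
      rw [iterate_derivative_neg, eval_neg]; linarith [hx.2])
    have hsub : {x ∈ J | |q.eval x| < δ * t ^ (j + 1)} ⊆
        (A ∪ {x ∈ P | |q.eval x| < δ * t * t ^ j}) ∪ {x ∈ N | |(-q).eval x| < δ * t * t ^ j} := by
      intro x hx
      have hx2 : |q.eval x| < δ * t * t ^ j := by
        have := hx.2; rw [pow_succ] at this; linarith
      by_cases hA' : |g.eval x| < δ * t
      · exact Or.inl (Or.inl ⟨hx.1, hA'⟩)
      · rcases le_abs.1 (not_lt.1 hA') with h' | h'
        · exact Or.inl (Or.inr ⟨⟨hx.1, h'⟩, hx2⟩)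
        · refine Or.inr ⟨⟨hx.1, by linarith⟩, ?_⟩
          rw [eval_neg, abs_neg]; exact hx2
    have hc : (0:ℝ) ≤ (2 ^ (j + 1) - 2) * t := by
      have : (1:ℝ) ≤ 2 ^ j := one_le_pow₀ (by norm_num)
      apply mul_nonneg _ ht.le
      rw [pow_succ]; linarith
    calc _ ≤ _ := measure_mono hsub
      _ ≤ _ := measure_union_le _ _
      _ ≤ _ := add_le_add (measure_union_le _ _) le_rfl
      _ ≤ ENNReal.ofReal (2 * t) + ENNReal.ofReal ((2 ^ (j + 1) - 2) * t)
          + ENNReal.ofReal ((2 ^ (j + 1) - 2) * t) := add_le_add (add_le_add hA h1) h2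
      _ = _ := by
        rw [← ENNReal.ofReal_add (by positivity) hc, ← ENNReal.ofReal_add (by positivity) hc]
        congr 1
        ring

lemma aux_partition (F : Finset ℝ) (S : Set ℝ) (B : ENNReal)
    (h : ∀ u v : ℝ, (∀ z ∈ F, z ∉ Ioo u v) → volume (S ∩ Ioo u v) ≤ B) (k : ℕ) :
    ∀ u v : ℝ, (F.filter (fun z => z ∈ Ioo u v)).card = k →
      volume (S ∩ Ioo u v) ≤ (k + 1 : ℕ) * B := by
  induction k using Nat.strong_induction_on with
  | _ k ih =>
    intro u v hk
    by_cases hex : ∃ c ∈ F, c ∈ Ioo u v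
    · obtain ⟨c, hcF, hc⟩ := hex
      set F1 := F.filter (fun z => z ∈ Ioo u c) with hF1
      set F2 := F.filter (fun z => z ∈ Ioo c v) with hF2
      have hdisj : Disjoint F1 F2 := by
        rw [Finset.disjoint_left]
        intro z h1 h2
        simp only [hF1, hF2, Finset.mem_filter, mem_Ioo] at h1 h2
        linarith [h1.2.2, h2.2.1]
      have hcn : c ∉ F1 ∪ F2 := by
        simp [hF1, hF2]
      have hsub : insert c (F1 ∪ F2) ⊆ F.filter (fun z => z ∈ Ioo u v) := by
        intro z hz
        simp only [hF1, hF2, Finset.mem_insert, Finset.mem_union, Finset.mem_filter, mem_Ioo] at hz ⊢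
        simp only [mem_Ioo] at hc
        rcases hz with rfl | hz | hz
        · exact ⟨hcF, hc⟩
        · exact ⟨hz.1, hz.2.1, hz.2.2.trans hc.2⟩
        · exact ⟨hz.1, hc.1.trans hz.2.1, hz.2.2⟩
      have hcard := Finset.card_le_card hsub
      rw [Finset.card_insert_of_notMem hcn, Finset.card_union_of_disjoint hdisj, hk] at hcard
      have h1 := ih F1.card (by omega) u c rfl
      have h2 := ih F2.card (by omega) c v rfl
      have hs : S ∩ Ioo u v ⊆ ((S ∩ Ioo u c) ∪ (S ∩ Ioo c v)) ∪ {c} := by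
        intro z hz
        rcases lt_trichotomy z c with h' | h' | h'
        · exact Or.inl (Or.inl ⟨hz.1, hz.2.1, h'⟩)
        · exact Or.inr h'
        · exact Or.inl (Or.inr ⟨hz.1, h', hz.2.2⟩)
      calc _ ≤ _ := measure_mono hs
        _ ≤ _ := measure_union_le _ _
        _ ≤ _ := add_le_add (measure_union_le _ _) le_rfl
        _ ≤ (F1.card + 1 : ℕ) * B + (F2.card + 1 : ℕ) * B + 0 :=
          add_le_add (add_le_add h1 h2) (by simp)
        _ = ((F1.card + 1 + (F2.card + 1) : ℕ)) * B := by push_cast; ring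
        _ ≤ _ := by
          refine mul_le_mul_left ?_ B
          exact Nat.cast_le.2 (by omega)
    · push Not at hex
      refine (h u v hex).trans ?_
      push_cast
      rw [add_mul, one_mul]
      exact le_add_self

open Polynomial in
lemma aux_T (n k : ℕ) : (derivative^[k] (Chebyshev.T ℝ n)).eval 1 ≤ (n : ℝ) ^ (2 * k) := by
  induction k with
  | zero => simp
  | succ k ih =>
    have h := Chebyshev.iterate_derivative_T_eval_one_recurrence (R := ℝ) n k
    have h0 : 0 ≤ (derivative^[k] (Chebyshev.T ℝ n)).eval 1 :=
      (abs_nonneg _).trans (Chebyshev.abs_iterate_derivative_T_real_le n k (x := 1) (by simp))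
    have h1 : 0 ≤ (derivative^[k+1] (Chebyshev.T ℝ n)).eval 1 :=
      (abs_nonneg _).trans (Chebyshev.abs_iterate_derivative_T_real_le n (k+1) (x := 1) (by simp))
    push_cast at h
    have hk : (0:ℝ) ≤ k := by positivity
    calc _ ≤ (n:ℝ)^2 * (derivative^[k] (Chebyshev.T ℝ n)).eval 1 := by
          nlinarith [mul_nonneg hk h1, mul_nonneg (sq_nonneg (k:ℝ)) h0]
      _ ≤ (n:ℝ)^2 * (n : ℝ) ^ (2 * k) := by gcongr
      _ = _ := by ring

open Polynomial in
lemma aux_comp (p : Polynomial ℝ) (c e : ℝ) (k : ℕ) :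
    derivative^[k] (p.comp (C c * X + C e)) =
      C (c ^ k) * (derivative^[k] p).comp (C c * X + C e) := by
  induction k with
  | zero => simp
  | succ k ih =>
    rw [Function.iterate_succ_apply', ih, Function.iterate_succ_apply', derivative_C_mul,
      derivative_comp]
    simp [pow_succ]
    ring

open Polynomial in
lemma aux_markov_pt (p : Polynomial ℝ) (n k : ℕ) (hdeg : p.natDegree ≤ n) (x h M : ℝ) (hM : 0 < M)
    (hb : ∀ y ∈ Icc (-1 : ℝ) 1, |p.eval (x + h * (y - 1))| ≤ M) :
    |h| ^ k * |(derivative^[k] p).eval x| ≤ (n : ℝ) ^ (2 * k) * M := by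
  have main : ∀ s : ℝ, |s| = 1 →
      s * (h ^ k * (derivative^[k] p).eval x) ≤ (n : ℝ) ^ (2 * k) * M := by
    intro s hs
    set P := C (s / M) * p.comp (C h * X + C (x - h)) with hP
    have hPd : P.degree ≤ n := by
      apply degree_le_of_natDegree_le
      refine (natDegree_C_mul_le _ _).trans (natDegree_comp_le.trans ?_)
      calc p.natDegree * _ ≤ n * 1 := by
            gcongr
            exact natDegree_linear_le
        _ = n := mul_one n
    have hPe : ∀ y, P.eval y = s / M * p.eval (x + h * (y - 1)) := by
      intro y
      simp only [hP, eval_mul, eval_C, eval_comp, eval_add, eval_X]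
      congr 2; ring
    have hPb : ∀ y ∈ Icc (-1 : ℝ) 1, |P.eval y| ≤ 1 := by
      intro y hy
      rw [hPe, abs_mul, abs_div, hs, abs_of_pos hM, one_div_mul_eq_div, div_le_one hM]
      exact hb y hy
    have h1 := (Chebyshev.eval_iterate_derivative_le_of_forall_abs_le_one (k := k) (x := 1) le_rfl
      hPd hPb).trans (aux_T n k)
    rw [hP, iterate_derivative_C_mul, aux_comp] at h1
    simp only [eval_mul, eval_C, eval_comp, eval_add, eval_X] at h1
    rw [show h * 1 + (x - h) = x by ring, div_mul_eq_mul_div, div_le_iff₀ hM] at h1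
    exact h1
  rw [← abs_pow, ← abs_mul]
  rw [abs_le']
  constructor
  · simpa using main 1 (by simp)
  · simpa using main (-1) (by simp)

open Polynomial in
lemma aux_markov (p : Polynomial ℝ) (n k : ℕ) (hdeg : p.natDegree ≤ n) (a b M : ℝ) (hM : 0 < M)
    (hab : a < b) (hb : ∀ y ∈ Icc a b, |p.eval y| ≤ M) (x : ℝ) (hx : x ∈ Icc a b) :
    ((b - a) / 4) ^ k * |(derivative^[k] p).eval x| ≤ (n : ℝ) ^ (2 * k) * M := by
  obtain ⟨hx1, hx2⟩ := hx
  rcases le_total ((a + b) / 2) x with h | h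
  · have := aux_markov_pt p n k hdeg x ((b - a) / 4) M hM (by
      rintro y ⟨hy1, hy2⟩
      apply hb
      constructor <;> nlinarith)
    rwa [abs_of_pos (by linarith)] at this
  · have := aux_markov_pt p n k hdeg x (-((b - a) / 4)) M hM (by
      rintro y ⟨hy1, hy2⟩
      apply hb
      constructor <;> nlinarith)
    rwa [abs_neg, abs_of_pos (by linarith)] at this

lemma aux_sign (r : Polynomial ℝ) (u v : ℝ) (h : ∀ z ∈ r.roots.toFinset, z ∉ Ioo u v)
    (x : ℝ) (hx : x ∈ Ioo u v) (hr : 0 ≤ r.eval x) : ∀ y ∈ Ioo u v, 0 ≤ r.eval y := by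
  intro y hy
  by_cases h0 : r = 0
  · simp [h0]
  by_contra hneg
  push Not at hneg
  have := (isPreconnected_Ioo (a := u) (b := v)).intermediate_value hy hx
    r.continuous.continuousOn (show (0:ℝ) ∈ Icc (r.eval y) (r.eval x) from ⟨hneg.le, hr⟩)
  obtain ⟨z, hz, hz0⟩ := this
  exact h z (by simp [h0, hz0]) hz

lemma aux_iter (p : Polynomial ℝ) (j : ℕ) (x : ℝ) :
    iteratedDeriv j (fun y : ℝ => Polynomial.eval y p) x
      = (Polynomial.derivative^[j] p).eval x := by
  induction j generalizing x with
  | zero => simp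
  | succ j ih =>
    rw [iteratedDeriv_succ, funext ih, Function.iterate_succ_apply', Polynomial.deriv]

lemma aux_final (d n : ℕ) (hd : 1 ≤ d) (hnd : d ≤ n) (δ L M s : ℝ) (hδ : 0 < δ) (hL : 0 < L)
    (hL1 : L ≤ 1) (hs : 0 ≤ s) (hM : (L / 4) ^ d * δ ≤ (n : ℝ) ^ (2 * d) * M) :
    (2 * n * d + 1) * (2 ^ (d + 1) * (s / δ)) ≤ (2 / L) ^ (2 * d - 1) * (2 ^ (d + 3) / δ ^ 2) *
          (4 * (n : ℝ) ^ (2 * (d + 1)) * M + 1) * s := by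
  obtain ⟨e, rfl⟩ : ∃ e, d = e + 1 := ⟨d - 1, by omega⟩
  have hn1 : (1:ℝ) ≤ n := by exact_mod_cast (hd.trans hnd)
  have hdn : ((e + 1 : ℕ):ℝ) ≤ n := by exact_mod_cast hnd
  have h2L : (2:ℝ) ≤ 2 / L := by rw [le_div_iff₀ hL]; linarith
  have h1 : (2:ℝ) * n * ((e + 1 : ℕ):ℝ) + 1 ≤ 8 * n ^ 2 := by nlinarith
  have h2 : (2:ℝ) ^ e ≤ (2 / L) ^ e := by gcongr
  have h3 : (2 / L) ^ (e + 1) * (L / 4) ^ (e + 1) = (1 / 2) ^ (e + 1) := by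
    rw [← mul_pow]; congr 1; field_simp; norm_num
  calc (2 * n * ((e + 1 : ℕ):ℝ) + 1) * (2 ^ (e + 1 + 1) * (s / δ))
      ≤ (8 * n ^ 2) * (2 ^ (e + 1 + 1) * (s / δ)) := by gcongr
    _ = 2 ^ e * (2 ^ (e + 1) * (1 / 2) ^ (e + 1)) * 32 * n ^ 2 * (s / δ) := by
        rw [← mul_pow]; norm_num; ring
    _ ≤ (2 / L) ^ e * (2 ^ (e + 1) * (1 / 2) ^ (e + 1)) * 32 * n ^ 2 * (s / δ) := by gcongr
    _ = (2 / L) ^ (2 * e + 1) * (2 ^ (e + 1 + 3) / δ ^ 2) *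
          (4 * n ^ 2 * ((L / 4) ^ (e + 1) * δ)) * s := by
        rw [← h3]; field_simp; ring
    _ ≤ (2 / L) ^ (2 * e + 1) * (2 ^ (e + 1 + 3) / δ ^ 2) *
          (4 * n ^ 2 * ((n : ℝ) ^ (2 * (e + 1)) * M)) * s := by gcongr
    _ = (2 / L) ^ (2 * e + 1) * (2 ^ (e + 1 + 3) / δ ^ 2) *
          (4 * (n : ℝ) ^ (2 * (e + 1 + 1)) * M) * s := by ring
    _ ≤ (2 / L) ^ (2 * e + 1) * (2 ^ (e + 1 + 3) / δ ^ 2) *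
          (4 * (n : ℝ) ^ (2 * (e + 1 + 1)) * M + 1) * s := by
        gcongr; linarith

/-- Łojasiewicz-type inequality on a subinterval `I = [a,b] ⊆ [0,1]`: under the same
transversality hypothesis on `I`, `Leb {x ∈ I : |p(x)| < ε} ≤ C' ε^(1/d)` with
`C' = (2/(b-a))^(2d-1) (2^(d+3)/δ²)(4 n^(2(d+1)) max_I |p| + 1)`. -/
theorem lojasiewicz_polynomial_interval (d n : ℕ) (hd : 1 ≤ d) (δ ε : ℝ)
    (hδ0 : 0 < δ) (hδ1 : δ < 1) (hε : 0 < ε) (a b : ℝ)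
    (ha : 0 ≤ a) (hab : a < b) (hb : b ≤ 1)
    (p : Polynomial ℝ) (hdeg : p.natDegree = n) (hnd : d ≤ n)
    (hyp : ∀ x ∈ Set.Icc a b, |Polynomial.eval x p| < ε →
      ∃ j : ℕ, 1 ≤ j ∧ j ≤ d ∧
        δ ≤ |iteratedDeriv j (fun y : ℝ => Polynomial.eval y p) x|) :
    volume {x ∈ Set.Icc a b | |Polynomial.eval x p| < ε} ≤
      ENNReal.ofReal ((2 / (b - a)) ^ (2 * d - 1) * (2 ^ (d + 3) / δ ^ 2) *
          (4 * (n : ℝ) ^ (2 * (d + 1)) *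
              sSup ((fun x : ℝ => |Polynomial.eval x p|) '' Set.Icc a b) + 1) *
        ε ^ ((d : ℝ)⁻¹)) := by
  classical
  set M := sSup ((fun x : ℝ => |Polynomial.eval x p|) '' Set.Icc a b) with hMdef
  have hbdd : BddAbove ((fun x : ℝ => |Polynomial.eval x p|) '' Set.Icc a b) :=
    (isCompact_Icc.image (by fun_prop)).bddAbove
  have hMle : ∀ y ∈ Icc a b, |p.eval y| ≤ M := fun y hy => le_csSup hbdd ⟨y, hy, rfl⟩
  have hp0 : p ≠ 0 := by
    rintro rfl
    simp at hdeg
    omega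
  have hM0 : 0 ≤ M := (abs_nonneg _).trans (hMle a ⟨le_rfl, hab.le⟩)
  have hM : 0 < M := by
    rcases hM0.lt_or_eq with h | h
    · exact h
    exfalso
    apply hp0
    apply Polynomial.eq_zero_of_infinite_isRoot
    refine (Icc_infinite hab).mono ?_
    intro y hy
    have := hMle y hy
    rw [← h] at this
    exact abs_eq_zero.1 (le_antisymm this (abs_nonneg _))
  have hn1 : (1:ℝ) ≤ n := by exact_mod_cast (hd.trans hnd)
  have hL : 0 < b - a := by linarith
  have hL1 : b - a ≤ 1 := by linarith
  set s : ℝ := ε ^ ((d : ℝ)⁻¹) with hs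
  have hs0 : 0 < s := Real.rpow_pos_of_pos hε _
  set S := {x ∈ Set.Icc a b | |Polynomial.eval x p| < ε} with hS
  rcases le_or_gt 1 ε with hε1 | hε1
  · calc volume S ≤ volume (Icc a b) := measure_mono (fun x hx => hx.1)
      _ = ENNReal.ofReal (b - a) := Real.volume_Icc
      _ ≤ _ := by
        apply ENNReal.ofReal_le_ofReal
        have h1 : (1:ℝ) ≤ (2 / (b - a)) ^ (2 * d - 1) :=
          one_le_pow₀ (by rw [le_div_iff₀ hL]; linarith)
        have h2 : (1:ℝ) ≤ 2 ^ (d + 3) / δ ^ 2 := by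
          rw [le_div_iff₀ (by positivity)]
          have : (1:ℝ) ≤ 2 ^ (d + 3) := one_le_pow₀ (by norm_num)
          nlinarith
        have h3 : (1:ℝ) ≤ 4 * (n : ℝ) ^ (2 * (d + 1)) * M + 1 := by
          have : 0 ≤ 4 * (n : ℝ) ^ (2 * (d + 1)) * M := by positivity
          linarith
        have h4 : 1 ≤ s := Real.one_le_rpow hε1 (by positivity)
        exact hL1.trans (one_le_mul_of_one_le_of_one_le (one_le_mul_of_one_le_of_one_le
          (one_le_mul_of_one_le_of_one_le h1 h2) h3) h4)
  rcases S.eq_empty_or_nonempty with hSe | ⟨x0, hx0⟩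
  · rw [hSe]; simp
  have hMδ : ((b - a) / 4) ^ d * δ ≤ (n : ℝ) ^ (2 * d) * M := by
    obtain ⟨j, hj1, hjd, hj⟩ := hyp x0 hx0.1 hx0.2
    rw [aux_iter] at hj
    have h1 := aux_markov p n j hdeg.le a b M hM hab hMle x0 hx0.1
    calc ((b - a) / 4) ^ d * δ ≤ ((b - a) / 4) ^ j * δ := by
          gcongr ?_ * δ
          exact pow_le_pow_of_le_one (by linarith) (by linarith) hjd
      _ ≤ _ := mul_le_mul_of_nonneg_left hj (by positivity)
      _ ≤ _ := h1
      _ ≤ _ := by gcongr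
  set F : Finset ℝ := (Finset.Icc 1 d).biUnion (fun j =>
    (Polynomial.derivative^[j] p - Polynomial.C δ).roots.toFinset ∪
    (Polynomial.derivative^[j] (-p) - Polynomial.C δ).roots.toFinset) with hF
  have hcard1 : ∀ (q : Polynomial ℝ) (j : ℕ), q.natDegree = n →
      (Polynomial.derivative^[j] q - Polynomial.C δ).roots.toFinset.card ≤ n := by
    intro q j hq
    refine (Multiset.toFinset_card_le _).trans ((Polynomial.card_roots' _).trans ?_)
    rw [Polynomial.natDegree_sub_C]
    exact (Polynomial.natDegree_iterate_derivative q j).trans (by omega)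
  have hFcard : F.card ≤ 2 * n * d := by
    refine (Finset.card_biUnion_le_card_mul _ _ (2 * n) ?_).trans ?_
    · intro j hj
      refine (Finset.card_union_le _ _).trans ?_
      have h1 := hcard1 p j hdeg
      have h2 := hcard1 (-p) j (by rw [Polynomial.natDegree_neg, hdeg])
      omega
    · simp [mul_comm]
  have hpiece : ∀ (q : Polynomial ℝ) (j : ℕ), 1 ≤ j → j ≤ d → ∀ u v : ℝ,
      (∀ x ∈ Ioo u v, δ ≤ (Polynomial.derivative^[j] q).eval x) →
      volume {x ∈ Ioo u v | |q.eval x| < ε} ≤ ENNReal.ofReal (2 ^ (d + 1) * (s / δ)) := by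
    intro q j hj1 hjd u v h
    set t : ℝ := (ε / δ) ^ ((j : ℝ)⁻¹) with ht
    have ht0 : 0 < t := Real.rpow_pos_of_pos (by positivity) _
    have htj : δ * t ^ j = ε := by
      rw [ht, Real.rpow_inv_natCast_pow (by positivity) (by omega)]
      field_simp
    have h1 := aux_sublevel j q (Ioo u v) δ t ordConnected_Ioo hδ0 ht0 h
    rw [htj] at h1
    refine h1.trans (ENNReal.ofReal_le_ofReal ?_)
    have hj0 : (1:ℝ) ≤ j := by exact_mod_cast hj1
    have hjd' : (j:ℝ) ≤ d := by exact_mod_cast hjd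
    have hts : t ≤ s / δ := by
      rw [ht, Real.div_rpow hε.le hδ0.le]
      have e1 : ε ^ ((j : ℝ)⁻¹) ≤ s :=
        Real.rpow_le_rpow_of_exponent_ge hε hε1.le (by gcongr)
      have e2 : δ ≤ δ ^ ((j : ℝ)⁻¹) := by
        conv_lhs => rw [← Real.rpow_one δ]
        exact Real.rpow_le_rpow_of_exponent_ge hδ0 hδ1.le (inv_le_one_of_one_le₀ hj0)
      gcongr
    have h2 : (2:ℝ) ^ (j + 1) - 2 ≤ 2 ^ (d + 1) := by
      have : (2:ℝ) ^ (j + 1) ≤ 2 ^ (d + 1) := by gcongr; norm_num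
      linarith
    calc _ ≤ (2:ℝ) ^ (d + 1) * t := by gcongr
      _ ≤ _ := by gcongr
  have hpart : ∀ u v : ℝ, (∀ z ∈ F, z ∉ Ioo u v) →
      volume (S ∩ Ioo u v) ≤ ENNReal.ofReal (2 ^ (d + 1) * (s / δ)) := by
    intro u v hF'
    rcases (S ∩ Ioo u v).eq_empty_or_nonempty with he | ⟨x, hxS, hx⟩
    · rw [he]; simp
    obtain ⟨j, hj1, hjd, hj⟩ := hyp x hxS.1 hxS.2
    rw [aux_iter] at hj
    rcases le_abs.1 hj with h | h
    · refine (measure_mono ?_).trans (hpiece p j hj1 hjd u v ?_)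
      · intro y hy
        exact ⟨hy.2, hy.1.2⟩
      · intro y hy
        have := aux_sign (Polynomial.derivative^[j] p - Polynomial.C δ) u v (fun z hz => hF' z (by
          rw [hF, Finset.mem_biUnion]
          exact ⟨j, Finset.mem_Icc.2 ⟨hj1, hjd⟩, Finset.mem_union_left _ hz⟩)) x hx
          (by simpa using h) y hy
        simpa using this
    · refine (measure_mono ?_).trans (hpiece (-p) j hj1 hjd u v ?_)
      · intro y hy
        refine ⟨hy.2, ?_⟩
        rw [Polynomial.eval_neg, abs_neg]
        exact hy.1.2
      · intro y hy
        have := aux_sign (Polynomial.derivative^[j] (-p) - Polynomial.C δ) u v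
          (fun z hz => hF' z (by
          rw [hF, Finset.mem_biUnion]
          exact ⟨j, Finset.mem_Icc.2 ⟨hj1, hjd⟩, Finset.mem_union_right _ hz⟩)) x hx
          (by rw [Polynomial.iterate_derivative_neg]; simpa using h) y hy
        rw [Polynomial.eval_sub, Polynomial.eval_C] at this
        linarith
  have hmain := aux_partition F S _ hpart _ (a - 1) (b + 1) rfl
  have hSeq : S ∩ Ioo (a - 1) (b + 1) = S := by
    apply inter_eq_left.2
    intro y hy
    exact ⟨by linarith [hy.1.1], by linarith [hy.1.2]⟩
  rw [hSeq] at hmain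
  refine hmain.trans ?_
  rw [← ENNReal.ofReal_natCast, ← ENNReal.ofReal_mul (by positivity)]
  apply ENNReal.ofReal_le_ofReal
  refine le_trans ?_ (aux_final d n hd hnd δ (b - a) M s hδ0 hL hL1 hs0.le hMδ)
  gcongr
  have := (Finset.card_filter_le F (fun z => z ∈ Ioo (a - 1) (b + 1))).trans hFcard
  push_cast
  have h' : ((F.filter (fun z => z ∈ Ioo (a - 1) (b + 1))).card : ℝ) ≤ ((2 * n * d : ℕ) : ℝ) := by
    exact_mod_cast this
  push_cast at h'
  linarith
end
end

section
/- Let α > 0 and let I = [a,b] with 0 ≤ a < b < 1. There exist an integer k ≥ 1 and δ ∈ (0,1) such that for every 0 < ε < δ and every polynomial p ∈ ⋃_{n≥0} F_α^{(n)} one has Leb{x ∈ I : |p(x)| < ε} ≤ C · ε^{1/k}, where C := 2^{3k+5} (1+α)^{2k} deg(p)^{2(k+1)} / (δ² (1 − r_α(k))). -/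
open MeasureTheory Set Filter

noncomputable section

lemma aux_schwarz (g : Polynomial ℂ) (T : Finset ℝ) (b R G : ℝ) (hR : 0 < R)
    (hT : ∀ x ∈ T, 0 ≤ x ∧ x ≤ b) (hg : ∀ x ∈ T, g.eval (x : ℂ) = 0)
    (hG : ∀ z : ℂ, ‖z‖ = R → ‖g.eval z‖ ≤ G) :
    ‖g.eval 0‖ * R ^ T.card ≤ b ^ T.card * G := by
  have hG0 : 0 ≤ G := (norm_nonneg _).trans (hG (R : ℂ) (by simp [abs_of_pos hR]))
  have hdvd : (∏ x ∈ T, (Polynomial.X - Polynomial.C (x : ℂ))) ∣ g := by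
    refine Finset.prod_dvd_of_coprime (fun x _ y _ h => ?_) fun x hx => ?_
    · exact Polynomial.isCoprime_X_sub_C_of_isUnit_sub
        (by rw [isUnit_iff_ne_zero, sub_ne_zero]; exact_mod_cast h)
    · exact Polynomial.dvd_iff_isRoot.2 (hg x hx)
  obtain ⟨h, rfl⟩ := hdvd
  set H : Polynomial ℂ := h * ∏ x ∈ T, (Polynomial.C ((R : ℂ)) - Polynomial.C ((x / R : ℝ) : ℂ) * Polynomial.X) with hH
  have key : ∀ z : ℂ, ‖z‖ = R → ∀ x : ℝ, ‖(R : ℂ) - ((x / R : ℝ) : ℂ) * z‖ = ‖z - x‖ := by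
    intro z hz x
    have h1 : ‖z‖ ^ 2 = R ^ 2 := by rw [hz]
    rw [← Complex.normSq_eq_norm_sq, Complex.normSq_apply] at h1
    have h2 : ‖(R : ℂ) - ((x / R : ℝ) : ℂ) * z‖ ^ 2 = ‖z - x‖ ^ 2 := by
      rw [← Complex.normSq_eq_norm_sq, ← Complex.normSq_eq_norm_sq, Complex.normSq_apply,
        Complex.normSq_apply]
      simp only [Complex.sub_re, Complex.sub_im, Complex.re_ofReal_mul, Complex.im_ofReal_mul,
        Complex.ofReal_re, Complex.ofReal_im]
      have e : (R - x / R * z.re) * (R - x / R * z.re) + (0 - x / R * z.im) * (0 - x / R * z.im)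
        = R ^ 2 - 2 * x * z.re + (x / R) ^ 2 * (z.re * z.re + z.im * z.im) := by
        field_simp; ring
      rw [e, h1]
      have : (x / R) ^ 2 * R ^ 2 = x ^ 2 := by field_simp
      rw [this]
      linarith
    exact (sq_eq_sq₀ (norm_nonneg _) (norm_nonneg _)).1 h2
  have hmax : ‖H.eval 0‖ ≤ G := by
    refine Complex.norm_le_of_forall_mem_frontier_norm_le (U := Metric.ball (0 : ℂ) R)
      (f := fun z => H.eval z) Metric.isBounded_ball (Polynomial.differentiable H).diffContOnCl ?_ ?_
    · intro z hz
      rw [frontier_ball _ hR.ne', mem_sphere_zero_iff_norm] at hz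
      refine le_trans (le_of_eq ?_) (hG z hz)
      rw [hH]
      simp only [Polynomial.eval_mul, Polynomial.eval_prod, Polynomial.eval_sub, Polynomial.eval_C,
        Polynomial.eval_X, norm_mul, norm_prod]
      rw [mul_comm]
      congr 1
      exact Finset.prod_congr rfl fun x _ => key z hz x
    · exact subset_closure (Metric.mem_ball_self hR)
  have e1 : ‖H.eval 0‖ = ‖h.eval 0‖ * R ^ T.card := by
    rw [hH]
    simp [Polynomial.eval_prod, abs_of_pos hR]
  rw [e1] at hmax
  have e2 : ∏ x ∈ T, ‖(0 : ℂ) - (x : ℂ)‖ ≤ b ^ T.card := by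
    rw [← Finset.prod_const]
    refine Finset.prod_le_prod (fun _ _ => norm_nonneg _) fun x hx => ?_
    rw [zero_sub, norm_neg, Complex.norm_real, Real.norm_eq_abs, abs_of_nonneg (hT x hx).1]
    exact (hT x hx).2
  simp only [Polynomial.eval_mul, Polynomial.eval_prod, Polynomial.eval_sub, Polynomial.eval_C,
        Polynomial.eval_X, norm_mul, norm_prod]
  calc _ = (∏ x ∈ T, ‖(0 : ℂ) - (x : ℂ)‖) * (‖h.eval 0‖ * R ^ T.card) := by ring
    _ ≤ _ := mul_le_mul e2 hmax (by positivity) (le_trans (Finset.prod_nonneg fun _ _ => norm_nonneg _) e2)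

lemma aux_interp (p : Polynomial ℝ) (T : Finset ℝ) (ε s : ℝ) (k : ℕ) (hs : 0 < s) (hε : 0 < ε)
    (hc : T.card = k + 1) (hT : ∀ x ∈ T, 0 ≤ x ∧ x ≤ 1)
    (hsep : ∀ x ∈ T, ∀ y ∈ T, x ≠ y → s ≤ |x - y|)
    (hp : ∀ x ∈ T, |p.eval x| ≤ ε) :
    ∃ L : Polynomial ℂ, (∀ x ∈ T, L.eval (x : ℂ) = (p.eval x : ℝ)) ∧
      ∀ z : ℂ, ‖z‖ ≤ 1 → ‖L.eval z‖ ≤ (k + 1) * ε * (2 / s) ^ k := by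
  refine ⟨Lagrange.interpolate T (fun x : ℝ => (x : ℂ)) (fun x => ((p.eval x : ℝ) : ℂ)), ?_, ?_⟩
  · intro x hx
    exact Lagrange.eval_interpolate_at_node (v := fun x : ℝ => (x : ℂ)) _
      (Complex.ofReal_injective.injOn) hx
  · intro z hz
    rw [Lagrange.interpolate_apply, Polynomial.eval_finsetSum]
    refine (norm_sum_le _ _).trans ?_
    have : ∀ x ∈ T, ‖Polynomial.eval z (Polynomial.C ((p.eval x : ℝ) : ℂ) *
        Lagrange.basis T (fun x : ℝ => (x : ℂ)) x)‖ ≤ ε * (2 / s) ^ k := by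
      intro x hx
      rw [Polynomial.eval_mul, Polynomial.eval_C, norm_mul, Complex.norm_real, Real.norm_eq_abs]
      refine mul_le_mul (hp x hx) ?_ (norm_nonneg _) hε.le
      rw [Lagrange.basis, Polynomial.eval_prod, norm_prod]
      have hk : (T.erase x).card = k := by rw [Finset.card_erase_of_mem hx, hc]; simp
      rw [← hk, ← Finset.prod_const]
      refine Finset.prod_le_prod (fun _ _ => norm_nonneg _) fun y hy => ?_
      rw [Finset.mem_erase] at hy
      rw [Lagrange.basisDivisor]
      simp only [Polynomial.eval_mul, Polynomial.eval_sub, Polynomial.eval_C, Polynomial.eval_X,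
        norm_mul, norm_inv]
      have h1 : s ≤ ‖(x : ℂ) - (y : ℂ)‖ := by
        rw [← Complex.ofReal_sub, Complex.norm_real]
        exact hsep x hx y hy.2 (Ne.symm hy.1)
      have h2 : ‖z - (y : ℂ)‖ ≤ 2 := by
        refine (norm_sub_le _ _).trans ?_
        rw [Complex.norm_real, Real.norm_eq_abs, abs_of_nonneg (hT y hy.2).1]
        linarith [(hT y hy.2).2]
      rw [div_eq_inv_mul]
      gcongr
    refine (Finset.sum_le_sum this).trans ?_
    rw [Finset.sum_const, hc, nsmul_eq_mul]
    push_cast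
    exact le_of_eq (by ring)

lemma aux_greedy (E : Set ℝ) (s : ℝ) (hs : 0 < s) (N : ℕ) :
    (∃ T : Finset ℝ, T.card = N ∧ (∀ x ∈ T, x ∈ E) ∧ ∀ x ∈ T, ∀ y ∈ T, x ≠ y → s ≤ |x - y|) ∨
      volume E ≤ ENNReal.ofReal (N * (2 * s)) := by
  induction N with
  | zero => left; exact ⟨∅, by simp⟩
  | succ N ih =>
    rcases ih with ⟨T, hc, hE, hsep⟩ | h
    · by_cases hy : ∃ y ∈ E, ∀ x ∈ T, s ≤ |x - y|
      · left
        obtain ⟨y, hyE, hy⟩ := hy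
        have hyT : y ∉ T := fun h => by have := hy y h; simp at this; linarith
        refine ⟨insert y T, by rw [Finset.card_insert_of_notMem hyT, hc], ?_, ?_⟩
        · intro x hx
          rcases Finset.mem_insert.1 hx with rfl | hx
          · exact hyE
          · exact hE x hx
        · intro x hx z hz hxz
          rcases Finset.mem_insert.1 hx with hx1 | hx1 <;>
            rcases Finset.mem_insert.1 hz with hz1 | hz1
          · exact absurd (hx1.trans hz1.symm) hxz
          · rw [abs_sub_comm, hx1]; exact hy z hz1
          · rw [hz1]; exact hy x hx1
          · exact hsep x hx1 z hz1 hxz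
      · right
        push Not at hy
        have hsub : E ⊆ ⋃ x ∈ T, Metric.ball x s := by
          intro y hyE
          obtain ⟨x, hx, hxy⟩ := hy y hyE
          simp only [Set.mem_iUnion]
          exact ⟨x, hx, by rw [Metric.mem_ball, dist_comm, Real.dist_eq]; exact hxy⟩
        refine (measure_mono hsub).trans ((measure_biUnion_finset_le _ _).trans ?_)
        simp only [Real.volume_ball, Finset.sum_const, hc, nsmul_eq_mul]
        rw [← ENNReal.ofReal_natCast, ← ENNReal.ofReal_mul (by positivity)]
        refine ENNReal.ofReal_le_ofReal ?_
        push_cast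
        gcongr
        linarith
    · right
      refine h.trans (ENNReal.ofReal_le_ofReal ?_)
      push_cast
      gcongr
      linarith

lemma aux_bound (α : ℝ) (hα : 0 < α) (p : Polynomial ℝ) (h0 : p.coeff 0 = 1)
    (hp : ∀ i : ℕ, 1 ≤ i → |p.coeff i| ≤ α) (R : ℝ) (hR : 0 < R) (hR1 : R < 1) (z : ℂ)
    (hz : ‖z‖ = R) : ‖(p.map Complex.ofRealHom).eval z‖ ≤ (1 + α) * (1 - R)⁻¹ := by
  rw [Polynomial.eval_eq_sum_range]
  refine (norm_sum_le _ _).trans ?_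
  have hc : ∀ i, |p.coeff i| ≤ 1 + α := by
    intro i
    rcases Nat.eq_zero_or_pos i with rfl | hi
    · rw [h0, abs_one]; linarith
    · linarith [hp i hi]
  have h1 : ∀ i ∈ Finset.range ((p.map Complex.ofRealHom).natDegree + 1),
      ‖(p.map Complex.ofRealHom).coeff i * z ^ i‖ ≤ (1 + α) * R ^ i := by
    intro i _
    rw [Polynomial.coeff_map, norm_mul, norm_pow, hz]
    gcongr
    have := hc i
    simpa using this
  refine (Finset.sum_le_sum h1).trans ?_
  rw [← Finset.mul_sum]
  gcongr
  rw [← tsum_geometric_of_lt_one hR.le hR1]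
  exact (summable_geometric_of_lt_one hR.le hR1).sum_le_tsum _ (fun i _ => by positivity)

lemma aux_main (α : ℝ) (hα : 0 < α) (a b : ℝ)
    (ha : 0 ≤ a) (hab : a < b) (hb : b < 1) :
    ∃ k : ℕ, 1 ≤ k ∧ ∃ K : ℝ, 0 < K ∧ ∀ ε : ℝ, 0 < ε → ∀ p : Polynomial ℝ,
        p.coeff 0 = 1 → (∀ i : ℕ, 1 ≤ i → |p.coeff i| ≤ α) →
        volume {x ∈ Set.Icc a b | |Polynomial.eval x p| < ε} ≤
          ENNReal.ofReal (K * ε ^ ((k : ℝ)⁻¹)) := by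
  have hb0 : 0 < b := by linarith
  obtain ⟨R, hbR, hR1⟩ := exists_between hb
  have hR : 0 < R := by linarith
  set M : ℝ := (1 + α) * (1 - R)⁻¹ with hM
  have hM0 : 0 < M := by
    have : 0 < 1 - R := by linarith
    positivity
  have hq1 : b / R < 1 := (div_lt_one hR).2 hbR
  have hq0 : 0 < b / R := by positivity
  obtain ⟨n, hn⟩ := exists_pow_lt_of_lt_one (show 0 < 1 / (2 * M) by positivity) hq1
  have hk : (b / R) ^ (n + 1 + 1) * M ≤ 1 / 2 := by
    have : (b / R) ^ (n + 1 + 1) ≤ (b / R) ^ n := pow_le_pow_of_le_one hq0.le hq1.le (by omega)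
    calc _ ≤ 1 / (2 * M) * M := by gcongr; linarith
      _ = 1 / 2 := by field_simp
  set k := n + 1 with hkdef
  set A : ℝ := (k + 1) * 2 ^ k * 8 with hA
  have hA0 : 0 < A := by positivity
  refine ⟨k, by omega, ((k + 1 : ℕ) : ℝ) * 2 * A ^ ((k : ℝ)⁻¹), by positivity, ?_⟩
  intro ε hε p h0 hp
  set s : ℝ := A ^ ((k : ℝ)⁻¹) * ε ^ ((k : ℝ)⁻¹) with hsdef
  have hs : 0 < s := by positivity
  have hsk : s ^ k = A * ε := by
    rw [hsdef, mul_pow, Real.rpow_inv_natCast_pow hA0.le (by omega),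
      Real.rpow_inv_natCast_pow hε.le (by omega)]
  rcases aux_greedy {x ∈ Set.Icc a b | |Polynomial.eval x p| < ε} s hs (k + 1) with
    ⟨T, hc, hE, hsep⟩ | h
  · exfalso
    obtain ⟨L, hL, hLb⟩ := aux_interp p T ε s k hs hε hc
      (fun x hx => ⟨ha.trans (hE x hx).1.1, (hE x hx).1.2.trans hb.le⟩) hsep
      (fun x hx => (hE x hx).2.le)
    have hΛ : (k + 1) * ε * (2 / s) ^ k = 1 / 8 := by
      rw [div_pow, hsk, hA]
      field_simp
    rw [hΛ] at hLb
    have hS := aux_schwarz (p.map Complex.ofRealHom - L) T b R (M + 1 / 8) hR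
      (fun x hx => ⟨ha.trans (hE x hx).1.1, (hE x hx).1.2⟩)
      (fun x hx => by
        rw [Polynomial.eval_sub, hL x hx, sub_eq_zero]
        exact Polynomial.eval_map_apply (f := Complex.ofRealHom) (p := p) x)
      (fun z hz => by
        rw [Polynomial.eval_sub]
        exact (norm_sub_le _ _).trans (add_le_add (aux_bound α hα p h0 hp R hR hR1 z hz)
          (hLb z (by rw [hz]; exact hR1.le))))
    rw [hc, Polynomial.eval_sub] at hS
    have e0 : (p.map Complex.ofRealHom).eval 0 = 1 := by
      rw [← Polynomial.coeff_zero_eq_eval_zero, Polynomial.coeff_map, h0]; simp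
    rw [e0] at hS
    have hS2 : ‖1 - L.eval 0‖ ≤ (b / R) ^ (k + 1) * (M + 1 / 8) := by
      rw [div_pow, div_mul_eq_mul_div, le_div_iff₀ (by positivity)]
      exact hS
    have h3 : (1 : ℝ) ≤ ‖1 - L.eval 0‖ + ‖L.eval 0‖ := by
      have := norm_add_le (1 - L.eval 0) (L.eval 0)
      simpa using this
    have h4 := hLb 0 (by simp)
    have h5 : (b / R) ^ (k + 1) ≤ 1 := pow_le_one₀ hq0.le hq1.le
    nlinarith
  · refine h.trans (le_of_eq ?_)
    rw [hsdef]
    congr 1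
    ring

lemma aux_rAlpha (α : ℝ) (k : ℕ) : 0 ≤ rAlpha α k ∧ rAlpha α k < 1 := by
  constructor
  · exact Real.sInf_nonneg fun x hx => hx.1.le
  · unfold rAlpha
    rcases Set.eq_empty_or_nonempty {x : ℝ | 0 < x ∧ x < 1 ∧
      ∃ a : ℕ → ℝ, memF α a ∧ ∀ j : ℕ, j ≤ k → iteratedDeriv j (Fsum a) x = 0} with h | ⟨x, hx⟩
    · rw [h, Real.sInf_empty]; norm_num
    · exact (csInf_le ⟨0, fun y hy => hy.1.le⟩ hx).trans_lt hx.2.1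

/-- For every interval `I = [a,b]` with `0 ≤ a < b < 1` there are `k ≥ 1` and
`δ ∈ (0,1)` such that for every `0 < ε < δ` and every polynomial
`p ∈ ⋃_{n≥0} F_α⁽ⁿ⁾` (constant coefficient `1`, all other coefficients in `[-α,α]`),
`Leb {x ∈ I : |p(x)| < ε} ≤ C ε^(1/k)` where
`C = 2^(3k+5) (1+α)^(2k) deg(p)^(2(k+1)) / (δ² (1 - r_α(k)))`. -/
theorem polynomial_small_value_estimate (α : ℝ) (hα : 0 < α) (a b : ℝ)
    (ha : 0 ≤ a) (hab : a < b) (hb : b < 1) :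
    ∃ k : ℕ, 1 ≤ k ∧ ∃ δ : ℝ, δ ∈ Set.Ioo (0 : ℝ) 1 ∧
      ∀ ε : ℝ, 0 < ε → ε < δ → ∀ p : Polynomial ℝ,
        p.coeff 0 = 1 → (∀ i : ℕ, 1 ≤ i → |p.coeff i| ≤ α) →
        volume {x ∈ Set.Icc a b | |Polynomial.eval x p| < ε} ≤
          ENNReal.ofReal
            ((2 ^ (3 * k + 5) * (1 + α) ^ (2 * k) * (p.natDegree : ℝ) ^ (2 * (k + 1)) /
                (δ ^ 2 * (1 - rAlpha α k))) * ε ^ ((k : ℝ)⁻¹)) := by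
  obtain ⟨k, hk, K, hK, H⟩ := aux_main α hα a b ha hab hb
  obtain ⟨hr0, hr1⟩ := aux_rAlpha α k
  have hδ0 : 0 < 1 / (K + 2) := by positivity
  have hδ1 : 1 / (K + 2) < 1 := by rw [div_lt_one (by positivity)]; linarith
  refine ⟨k, hk, 1 / (K + 2), ⟨hδ0, hδ1⟩, ?_⟩
  intro ε hε hεδ p h0 hp
  rcases Nat.eq_zero_or_pos p.natDegree with hd | hd
  · have hpc : p = Polynomial.C 1 := by rw [Polynomial.eq_C_of_natDegree_eq_zero hd, h0]
    have : {x ∈ Set.Icc a b | |Polynomial.eval x p| < ε} = ∅ := by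
      ext x
      simp only [hpc, Polynomial.eval_C, abs_one, Set.mem_ofPred_eq, Set.mem_empty_iff_false,
        iff_false, not_and, not_lt]
      intro _
      linarith
    rw [this]
    simp
  · refine (H ε hε p h0 hp).trans (ENNReal.ofReal_le_ofReal ?_)
    have hd1 : (1 : ℝ) ≤ p.natDegree := by exact_mod_cast hd
    gcongr
    have hr : 0 < 1 - rAlpha α k := by linarith
    rw [le_div_iff₀ (by positivity)]
    have e1 : (1 : ℝ) ≤ 2 ^ (3 * k + 5) := one_le_pow₀ (by norm_num)
    have e2 : (1 : ℝ) ≤ (1 + α) ^ (2 * k) := one_le_pow₀ (by linarith)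
    have e3 : (1 : ℝ) ≤ (p.natDegree : ℝ) ^ (2 * (k + 1)) := one_le_pow₀ hd1
    have e4 : (1 : ℝ) ≤ 2 ^ (3 * k + 5) * (1 + α) ^ (2 * k) * (p.natDegree : ℝ) ^ (2 * (k + 1)) :=
      one_le_mul_of_one_le_of_one_le (one_le_mul_of_one_le_of_one_le e1 e2) e3
    refine le_trans ?_ e4
    have e5 : K * (1 / (K + 2)) ≤ 1 := by
      rw [mul_one_div, div_le_one (by positivity)]; linarith
    calc K * ((1 / (K + 2)) ^ 2 * (1 - rAlpha α k))
        = (K * (1 / (K + 2))) * ((1 / (K + 2)) * (1 - rAlpha α k)) := by ring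
      _ ≤ 1 * (1 * 1) := by
        gcongr
        linarith
      _ = 1 := by norm_num
end
end
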